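/- arXiv:2402.15574 — 2 statements merged into one kernel-verified Lean document; each statement's English description precedes it below -/
import Mathlib

section
/- Let H be a complex Hilbert space, G a selfadjoint unitary on H with infinite-dimensional eigenspace H_odd for the eigenvalue −1, γ_G the Bogoliubov automorphism of CAR(H) with γ_G(a(φ)) = a(Gφ), and μ₀ the unique tracial state on CAR(H). Then the only γ_G-twisted tracial functional τ on CAR(H) (i.e. τ(xy) = τ(y γ_G(x)) for all x, y) that is dominated by μ₀ (i.e. |τ(a*b)|² ≤ μ₀(a*a)μ₀(b*b) for all a, b) is τ = 0. Consequently the trace μ₀ has a unique tracial extension to the crossed product CAR(H) ⋊_{γ_G} ℤ₂, namely μ₀ ∘ E with E the canonical conditional expectation. -/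
open scoped InnerProductSpace ComplexOrder

noncomputable section

/-- A strongly continuous one-parameter group of *-automorphisms of a unital C*-algebra. -/
structure Dynamics (A : Type*) [CStarAlgebra A] where
  α : ℝ → A ≃⋆ₐ[ℂ] A
  α_zero : ∀ a, α 0 a = a
  α_add : ∀ s t a, α (s + t) a = α s (α t a)
  α_cont : ∀ a, Continuous fun t => α t a

variable {A : Type*} [CStarAlgebra A]

/-- `f` is the entire analytic extension of `t ↦ α_t a`; an element admitting such an
extension is an entire analytic element for the dynamics. -/
def Dynamics.IsAnalyticExt (d : Dynamics A) (a : A) (f : ℂ → A) : Prop :=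
  Differentiable ℂ f ∧ ∀ t : ℝ, f (t : ℂ) = d.α t a

/-- A state: positive normalized linear functional. -/
def IsState (ω : A → ℂ) : Prop :=
  IsLinearMap ℂ ω ∧ (∀ a : A, 0 ≤ ω (star a * a)) ∧ ω 1 = 1

/-- The `(α, β)`-KMS condition: `ω (a * α_{iβ}(b)) = ω (b * a)` for entire analytic `a, b`. -/
def Dynamics.IsKMS (d : Dynamics A) (β : ℝ) (ω : A → ℂ) : Prop :=
  IsState ω ∧ ∀ a b : A, ∀ fa fb : ℂ → A, d.IsAnalyticExt a fa → d.IsAnalyticExt b fb →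
    ω (a * fb (Complex.I * β)) = ω (b * a)

/-- A graded C*-dynamical system: dynamics plus a commuting involutive grading. -/
structure GradedDyn (A : Type*) [CStarAlgebra A] extends Dynamics A where
  γ : A ≃⋆ₐ[ℂ] A
  γ_invol : ∀ a, γ (γ a) = a
  γ_comm : ∀ t a, γ (α t a) = α t (γ a)

/-- The `γ`-twisted `(α, β)`-KMS condition: `ρ (a * α_{iβ}(b)) = ρ (b * γ a)`. -/
def Dynamics.IsTwistedKMS (d : Dynamics A) (γ : A ≃⋆ₐ[ℂ] A) (β : ℝ) (ρ : A → ℂ) : Prop :=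
  IsLinearMap ℂ ρ ∧ ∀ a b : A, ∀ fa fb : ℂ → A, d.IsAnalyticExt a fa → d.IsAnalyticExt b fb →
    ρ (a * fb (Complex.I * β)) = ρ (b * γ a)

/-- Hermitian functional: `ρ(a*) = conj (ρ a)`. -/
def IsHermitian (ρ : A → ℂ) : Prop := ∀ a, ρ (star a) = starRingEnd ℂ (ρ a)

/-- `ρ` is dominated by `ω`: `|ρ(a* b)|² ≤ ω(a* a) ω(b* b)`. -/
def Dominated (ω ρ : A → ℂ) : Prop :=
  ∀ a b : A, (‖ρ (star a * b)‖ : ℂ) ^ 2 ≤ ω (star a * a) * ω (star b * b)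

/-- The set `F_β(A, α, γ, ω)`: hermitian `γ`-twisted `(α,β)`-KMS functionals dominated by `ω`. -/
def TwistedKMSDom (d : Dynamics A) (γ : A ≃⋆ₐ[ℂ] A) (β : ℝ) (ω ρ : A → ℂ) : Prop :=
  d.IsTwistedKMS γ β ρ ∧ IsHermitian ρ ∧ Dominated ω ρ

/-- Product of the `ℤ₂`-crossed product `A ⋊_γ ℤ₂` realized on `A ⊕ A`. -/
def cpMul (γ : A ≃⋆ₐ[ℂ] A) (p q : A × A) : A × A :=
  (p.1 * q.1 + p.2 * γ q.2, p.1 * q.2 + p.2 * γ q.1)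

/-- Involution of the crossed product. -/
def cpStar (γ : A ≃⋆ₐ[ℂ] A) (p : A × A) : A × A := (star p.1, γ (star p.2))

/-- Unit of the crossed product. -/
def cpOne : A × A := (1, 0)

/-- A state on the crossed product. -/
def cpIsState (γ : A ≃⋆ₐ[ℂ] A) (W : A × A → ℂ) : Prop :=
  IsLinearMap ℂ W ∧ (∀ p : A × A, 0 ≤ W (cpMul γ (cpStar γ p) p)) ∧ W (cpOne : A × A) = 1

/-- Entire analytic extension for the componentwise extended dynamics `𝛂` on `A ⊕ A`. -/
def cpIsAnalyticExt (d : Dynamics A) (p : A × A) (f : ℂ → A × A) : Prop :=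
  Differentiable ℂ f ∧ ∀ t : ℝ, f (t : ℂ) = (d.α t p.1, d.α t p.2)

/-- `(𝛂, β)`-KMS states of the crossed product `A ⋊_γ ℤ₂`. -/
def cpIsKMS (d : Dynamics A) (γ : A ≃⋆ₐ[ℂ] A) (β : ℝ) (W : A × A → ℂ) : Prop :=
  cpIsState γ W ∧ ∀ p q : A × A, ∀ fp fq : ℂ → A × A,
    cpIsAnalyticExt d p fp → cpIsAnalyticExt d q fq →
    W (cpMul γ p (fq (Complex.I * β))) = W (cpMul γ q p)


/-- A realization of the CAR algebra `CAR(H)` over a complex Hilbert space `H`: a unital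
C*-algebra `A` generated by elements `c φ = a(φ)` (antilinear in `φ`) satisfying the
canonical anticommutation relations. -/
structure CARrep (H A : Type*) [NormedAddCommGroup H] [InnerProductSpace ℂ H]
    [CStarAlgebra A] where
  c : H → A
  c_add : ∀ φ ψ, c (φ + ψ) = c φ + c ψ
  c_smul : ∀ (z : ℂ) (φ), c (z • φ) = starRingEnd ℂ z • c φ
  car₁ : ∀ φ ψ, star (c φ) * c ψ + c ψ * star (c φ) = ⟪ψ, φ⟫_ℂ • (1 : A)
  car₂ : ∀ φ ψ, c φ * c ψ + c ψ * c φ = 0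
  gen : Dense
    ((Algebra.adjoin ℂ (Set.range c ∪ Set.range fun φ => star (c φ)) : Subalgebra ℂ A) : Set A)

namespace CARrep

variable {H A : Type*} [NormedAddCommGroup H] [InnerProductSpace ℂ H] [CStarAlgebra A]

/-- The field operators `Φ(ξ) = a*(ξ) + a(ξ)`. -/
def Φ (r : CARrep H A) (ξ : H) : A := star (r.c ξ) + r.c ξ

/-- Product of field operators `Φ(ξ₁) ⋯ Φ(ξ_n)` along a list. -/
def fieldProd (r : CARrep H A) (L : List H) : A := (L.map r.Φ).prod

end CARrep

/-- The two-point function `Re⟪ξ, η⟫ + i Re⟪ξ, T η⟫` determined by an operator `T`. -/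
def twoPt {H : Type*} [NormedAddCommGroup H] [InnerProductSpace ℂ H]
    (T : H →L[ℂ] H) (ξ η : H) : ℂ :=
  ((⟪ξ, η⟫_ℂ).re : ℂ) + Complex.I * ((⟪ξ, T η⟫_ℂ).re : ℂ)

/-- The quasifree `n`-point values determined by the two-point function of `T`: the sum
over pairings with parity signs, computed via the equivalent Wick recursion
`μ(Φ_{ξ} Φ_{L₀} ⋯ ) = Σ_j (−1)^j μ(Φ_ξ Φ_{L_j}) μ(Φ_{L_0} ⋯ ĵ ⋯)`. -/
def qfVal {H : Type*} [NormedAddCommGroup H] [InnerProductSpace ℂ H]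
    (T : H →L[ℂ] H) : List H → ℂ
  | [] => 1
  | ξ :: L => ∑ j ∈ Finset.range L.length,
      (-1 : ℂ) ^ j * twoPt T ξ (L.getD j 0) * qfVal T (L.eraseIdx j)
  termination_by L => L.length
  decreasing_by
    simp only [List.length_cons]
    exact Nat.lt_succ_of_le (List.length_eraseIdx_le ..)

/-- `μ` is the quasifree functional with covariance operator `T` (on the *-algebra
generated by the fields): its values on products of fields are the quasifree values of
`T`; in particular `μ(1) = 1` and all odd-point functions vanish. -/
def CARrep.IsQuasifreeWith {H A : Type*} [NormedAddCommGroup H]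
    [InnerProductSpace ℂ H] [CStarAlgebra A] (r : CARrep H A) (T : H →L[ℂ] H)
    (μ : A → ℂ) : Prop :=
  ∀ L : List H, μ (r.fieldProd L) = qfVal T L

section Helpers

variable {H A : Type*} [NormedAddCommGroup H] [InnerProductSpace ℂ H] [CStarAlgebra A]

/-- The even unitary `1 - 2 a*(e) a(e)` implements the reflection in the unit vector `e`. -/
lemma reflection_implementer (r : CARrep H A) (e : H) (he : ⟪e, e⟫_ℂ = 1) :
    ∃ n : A, star n = n ∧ n * n = 1 ∧
      (∀ ξ, n * r.c ξ = r.c (ξ - (2 * ⟪e, ξ⟫_ℂ) • e) * n) ∧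
      n = 1 - (2 : ℂ) • (star (r.c e) * r.c e) := by
  have h1 := r.car₁ e e
  rw [he, one_smul] at h1
  have h2 : r.c e * r.c e = 0 := by
    have := r.car₂ e e
    rw [← two_smul ℂ] at this
    simpa using this
  have h1' : r.c e * star (r.c e) = 1 - star (r.c e) * r.c e := eq_sub_of_add_eq' h1
  have h3 : r.c e * (star (r.c e) * r.c e) = r.c e := by
    rw [← mul_assoc, h1', sub_mul, mul_assoc, h2]; simp
  refine ⟨1 - (2 : ℂ) • (star (r.c e) * r.c e), by simp [star_smul], ?_, ?_, rfl⟩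
  · have h4 : (star (r.c e) * r.c e) * (star (r.c e) * r.c e) = star (r.c e) * r.c e := by
      rw [mul_assoc, h3]
    simp only [sub_mul, mul_sub, one_mul, mul_one, smul_mul_assoc, mul_smul_comm, h4]
    module
  · intro ξ
    have h5 : r.c (ξ - (2 * ⟪e, ξ⟫_ℂ) • e) = r.c ξ - (2 * ⟪ξ, e⟫_ℂ) • r.c e := by
      rw [sub_eq_add_neg, ← neg_smul, r.c_add, r.c_smul]
      have hconj : (starRingEnd ℂ) (2 : ℂ) = 2 := Complex.conj_ofNat 2
      simp [sub_eq_add_neg, hconj]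
    have h6 : star (r.c e) * r.c ξ = ⟪ξ, e⟫_ℂ • (1 : A) - r.c ξ * star (r.c e) :=
      eq_sub_of_add_eq (r.car₁ e ξ)
    have h7 : r.c e * r.c ξ = - (r.c ξ * r.c e) := eq_neg_of_add_eq_zero_left (r.car₂ e ξ)
    have h8 : star (r.c e) * r.c e * r.c ξ
        = r.c ξ * (star (r.c e) * r.c e) - ⟪ξ, e⟫_ℂ • r.c e := by
      rw [mul_assoc, h7, mul_neg, ← mul_assoc, h6, sub_mul, smul_mul_assoc, one_mul, mul_assoc]
      abel
    rw [h5]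
    simp only [sub_mul, mul_sub, one_mul, mul_one, smul_mul_assoc, mul_smul_comm, h8, h3]
    module

/-- A unitary implementing `1 - 2P`, `P` the projection on the span of a finite orthonormal
family of `G`-even vectors. -/
lemma parity_implementer (r : CARrep H A) (G : H →L[ℂ] H) (γ : A ≃⋆ₐ[ℂ] A)
    (hγ : ∀ φ, γ (r.c φ) = r.c (G φ)) {ι : Type*} (v : ι → H) (hv : Orthonormal ℂ v)
    (hG : ∀ i, G (v i) = v i) (s : Finset ι) :
    ∃ N : A, star N * N = 1 ∧ N * star N = 1 ∧ γ N = N ∧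
      ∀ ξ, N * r.c ξ = r.c (ξ - ∑ i ∈ s, (2 * ⟪v i, ξ⟫_ℂ) • v i) * N := by
  classical
  induction s using Finset.induction_on with
  | empty => exact ⟨1, by simp, by simp, by simp, by simp⟩
  | insert i s hi ih =>
    obtain ⟨N, hN1, hN2, hN3, hN4⟩ := ih
    have he : ⟪v i, v i⟫_ℂ = 1 := by
      have := orthonormal_iff_ite.mp hv i i
      simpa using this
    obtain ⟨n, hn1, hn2, hn3, hn4⟩ := reflection_implementer r (v i) he
    have hγn : γ n = n := by
      rw [hn4, map_sub, map_one, map_smul, map_mul, map_star, hγ, hG]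
    refine ⟨n * N, ?_, ?_, ?_, ?_⟩
    · rw [star_mul, hn1, mul_assoc, ← mul_assoc n, hn2, one_mul, hN1]
    · rw [star_mul, hn1, mul_assoc, ← mul_assoc N, hN2, one_mul, hn2]
    · rw [map_mul, hγn, hN3]
    · intro ξ
      rw [mul_assoc, hN4, ← mul_assoc, hn3, mul_assoc, Finset.sum_insert hi]
      congr 2
      have : ⟪v i, ξ - ∑ j ∈ s, (2 * ⟪v j, ξ⟫_ℂ) • v j⟫_ℂ = ⟪v i, ξ⟫_ℂ := by
        rw [inner_sub_right, inner_sum, Finset.sum_eq_zero, sub_zero]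
        intro j hj
        have hij : i ≠ j := fun h => hi (h ▸ hj)
        rw [inner_smul_right, hv.2 hij, mul_zero]
      rw [this]; abel

/-- Homogeneity data of a monomial in creators/annihilators of even or odd vectors. -/
def MonoData (r : CARrep H A) (G : H →L[ℂ] H) (γ : A ≃⋆ₐ[ℂ] A) (x : A) : Prop :=
  ∃ (F : Finset H) (m k : ℕ), γ x = (-1 : ℂ) ^ m • x ∧
    (∀ N : A, (∀ φ ∈ F, G φ = φ →
        N * r.c φ = - (r.c φ * N) ∧ N * star (r.c φ) = - (star (r.c φ) * N)) →
      (∀ φ ∈ F, G φ = -φ →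
        N * r.c φ = r.c φ * N ∧ N * star (r.c φ) = star (r.c φ) * N) →
      N * x = (-1 : ℂ) ^ k • (x * N)) ∧
    (∀ ξ : H, (∀ φ ∈ F, ⟪φ, ξ⟫_ℂ = 0) → r.Φ ξ * x = (-1 : ℂ) ^ (m + k) • (x * r.Φ ξ))

/-- Generators attached to `G`-homogeneous vectors. -/
def homGen (r : CARrep H A) (G : H →L[ℂ] H) : Set A :=
  {x | ∃ φ, (G φ = φ ∨ G φ = -φ) ∧ (x = r.c φ ∨ x = star (r.c φ))}

lemma c_neg' (r : CARrep H A) (φ : H) : r.c (-φ) = - r.c φ := by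
  have := r.c_smul (-1) φ
  simpa using this

lemma field_anticomm (r : CARrep H A) (φ ξ : H) (h : ⟪φ, ξ⟫_ℂ = 0) :
    r.Φ ξ * r.c φ = - (r.c φ * r.Φ ξ) ∧ r.Φ ξ * star (r.c φ) = - (star (r.c φ) * r.Φ ξ) := by
  have h1 := r.car₁ ξ φ
  rw [h, zero_smul] at h1
  have h2 := r.car₂ ξ φ
  have key : r.Φ ξ * r.c φ = - (r.c φ * r.Φ ξ) := by
    apply eq_neg_of_add_eq_zero_left
    have : r.Φ ξ * r.c φ + r.c φ * r.Φ ξ = (star (r.c ξ) * r.c φ + r.c φ * star (r.c ξ))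
        + (r.c ξ * r.c φ + r.c φ * r.c ξ) := by
      simp only [CARrep.Φ]; noncomm_ring
    rw [this, h1, h2, add_zero]
  refine ⟨key, ?_⟩
  have hs : star (r.Φ ξ) = r.Φ ξ := by simp [CARrep.Φ, add_comm]
  have := congrArg star key
  rw [star_mul, star_neg, star_mul, hs] at this
  rw [this, neg_neg]

lemma monoData_of_gen (r : CARrep H A) (G : H →L[ℂ] H) (γ : A ≃⋆ₐ[ℂ] A)
    (hγ : ∀ φ, γ (r.c φ) = r.c (G φ)) (x : A) (hx : x ∈ homGen r G) : MonoData r G γ x := by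
  obtain ⟨φ, hφ, hx⟩ := hx
  rcases hφ with hφ | hφ
  · refine ⟨{φ}, 0, 1, ?_, ?_, ?_⟩
    · rcases hx with rfl | rfl <;> simp [hγ, hφ, map_star]
    · intro N h1 _
      have := h1 φ (by simp) hφ
      rcases hx with rfl | rfl
      · simp [this.1]
      · simp [this.2]
    · intro ξ h
      have := field_anticomm r φ ξ (h φ (by simp))
      rcases hx with rfl | rfl
      · simp [this.1]
      · simp [this.2]
  · refine ⟨{φ}, 1, 0, ?_, ?_, ?_⟩
    · rcases hx with rfl | rfl <;> simp [hγ, hφ, map_star, c_neg']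
    · intro N _ h1
      have := h1 φ (by simp) hφ
      rcases hx with rfl | rfl
      · simp [this.1]
      · simp [this.2]
    · intro ξ h
      have := field_anticomm r φ ξ (h φ (by simp))
      rcases hx with rfl | rfl
      · simp [this.1]
      · simp [this.2]

lemma monoData_closure (r : CARrep H A) (G : H →L[ℂ] H) (γ : A ≃⋆ₐ[ℂ] A)
    (hγ : ∀ φ, γ (r.c φ) = r.c (G φ)) (x : A) (hx : x ∈ Submonoid.closure (homGen r G)) :
    MonoData r G γ x := by
  classical
  induction hx using Submonoid.closure_induction with
  | mem x hx => exact monoData_of_gen r G γ hγ x hx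
  | one => exact ⟨∅, 0, 0, by simp, by simp, by simp⟩
  | mul x y _ _ ihx ihy =>
    obtain ⟨F, m, k, h1, h2, h3⟩ := ihx
    obtain ⟨F', m', k', h1', h2', h3'⟩ := ihy
    have aux : ∀ (N : A) (a b : ℕ), N * x = (-1 : ℂ) ^ a • (x * N) →
        N * y = (-1 : ℂ) ^ b • (y * N) → N * (x * y) = (-1 : ℂ) ^ (a + b) • (x * y * N) := by
      intro N a b ha hb
      rw [← mul_assoc, ha, smul_mul_assoc, mul_assoc, hb, mul_smul_comm, smul_smul, pow_add,
        mul_assoc]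
    refine ⟨F ∪ F', m + m', k + k', ?_, ?_, ?_⟩
    · rw [map_mul, h1, h1', smul_mul_smul_comm, pow_add]
    · intro N ha hb
      apply aux
      · exact h2 N (fun φ hφ => ha φ (Finset.mem_union_left _ hφ))
          (fun φ hφ => hb φ (Finset.mem_union_left _ hφ))
      · exact h2' N (fun φ hφ => ha φ (Finset.mem_union_right _ hφ))
          (fun φ hφ => hb φ (Finset.mem_union_right _ hφ))
    · intro ξ h
      have := aux (r.Φ ξ) (m + k) (m' + k')
        (h3 ξ (fun φ hφ => h φ (Finset.mem_union_left _ hφ)))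
        (h3' ξ (fun φ hφ => h φ (Finset.mem_union_right _ hφ)))
      rw [this]; congr 2; ring

lemma adjoin_le_hom (r : CARrep H A) (G : H →L[ℂ] H) (hG_un : ∀ φ, G (G φ) = φ) :
    Algebra.adjoin ℂ (Set.range r.c ∪ Set.range fun φ => star (r.c φ))
      ≤ Algebra.adjoin ℂ (homGen r G) := by
  have dec : ∀ φ : H, ∃ a b : H, φ = a + b ∧ G a = a ∧ G b = -b := by
    intro φ
    refine ⟨(1/2 : ℂ) • (φ + G φ), (1/2 : ℂ) • (φ - G φ), by module, ?_, ?_⟩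
    · rw [map_smul, map_add, hG_un, add_comm]
    · rw [map_smul, map_sub, hG_un]; module
  apply Algebra.adjoin_le
  rintro x (⟨φ, rfl⟩ | ⟨φ, rfl⟩)
  · obtain ⟨a, b, rfl, ha, hb⟩ := dec φ
    rw [r.c_add]
    exact add_mem (Algebra.subset_adjoin ⟨a, Or.inl ha, Or.inl rfl⟩)
      (Algebra.subset_adjoin ⟨b, Or.inr hb, Or.inl rfl⟩)
  · obtain ⟨a, b, rfl, ha, hb⟩ := dec φ
    simp only [r.c_add, star_add]
    exact add_mem (Algebra.subset_adjoin ⟨a, Or.inl ha, Or.inr rfl⟩)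
      (Algebra.subset_adjoin ⟨b, Or.inr hb, Or.inr rfl⟩)

/-- There is a unit odd vector orthogonal to a given finite set. -/
lemma exists_odd_orthogonal (G : H →L[ℂ] H)
    (hodd : ¬ FiniteDimensional ℂ (LinearMap.ker ((G + 1 : H →L[ℂ] H) : H →ₗ[ℂ] H)))
    (F : Finset H) : ∃ ξ : H, G ξ = -ξ ∧ ⟪ξ, ξ⟫_ℂ = 1 ∧ ∀ φ ∈ F, ⟪φ, ξ⟫_ℂ = 0 := by
  by_contra hcon
  apply hodd
  let T : LinearMap.ker ((G + 1 : H →L[ℂ] H) : H →ₗ[ℂ] H) →ₗ[ℂ] (F → ℂ) :=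
    (LinearMap.pi fun φ : F => ((innerSL ℂ (φ : H)) : H →ₗ[ℂ] ℂ)).comp (Submodule.subtype _)
  have hT : Function.Injective T := by
    rw [← LinearMap.ker_eq_bot, LinearMap.ker_eq_bot']
    rintro ⟨ξ, hξ⟩ h0
    by_contra hne
    have hξ0 : ξ ≠ 0 := fun h => hne (Subtype.ext h)
    have hGξ : G ξ = -ξ := by
      have : G ξ + ξ = 0 := by simpa using hξ
      exact eq_neg_of_add_eq_zero_left this
    apply hcon
    refine ⟨((‖ξ‖ : ℂ)⁻¹) • ξ, by rw [map_smul, hGξ, smul_neg], ?_, ?_⟩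
    · have : (‖ξ‖ : ℂ) ≠ 0 := by simpa using hξ0
      rw [inner_smul_left, inner_smul_right, inner_self_eq_norm_sq_to_K]
      simp only [map_inv₀, Complex.conj_ofReal, Complex.coe_algebraMap]
      field_simp
    · intro φ hφ
      have := congrFun h0 ⟨φ, hφ⟩
      have h' : ⟪φ, ξ⟫_ℂ = 0 := this
      rw [inner_smul_right, h', mul_zero]
  exact FiniteDimensional.of_injective T hT

/-- Twisted traces vanish on monomials. -/
lemma twisted_mono_zero (r : CARrep H A)
    (G : H →L[ℂ] H) (hGs : ∀ x y, ⟪G x, y⟫_ℂ = ⟪x, G y⟫_ℂ)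
    (hodd : ¬ FiniteDimensional ℂ (LinearMap.ker ((G + 1 : H →L[ℂ] H) : H →ₗ[ℂ] H)))
    (γ : A ≃⋆ₐ[ℂ] A) (hγ : ∀ φ, γ (r.c φ) = r.c (G φ))
    (τ : A →ₗ[ℂ] ℂ) (htw : ∀ x y : A, τ (x * y) = τ (y * γ x)) (x : A)
    (hx : MonoData r G γ x) : τ x = 0 := by
  classical
  obtain ⟨F, m, k, h1, h2, h3⟩ := hx
  have self_neg : ∀ z : ℂ, z = -z → z = 0 := fun z hz => by
    linear_combination (1/2) * hz
  rcases Nat.even_or_odd m with hm | hm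
  swap
  · apply self_neg
    have := htw x 1
    rw [mul_one, one_mul, h1, hm.neg_one_pow] at this
    simpa using this
  rcases Nat.even_or_odd k with hk | hk
  · obtain ⟨ξ, hξ, hξ1, hξF⟩ := exists_odd_orthogonal G hodd F
    have h := h3 ξ hξF
    rw [(hm.add hk).neg_one_pow, one_smul] at h
    have hsq : r.Φ ξ * r.Φ ξ = 1 := by
      have e1 := r.car₁ ξ ξ
      rw [hξ1, one_smul] at e1
      have e2 : r.c ξ * r.c ξ = 0 := by
        have := r.car₂ ξ ξ
        rw [← two_smul ℂ] at this
        simpa using this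
      have e3 : star (r.c ξ) * star (r.c ξ) = 0 := by rw [← star_mul, e2, star_zero]
      rw [CARrep.Φ, add_mul, mul_add, mul_add, e2, e3, zero_add, add_zero, e1]
    have hγΦ : γ (r.Φ ξ) = - r.Φ ξ := by
      simp only [CARrep.Φ, map_add, map_star, hγ, hξ, c_neg', star_neg]; abel
    apply self_neg
    have := htw (r.Φ ξ) (x * r.Φ ξ)
    rw [← mul_assoc, h, hγΦ, mul_neg, mul_assoc, hsq, mul_one, map_neg] at this
    exact this
  · let K : Submodule ℂ H := Submodule.span ℂ ((F.filter fun φ => G φ = φ : Finset H) : Set H)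
    have : FiniteDimensional ℂ K := FiniteDimensional.span_finset ℂ _
    let b := stdOrthonormalBasis ℂ K
    have hKev : ∀ w ∈ K, G w = w := by
      intro w hw
      induction hw using Submodule.span_induction with
      | mem w hw => simpa using (Finset.mem_filter.mp hw).2
      | zero => simp
      | add a b _ _ ha hb => rw [map_add, ha, hb]
      | smul z a _ ha => rw [map_smul, ha]
    have hv : Orthonormal ℂ (fun i => (b i : H)) :=
      b.orthonormal.comp_linearIsometry K.subtypeₗᵢ
    obtain ⟨N, hN1, hN2, hN3, hN4⟩ := parity_implementer r G γ hγ (fun i => (b i : H)) hv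
      (fun i => hKev _ (b i).2) Finset.univ
    have starRel : ∀ a a' : A, N * a = a' * N → N * star a = star a' * N := by
      intro a a' h
      have e : a * star N = star N * a' := by
        calc a * star N = star N * N * a * star N := by rw [hN1, one_mul]
          _ = star N * (N * a) * star N := by rw [mul_assoc (star N)]
          _ = star N * a' * (N * star N) := by rw [h]; noncomm_ring
          _ = star N * a' := by rw [hN2, mul_one]
      have := congrArg star e
      simpa using this
    have hNx := h2 N ?_ ?_
    · rw [hk.neg_one_pow] at hNx
      apply self_neg
      have := htw N (x * star N)
      rw [hN3, mul_assoc x, hN1, mul_one, ← mul_assoc, hNx] at this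
      rw [neg_smul, one_smul, neg_mul, mul_assoc, hN2, mul_one, map_neg] at this
      exact this.symm
    · intro φ hφ hGφ
      have hφK : φ ∈ K := Submodule.subset_span (by simp [hφ, hGφ])
      have hsum : ∑ i, (2 * ⟪(b i : H), φ⟫_ℂ) • (b i : H) = (2 : ℂ) • φ := by
        have := congrArg (Subtype.val) (b.sum_repr' ⟨φ, hφK⟩)
        simp only [Submodule.coe_sum, Submodule.coe_smul, Submodule.coe_inner] at this
        simp only [mul_smul]
        rw [← Finset.smul_sum, this]
      have e := hN4 φ
      rw [hsum, show φ - (2 : ℂ) • φ = -φ by module, c_neg'] at e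
      refine ⟨by rw [e, neg_mul], ?_⟩
      rw [starRel _ _ e, star_neg, neg_mul]
    · intro φ hφ hGφ
      have hsum : ∑ i, (2 * ⟪(b i : H), φ⟫_ℂ) • (b i : H) = 0 := by
        apply Finset.sum_eq_zero
        intro i _
        have e1 := hGs (b i : H) φ
        rw [hKev _ (b i).2, hGφ, inner_neg_right] at e1
        rw [self_neg _ e1, mul_zero, zero_smul]
      have e := hN4 φ
      rw [hsum, sub_zero] at e
      exact ⟨e, starRel _ _ e⟩

/-- Bounded twisted traces vanish. -/
lemma twisted_zero (r : CARrep H A)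
    (G : H →L[ℂ] H) (hGs : ∀ x y, ⟪G x, y⟫_ℂ = ⟪x, G y⟫_ℂ) (hG_un : ∀ φ, G (G φ) = φ)
    (hodd : ¬ FiniteDimensional ℂ (LinearMap.ker ((G + 1 : H →L[ℂ] H) : H →ₗ[ℂ] H)))
    (γ : A ≃⋆ₐ[ℂ] A) (hγ : ∀ φ, γ (r.c φ) = r.c (G φ))
    (τ : A →ₗ[ℂ] ℂ) (htw : ∀ x y : A, τ (x * y) = τ (y * γ x))
    (hbd : ∀ x, ‖τ x‖ ≤ ‖x‖) (x : A) : τ x = 0 := by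
  have hcont : Continuous τ :=
    (τ.mkContinuous 1 (fun x => by simpa using hbd x)).continuous
  have hset : ∀ y ∈ (Algebra.adjoin ℂ (Set.range r.c ∪ Set.range fun φ => star (r.c φ)) :
      Subalgebra ℂ A), τ y = 0 := by
    intro y hy
    have hy' := adjoin_le_hom r G hG_un hy
    clear hy
    rw [← Subalgebra.mem_toSubmodule, Algebra.adjoin_eq_span] at hy'
    induction hy' using Submodule.span_induction with
    | mem w hw =>
      exact twisted_mono_zero r G hGs hodd γ hγ τ htw w (monoData_closure r G γ hγ w hw)
    | zero => simp
    | add a b _ _ ha hb => rw [map_add, ha, hb, add_zero]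
    | smul z a _ ha => rw [map_smul, ha, smul_zero]
  have : (τ : A → ℂ) = fun _ => 0 :=
    Continuous.ext_on r.gen hcont continuous_const (fun y hy => hset y hy)
  exact congrFun this x

lemma state_bound (μ : A → ℂ) (hμ : IsState μ) (a : A) :
    μ (star a * a) ≤ ((‖a‖ ^ 2 : ℝ) : ℂ) := by
  let : PartialOrder A := CStarAlgebra.spectralOrder A
  have : StarOrderedRing A := CStarAlgebra.spectralOrderedRing A
  obtain ⟨hlin, hpos, hone⟩ := hμ
  have h : star a * a ≤ algebraMap ℝ A (‖a‖ ^ 2) := CStarAlgebra.star_mul_le_algebraMap_norm_sq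
  rw [← sub_nonneg] at h
  obtain ⟨d, hd⟩ := CStarAlgebra.nonneg_iff_eq_star_mul_self.mp h
  have h2 := hpos d
  have h3 : algebraMap ℝ A (‖a‖ ^ 2) = ((‖a‖ ^ 2 : ℝ) : ℂ) • (1 : A) := by
    rw [Algebra.algebraMap_eq_smul_one, Complex.coe_smul]
  rw [← hd, h3, hlin.map_sub, hlin.map_smul, hone, smul_eq_mul, mul_one, sub_nonneg] at h2
  exact h2

end Helpers

/-- Let `G` be a selfadjoint unitary on `H` with infinite-dimensional
`−1`-eigenspace `H_odd`, `γ_G` the induced Bogoliubov automorphism of `CAR(H)`, and `μ₀`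
the unique tracial state on `CAR(H)`. Then the only `γ_G`-twisted tracial functional
dominated by `μ₀` is `0`; consequently `μ₀` has a unique tracial extension to the
crossed product `CAR(H) ⋊_{γ_G} ℤ₂`, namely `μ₀ ∘ E`. -/
theorem tracial_twisted_functional_vanishes
    {H A : Type*} [NormedAddCommGroup H] [InnerProductSpace ℂ H] [CompleteSpace H]
    [CStarAlgebra A] (r : CARrep H A)
    (G : H →L[ℂ] H) (hG_sa : star G = G) (hG_un : ∀ φ, G (G φ) = φ)
    (hodd : ¬ FiniteDimensional ℂ (LinearMap.ker ((G + 1 : H →L[ℂ] H) : H →ₗ[ℂ] H)))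
    (γ : A ≃⋆ₐ[ℂ] A) (hγ : ∀ φ, γ (r.c φ) = r.c (G φ))
    (μ₀ : A → ℂ) (hμ₀_state : IsState μ₀)
    (hμ₀_tr : ∀ x y : A, μ₀ (x * y) = μ₀ (y * x))
    (hμ₀_unique : ∀ μ : A → ℂ, IsState μ → (∀ x y : A, μ (x * y) = μ (y * x)) → μ = μ₀) :
    (∀ τ : A → ℂ, IsLinearMap ℂ τ → (∀ x y : A, τ (x * y) = τ (y * γ x)) →
      Dominated μ₀ τ → τ = 0) ∧
    ∀ W : A × A → ℂ, cpIsState γ W →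
      (∀ p q : A × A, W (cpMul γ p q) = W (cpMul γ q p)) →
      (∀ a : A, W (a, 0) = μ₀ a) →
      W = fun p : A × A => μ₀ p.1 := by
  have hGs : ∀ x y, ⟪G x, y⟫_ℂ = ⟪x, G y⟫_ℂ := by
    intro x y
    have := ContinuousLinearMap.adjoint_inner_left G y x
    rw [← ContinuousLinearMap.star_eq_adjoint, hG_sa] at this
    exact this
  refine ⟨?_, ?_⟩
  · intro τ hlin htw hdom
    have hbd : ∀ x, ‖τ x‖ ≤ ‖x‖ := by
      intro x
      have h1 := hdom 1 x
      rw [star_one, one_mul, one_mul, hμ₀_state.2.2, one_mul] at h1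
      have h2 := h1.trans (state_bound μ₀ hμ₀_state x)
      rw [← Complex.ofReal_pow, Complex.real_le_real] at h2
      exact (sq_le_sq₀ (norm_nonneg _) (norm_nonneg _)).mp h2
    funext x
    exact twisted_zero r G hGs hG_un hodd γ hγ (hlin.mk' τ) htw hbd x
  · intro W hW htr hres
    obtain ⟨hWlin, hWpos, -⟩ := hW
    let τ : A →ₗ[ℂ] ℂ := (hWlin.mk' W).comp (LinearMap.inr ℂ A A)
    have hτ : ∀ b, τ b = W (0, b) := fun b => rfl
    have hsplit : ∀ a b : A, W (a, b) = μ₀ a + τ b := by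
      intro a b
      rw [hτ, ← hres, ← hWlin.map_add]; simp
    have htw : ∀ x y : A, τ (x * y) = τ (y * γ x) := by
      intro x y
      have := htr (x, 0) (0, y)
      simpa [cpMul, hτ] using this
    have hbd : ∀ x, ‖τ x‖ ≤ ‖x‖ := by
      intro b
      have hpos : ∀ z : ℂ, 0 ≤ (starRingEnd ℂ z * z + μ₀ (star (γ b) * γ b))
          + (starRingEnd ℂ z * τ b + z * τ (star b)) := by
        intro z
        have h := hWpos (z • 1, b)
        have e1 : cpMul γ (cpStar γ (z • 1, b)) (z • 1, b)
            = ((starRingEnd ℂ z * z) • (1 : A) + star (γ b) * γ b,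
              starRingEnd ℂ z • b + z • γ (star b)) := by
          simp [cpMul, cpStar, map_star, smul_smul, mul_comm]
        have e2 : τ (γ (star b)) = τ (star b) := by
          have := htw (star b) 1
          rw [mul_one, one_mul] at this
          exact this.symm
        rw [e1, hsplit, hμ₀_state.1.map_add, hμ₀_state.1.map_smul, hμ₀_state.2.2, map_add,
          map_smul, map_smul, e2] at h
        simpa using h
      have hM := state_bound μ₀ hμ₀_state (γ b)
      have hM0 := hμ₀_state.2.1 (γ b)
      have hnorm : ‖γ b‖ = ‖b‖ := NonUnitalStarAlgHom.norm_map γ γ.injective b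
      rw [hnorm] at hM
      have a1 := hpos 1
      have a2 := hpos Complex.I
      have a3 := hpos (- τ b)
      rw [Complex.le_def] at a1 a2 a3 hM hM0
      simp only [Complex.add_re, Complex.add_im, Complex.mul_re, Complex.mul_im, map_one,
        Complex.one_re, Complex.one_im, Complex.conj_I, Complex.neg_re, Complex.neg_im,
        Complex.I_re, Complex.I_im, Complex.zero_re, Complex.zero_im, map_neg,
        Complex.conj_re, Complex.conj_im, Complex.ofReal_re, Complex.ofReal_im] at a1 a2 a3 hM hM0
      have i1 : (τ (star b)).im = - (τ b).im := by linarith [a1.2, hM0.2]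
      have i2 : (τ (star b)).re = (τ b).re := by linarith [a2.2, hM0.2]
      rw [i1, i2] at a3
      have hsq : ‖τ b‖ ^ 2 ≤ ‖b‖ ^ 2 := by
        rw [← Complex.normSq_eq_norm_sq, Complex.normSq_apply]
        linarith [a3.1, hM.1]
      exact (sq_le_sq₀ (norm_nonneg _) (norm_nonneg _)).mp hsq
    funext p
    obtain ⟨a, b⟩ := p
    rw [hsplit, twisted_zero r G hGs hG_un hodd γ hγ τ htw hbd b, add_zero]

end
end

section
/- Consider the graded C*-dynamical system (CAR(H), α^{H₀}, γ_G) with dynamics and grading given by Bogoliubov automorphisms from a strongly continuous unitary group e^{itH₀} and a commuting selfadjoint unitary G, where dim H_odd = ∞ and ker H₀ = {0}; let ω_β be the unique (α^{H₀}, β)-KMS state on CAR(H), with β ≠ 0. Then the following are equivalent: (a) there exists a nonzero hermitian γ_G-twisted (α^{H₀}, β)-KMS functional dominated by ω_β; (b) c_{βH₀} := Π_{λ ∈ σ(H_odd)} (1 − e^{−|βλ|})/(1 + e^{−|βλ|}) > 0 (product over the spectrum of H_odd = H₀|_{H_odd} counted with multiplicity); (c) Tr_{H_odd}(e^{−|β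 H_odd|}) < ∞. In this case the quasifree functional μ_{T_β^G} with T_β^G = i(1 − Ge^{βH₀})(1 + Ge^{βH₀})^{−1} is bounded, and the set of hermitian γ_G-twisted (α^{H₀}, β)-KMS functionals dominated by ω_β equals {c · μ_{T_β^G} : c ∈ [−c_{βH₀}, c_{βH₀}]}. -/
open scoped InnerProductSpace ComplexOrder

noncomputable section

variable {A : Type*} [CStarAlgebra A]

/-- `(e, lam)` is an orthonormal basis of the odd subspace `H_odd = ker (G + 1)`
consisting of eigenvectors of the unitary group `U(t) = e^{itH₀}` with eigenvalues
`lam k` of the generator (so that `σ(H_odd) = {lam k}` counted with multiplicity). -/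
def EigenBasisOdd {Hs : Type*} [NormedAddCommGroup Hs] [InnerProductSpace ℂ Hs]
    (G : Hs →L[ℂ] Hs) (U : ℝ → Hs ≃ₗᵢ[ℂ] Hs) (e : ℕ → Hs) (lam : ℕ → ℝ) : Prop :=
  Orthonormal ℂ e ∧
  (∀ k, G (e k) = -e k) ∧
  (∀ φ : Hs, G φ = -φ →
    φ ∈ closure ((Submodule.span ℂ (Set.range e) : Submodule ℂ Hs) : Set Hs)) ∧
  (∀ (t : ℝ) (k), U t (e k) = Complex.exp (Complex.I * t * lam k) • e k)

set_option linter.all false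
set_option linter.deprecated false

namespace TK

/-! ### States -/

theorem state_star {ω : A → ℂ} (h : IsState ω) (a : A) :
    ω (star a) = starRingEnd ℂ (ω a) := by
  have key : ∀ z : ℂ, (z * ω a + starRingEnd ℂ z * ω (star a)).im = 0 := by
    intro z
    have h1 := h.2.1 (1 + z • a)
    have h2 := h.2.1 (z • a)
    have h3 : star (1 + z • a) * (1 + z • a)
        = 1 + z • a + starRingEnd ℂ z • star a + star (z • a) * (z • a) := by
      simp only [star_add, star_one, star_smul, add_mul, mul_add, one_mul, mul_one]
      simp [add_assoc]
      abel
    rw [h3, h.1.map_add, h.1.map_add, h.1.map_add, h.1.map_smul, h.1.map_smul, h.2.2] at h1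
    have h1' := (Complex.le_def.1 h1).2
    have h2' := (Complex.le_def.1 h2).2
    simp only [Complex.zero_im, Complex.add_im, Complex.one_im, smul_eq_mul] at h1' h2' ⊢
    linarith
  have k1 := key 1
  have k2 := key Complex.I
  simp at k1 k2
  apply Complex.ext
  · simp; linarith
  · simp; linarith

theorem state_nonneg {ω : A → ℂ} (h : IsState ω) (a : A) : 0 ≤ (ω (star a * a)).re :=
  (Complex.le_def.1 (h.2.1 a)).1

theorem state_im {ω : A → ℂ} (h : IsState ω) (a : A) : (ω (star a * a)).im = 0 :=
  ((Complex.le_def.1 (h.2.1 a)).2).symm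

theorem state_cs {ω : A → ℂ} (h : IsState ω) (a b : A) :
    ‖ω (star a * b)‖ ^ 2 ≤ (ω (star a * a)).re * (ω (star b * b)).re := by
  let c : PreInnerProductSpace.Core ℂ A :=
    { inner := fun a b => ω (star a * b)
      conj_inner_symm := fun x y => by
        rw [← state_star h]; simp
      re_inner_nonneg := fun x => state_nonneg h x
      add_left := fun x y z => by
        rw [star_add, add_mul, h.1.map_add]
      smul_left := fun x y r => by
        rw [star_smul, smul_mul_assoc, h.1.map_smul]; rfl }
  have := @InnerProductSpace.Core.inner_mul_inner_self_le ℂ A _ _ _ c a b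
  have e1 : ω (star b * a) = starRingEnd ℂ (ω (star a * b)) := by
    rw [← state_star h]; simp
  change ‖ω (star a * b)‖ * ‖ω (star b * a)‖ ≤ (ω (star a * a)).re * (ω (star b * b)).re at this
  rw [e1, RCLike.norm_conj] at this
  rw [sq]; exact this

theorem state_le {ω : A → ℂ} (h : IsState ω) (a : A) : (ω (star a * a)).re ≤ ‖a‖ ^ 2 := by
  let := CStarAlgebra.spectralOrder A
  let := CStarAlgebra.spectralOrderedRing A
  have h1 : star a * a ≤ algebraMap ℝ A (‖a‖ ^ 2) := CStarAlgebra.star_mul_le_algebraMap_norm_sq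
  have h2 := sub_nonneg.2 h1
  obtain ⟨y, hy⟩ := CStarAlgebra.nonneg_iff_eq_star_mul_self.1 h2
  have h3 := state_nonneg h y
  have e : (algebraMap ℝ A (‖a‖ ^ 2)) = ((‖a‖ ^ 2 : ℝ) : ℂ) • (1 : A) := by
    rw [Algebra.algebraMap_eq_smul_one]; exact (Complex.coe_smul _ _).symm
  rw [← hy, h.1.map_sub, e, h.1.map_smul, h.2.2] at h3
  simp only [smul_eq_mul, mul_one, Complex.sub_re, Complex.ofReal_re] at h3
  linarith

theorem state_norm_le {ω : A → ℂ} (h : IsState ω) (a : A) : ‖ω a‖ ≤ ‖a‖ := by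
  have := state_cs h 1 a
  have h2 := state_le h a
  simp [h.2.2] at this
  exact le_of_sq_le_sq (this.trans h2) (norm_nonneg _)

theorem dominated_iff {ω ρ : A → ℂ} (h : IsState ω) :
    Dominated ω ρ ↔
      ∀ a b : A, ‖ρ (star a * b)‖ ^ 2 ≤ (ω (star a * a)).re * (ω (star b * b)).re := by
  unfold Dominated
  refine forall_congr' fun a => forall_congr' fun b => ?_
  rw [Complex.le_def]
  have i1 := state_im h a
  have i2 := state_im h b
  simp only [Complex.mul_re, Complex.mul_im, i1, i2]
  have : ((‖ρ (star a * b)‖ : ℂ) ^ 2) = ((‖ρ (star a * b)‖ ^ 2 : ℝ) : ℂ) := by push_cast; rfl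
  rw [this, Complex.ofReal_re, Complex.ofReal_im]
  simp

theorem dom_norm_sq {ω ρ : A → ℂ} (h : IsState ω) (hd : Dominated ω ρ) (b : A) :
    ‖ρ b‖ ^ 2 ≤ (ω (star b * b)).re := by
  have := (dominated_iff h).1 hd 1 b
  simpa [h.2.2] using this

theorem dom_norm_le {ω ρ : A → ℂ} (h : IsState ω) (hd : Dominated ω ρ) (b : A) :
    ‖ρ b‖ ≤ ‖b‖ :=
  le_of_sq_le_sq ((dom_norm_sq h hd b).trans (state_le h b)) (norm_nonneg _)

theorem lin_continuous {ρ : A → ℂ} (hl : IsLinearMap ℂ ρ) (hb : ∀ b, ‖ρ b‖ ≤ ‖b‖) :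
    Continuous ρ := by
  have := (LinearMap.mkContinuous (hl.mk' ρ) 1 (fun x => by simpa using hb x)).continuous
  exact this

theorem lin_sum {ρ : A → ℂ} (hl : IsLinearMap ℂ ρ) {ι : Type*} (s : Finset ι) (f : ι → A) :
    ρ (∑ i ∈ s, f i) = ∑ i ∈ s, ρ (f i) :=
  map_sum (hl.mk' ρ) f s

/-! ### CAR generalities -/

variable {Hs : Type*} [NormedAddCommGroup Hs] [InnerProductSpace ℂ Hs]

theorem c_sq (r : CARrep Hs A) (φ : Hs) : r.c φ * r.c φ = 0 := by
  have := r.car₂ φ φ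
  rw [← two_smul ℂ] at this
  simpa using this

theorem norm_c_le (r : CARrep Hs A) (φ : Hs) : ‖r.c φ‖ ≤ ‖φ‖ := by
  have h1 := r.car₁ φ φ
  set c := r.c φ with hc
  have h0 : c * c = 0 := c_sq r φ
  have h2 : (star c * c) * (star c * c) = (((‖φ‖ ^ 2 : ℝ)) : ℂ) • (star c * c) := by
    have e : c * star c = ⟪φ, φ⟫_ℂ • (1 : A) - star c * c := by rw [← h1]; abel
    calc (star c * c) * (star c * c) = star c * (c * star c) * c := by noncomm_ring
      _ = ⟪φ, φ⟫_ℂ • (star c * c) - star c * (star c * (c * c)) := by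
        rw [e]; simp [mul_sub, sub_mul, mul_assoc]
      _ = _ := by rw [h0, inner_self_eq_norm_sq_to_K]; simp
  have hsa : star (star c * c) = star c * c := by simp
  have h3 : ‖star c * c‖ * ‖star c * c‖ = ‖φ‖ ^ 2 * ‖star c * c‖ := by
    rw [← CStarRing.norm_star_mul_self, hsa, h2, norm_smul]
    simp
  rw [CStarRing.norm_star_mul_self] at h3
  by_contra hcon
  push Not at hcon
  have : 0 ≤ ‖φ‖ := norm_nonneg _
  have hp : 0 < ‖c‖ := lt_of_le_of_lt this hcon
  have h4 : ‖c‖ * ‖c‖ = ‖φ‖ ^ 2 := mul_right_cancel₀ (mul_pos hp hp).ne' h3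
  nlinarith

/-- The creation map `φ ↦ a*(φ)` as a continuous linear map. -/
def cs (r : CARrep Hs A) : Hs →L[ℂ] A :=
  LinearMap.mkContinuous
    { toFun := fun φ => star (r.c φ)
      map_add' := fun x y => by rw [r.c_add, star_add]
      map_smul' := fun z x => by rw [r.c_smul, star_smul]; simp } 1
    (fun x => by simpa using norm_c_le r x)

theorem cs_apply (r : CARrep Hs A) (φ : Hs) : cs r φ = star (r.c φ) := rfl

theorem star_cs (r : CARrep Hs A) (φ : Hs) : star (cs r φ) = r.c φ := by simp [cs_apply]

theorem c_cont (r : CARrep Hs A) : Continuous r.c := by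
  have : r.c = fun φ => star (cs r φ) := by ext φ; rw [star_cs]
  rw [this]; exact (cs r).continuous.star

theorem Φ_cont (r : CARrep Hs A) : Continuous r.Φ :=
  (cs r).continuous.add (c_cont r)

theorem c_neg (r : CARrep Hs A) (φ : Hs) : r.c (-φ) = - r.c φ := by
  have := r.c_smul (-1) φ
  simpa using this

theorem c_sub (r : CARrep Hs A) (φ ψ : Hs) : r.c (φ - ψ) = r.c φ - r.c ψ := by
  rw [sub_eq_add_neg, r.c_add, c_neg, sub_eq_add_neg]

theorem c_zero (r : CARrep Hs A) : r.c 0 = 0 := by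
  have := r.c_smul 0 0
  simpa using this

theorem Φ_add (r : CARrep Hs A) (φ ψ : Hs) : r.Φ (φ + ψ) = r.Φ φ + r.Φ ψ := by
  simp only [CARrep.Φ, r.c_add, star_add]; abel

theorem c_eq_Φ (r : CARrep Hs A) (φ : Hs) :
    r.c φ = (1 / 2 : ℂ) • (r.Φ φ + Complex.I • r.Φ (Complex.I • φ)) := by
  simp only [CARrep.Φ, r.c_smul, star_smul, smul_add, smul_smul]
  simp
  rw [show (2:ℂ)⁻¹ • star (r.c φ) + (2:ℂ)⁻¹ • r.c φ + (-((2:ℂ)⁻¹ • star (r.c φ)) + (2:ℂ)⁻¹ • r.c φ)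
    = ((2:ℂ)⁻¹ + (2:ℂ)⁻¹) • r.c φ by rw [add_smul]; abel]
  norm_num

theorem cs_eq_Φ (r : CARrep Hs A) (φ : Hs) :
    star (r.c φ) = (1 / 2 : ℂ) • (r.Φ φ - Complex.I • r.Φ (Complex.I • φ)) := by
  simp only [CARrep.Φ, r.c_smul, star_smul, smul_add, smul_smul, smul_sub]
  simp
  rw [← add_smul]
  norm_num

/-- Induction over the CAR algebra for closed properties. -/
theorem dense_induction (r : CARrep Hs A) {P : A → Prop} (hcl : IsClosed {a | P a})
    (hc : ∀ φ, P (r.c φ)) (hs : ∀ φ, P (star (r.c φ))) (hal : ∀ z : ℂ, P (algebraMap ℂ A z))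
    (hadd : ∀ a b, P a → P b → P (a + b)) (hmul : ∀ a b, P a → P b → P (a * b)) (a : A) : P a := by
  have h1 : ∀ x ∈ (Algebra.adjoin ℂ (Set.range r.c ∪ Set.range fun φ => star (r.c φ)) :
      Subalgebra ℂ A), P x := by
    intro x hx
    induction hx using Algebra.adjoin_induction with
    | mem x hx =>
      rcases hx with ⟨φ, rfl⟩ | ⟨φ, rfl⟩
      · exact hc φ
      · exact hs φ
    | algebraMap z => exact hal z
    | add x y _ _ hx hy => exact hadd _ _ hx hy
    | mul x y _ _ hx hy => exact hmul _ _ hx hy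
  have h2 : (Set.univ : Set A) ⊆ {a | P a} := by
    rw [← r.gen.closure_eq]
    exact closure_minimal h1 hcl
  exact h2 (Set.mem_univ a)

theorem fieldProd_cons (r : CARrep Hs A) (ξ : Hs) (L : List Hs) :
    r.fieldProd (ξ :: L) = r.Φ ξ * r.fieldProd L := by simp [CARrep.fieldProd]

theorem fieldProd_nil (r : CARrep Hs A) : r.fieldProd [] = 1 := by simp [CARrep.fieldProd]

theorem fieldProd_append (r : CARrep Hs A) (L M : List Hs) :
    r.fieldProd (L ++ M) = r.fieldProd L * r.fieldProd M := by simp [CARrep.fieldProd]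

/-- Field words span a dense subspace. -/
theorem span_fields (r : CARrep Hs A) (a : A) :
    a ∈ closure ((Submodule.span ℂ (Set.range r.fieldProd) : Submodule ℂ A) : Set A) := by
  set S : Submodule ℂ A := Submodule.span ℂ (Set.range r.fieldProd) with hS
  have hm : ∀ a ∈ S, ∀ b ∈ S, a * b ∈ S := by
    intro a ha b hb
    have : S * S ≤ S := by
      rw [hS, Submodule.span_mul_span]
      apply Submodule.span_mono
      rintro _ ⟨_, ⟨L, rfl⟩, _, ⟨M, rfl⟩, rfl⟩
      exact ⟨L ++ M, fieldProd_append r L M⟩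
    exact this (Submodule.mul_mem_mul ha hb)
  have hΦ : ∀ x, r.Φ x ∈ S := fun x =>
    Submodule.subset_span ⟨[x], by simp [CARrep.fieldProd]⟩
  have h1 : ∀ x ∈ (Algebra.adjoin ℂ (Set.range r.c ∪ Set.range fun φ => star (r.c φ)) :
      Subalgebra ℂ A), x ∈ S := by
    intro x hx
    induction hx using Algebra.adjoin_induction with
    | mem x hx =>
      rcases hx with ⟨φ, rfl⟩ | ⟨φ, rfl⟩
      · rw [c_eq_Φ]
        exact S.smul_mem _ (S.add_mem (hΦ _) (S.smul_mem _ (hΦ _)))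
      · simp only []
        rw [cs_eq_Φ]
        exact S.smul_mem _ (S.sub_mem (hΦ _) (S.smul_mem _ (hΦ _)))
    | algebraMap z =>
      rw [Algebra.algebraMap_eq_smul_one]
      exact S.smul_mem _ (Submodule.subset_span ⟨[], fieldProd_nil r⟩)
    | add x y _ _ hx hy => exact S.add_mem hx hy
    | mul x y _ _ hx hy => exact hm _ hx _ hy
  exact closure_mono h1 (r.gen a)

theorem ext_fields (r : CARrep Hs A) {ρ σ : A → ℂ} (h1 : IsLinearMap ℂ ρ) (h2 : IsLinearMap ℂ σ)
    (c1 : Continuous ρ) (c2 : Continuous σ) (h : ∀ L, ρ (r.fieldProd L) = σ (r.fieldProd L)) :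
    ρ = σ := by
  funext a
  have hcl : IsClosed {a | ρ a = σ a} := isClosed_eq c1 c2
  have : ∀ x ∈ (Submodule.span ℂ (Set.range r.fieldProd) : Submodule ℂ A), ρ x = σ x := by
    intro x hx
    induction hx using Submodule.span_induction with
    | mem x hx => obtain ⟨L, rfl⟩ := hx; exact h L
    | zero => rw [h1.map_zero, h2.map_zero]
    | add x y _ _ hx hy => rw [h1.map_add, h2.map_add, hx, hy]
    | smul z x _ hx => rw [h1.map_smul, h2.map_smul, hx]
  exact closure_minimal this hcl (span_fields r a)

/-- Moving an odd element through a field word. -/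
theorem move_through (r : CARrep Hs A) (b : A) (κ : Hs → ℂ)
    (hb : ∀ x, b * r.Φ x + r.Φ x * b = κ x • (1 : A)) (L : List Hs) :
    b * r.fieldProd L = ∑ j ∈ Finset.range L.length,
      ((-1 : ℂ) ^ j * κ (L.getD j 0)) • r.fieldProd (L.eraseIdx j)
      + (-1 : ℂ) ^ L.length • (r.fieldProd L * b) := by
  induction L with
  | nil => simp [fieldProd_nil]
  | cons x L ih =>
    have e : b * r.Φ x = κ x • (1 : A) - r.Φ x * b := by rw [← hb]; abel
    rw [fieldProd_cons, ← mul_assoc, e, sub_mul, mul_assoc, ih, List.length_cons,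
      Finset.sum_range_succ']
    simp only [List.getD_cons_succ, List.eraseIdx_cons_succ, fieldProd_cons, List.getD_cons_zero,
      List.eraseIdx_cons_zero, pow_succ, pow_zero, mul_add, Finset.mul_sum]
    simp only [mul_smul_comm, smul_mul_assoc, one_mul, mul_one, mul_neg, neg_mul, neg_smul,
      Finset.sum_neg_distrib, mul_assoc]
    abel

theorem c_anti (r : CARrep Hs A) (χ x : Hs) :
    r.c χ * r.Φ x + r.Φ x * r.c χ = ⟪χ, x⟫_ℂ • (1 : A) := by
  rw [← r.car₁ x χ, CARrep.Φ]
  have := r.car₂ χ x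
  rw [mul_add, add_mul]
  calc _ = star (r.c x) * r.c χ + r.c χ * star (r.c x) + (r.c χ * r.c x + r.c x * r.c χ) := by abel
    _ = _ := by rw [this, add_zero]

theorem cs_anti (r : CARrep Hs A) (χ x : Hs) :
    star (r.c χ) * r.Φ x + r.Φ x * star (r.c χ) = ⟪x, χ⟫_ℂ • (1 : A) := by
  have := congrArg star (c_anti r χ x)
  have hΦ : star (r.Φ x) = r.Φ x := by simp [CARrep.Φ, add_comm]
  rw [star_add, star_mul, star_mul, hΦ, star_smul, star_one] at this
  have h2 : star (⟪χ, x⟫_ℂ) = ⟪x, χ⟫_ℂ := inner_conj_symm _ _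
  rw [h2] at this
  rw [← this]; abel

theorem star_Φ (r : CARrep Hs A) (x : Hs) : star (r.Φ x) = r.Φ x := by
  simp [CARrep.Φ, add_comm]

end TK

namespace TK

open MeasureTheory Filter Topology

variable {Hs : Type*} [NormedAddCommGroup Hs] [InnerProductSpace ℂ Hs]

/-! ### Entire vectors -/

/-- A strongly continuous one-parameter unitary group. -/
structure UGroup (U : ℝ → Hs ≃ₗᵢ[ℂ] Hs) : Prop where
  zero : ∀ ξ, U 0 ξ = ξ
  add : ∀ s t ξ, U (s + t) ξ = U s (U t ξ)
  cont : ∀ ξ, Continuous fun t : ℝ => U t ξ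

/-- `f` is the entire extension of the orbit of `φ`. -/
def EV (U : ℝ → Hs ≃ₗᵢ[ℂ] Hs) (φ : Hs) (f : ℂ → Hs) : Prop :=
  Differentiable ℂ f ∧ ∀ t : ℝ, f (t : ℂ) = U t φ

theorem eq_of_real {E : Type*} [NormedAddCommGroup E] [NormedSpace ℂ E] [CompleteSpace E]
    {f g : ℂ → E} (hf : Differentiable ℂ f) (hg : Differentiable ℂ g)
    (h : ∀ t : ℝ, f t = g t) : f = g := by
  have h1 : AnalyticOnNhd ℂ f Set.univ := fun z _ => hf.analyticAt z
  have h2 : AnalyticOnNhd ℂ g Set.univ := fun z _ => hg.analyticAt z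
  refine AnalyticOnNhd.eq_of_frequently_eq (z₀ := 0) h1 h2 ?_
  have ht : Tendsto (fun n : ℕ => (((1 / ((n : ℝ) + 1) : ℝ)) : ℂ)) atTop (𝓝[≠] 0) := by
    apply tendsto_nhdsWithin_iff.2
    refine ⟨?_, ?_⟩
    · have := (Complex.continuous_ofReal.tendsto 0).comp
        (tendsto_one_div_add_atTop_nhds_zero_nat (𝕜 := ℝ))
      simpa [Function.comp_def] using this
    · refine Eventually.of_forall fun n => ?_
      have : (0 : ℝ) < 1 / ((n : ℝ) + 1) := by positivity
      simp only [Set.mem_compl_iff, Set.mem_singleton_iff]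
      exact_mod_cast this.ne'
  exact ht.frequently (Frequently.of_forall fun n => h _)

section basics
variable {U : ℝ → Hs ≃ₗᵢ[ℂ] Hs}

theorem EV.at_zero (hU : UGroup U) {φ : Hs} {f : ℂ → Hs} (h : EV U φ f) : f 0 = φ := by
  have := h.2 0
  simpa [hU.zero] using this

theorem EV.shift [CompleteSpace Hs] (hU : UGroup U) {φ : Hs} {f : ℂ → Hs} (h : EV U φ f) (w : ℂ) :
    EV U (f w) (fun z => f (z + w)) := by
  refine ⟨h.1.comp (differentiable_id.add_const w), fun t => ?_⟩
  have : (fun w => f ((t : ℂ) + w)) = fun w => U t (f w) := by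
    apply eq_of_real
    · exact h.1.comp (differentiable_id.const_add _)
    · exact (U t).toContinuousLinearEquiv.toContinuousLinearMap.differentiable.comp h.1
    · intro s
      rw [h.2 s, ← hU.add, ← h.2]
      push_cast; rfl
  exact congrFun this w

theorem EV.map {φ : Hs} {f : ℂ → Hs} (h : EV U φ f) (B : Hs →L[ℂ] Hs)
    (hB : ∀ t ξ, U t (B ξ) = B (U t ξ)) : EV U (B φ) (fun z => B (f z)) :=
  ⟨B.differentiable.comp h.1, fun t => by simp only [h.2, hB]⟩

theorem EV.add {φ ψ : Hs} {f g : ℂ → Hs} (h : EV U φ f) (h' : EV U ψ g) :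
    EV U (φ + ψ) (fun z => f z + g z) :=
  ⟨h.1.add h'.1, fun t => by simp [h.2, h'.2]⟩

theorem EV.smul {φ : Hs} {f : ℂ → Hs} (h : EV U φ f) (c : ℂ) :
    EV U (c • φ) (fun z => c • f z) :=
  ⟨h.1.const_smul c, fun t => by simp [h.2]⟩

theorem EV.zero : EV U 0 (fun _ => 0) :=
  ⟨differentiable_const _, fun t => by simp⟩

theorem EV.eig {e : Hs} {lam : ℝ}
    (h : ∀ t : ℝ, U t e = Complex.exp (Complex.I * t * lam) • e) :
    EV U e (fun z => Complex.exp (Complex.I * z * lam) • e) := by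
  refine ⟨?_, fun t => (h t).symm⟩
  fun_prop

theorem EV.norm [CompleteSpace Hs] (hU : UGroup U) {φ : Hs} {f : ℂ → Hs} (h : EV U φ f) (z : ℂ) :
    ‖f z‖ = ‖f (z.im * Complex.I)‖ := by
  have := (h.shift hU (z.im * Complex.I)).2 z.re
  simp only [Complex.re_add_im] at this
  rw [this, LinearIsometryEquiv.norm_map]

theorem liouville [CompleteSpace Hs] (hU : UGroup U) {φ : Hs} {f : ℂ → Hs} (h : EV U φ f) (η : Hs)
    (lam b : ℝ) (hb : b ≠ 0)
    (hp : ∀ z, ⟪η, f (z - Complex.I * b)⟫_ℂ = Complex.exp (lam * b) * ⟪η, f z⟫_ℂ) (t : ℝ) :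
    ⟪η, U t φ⟫_ℂ = Complex.exp (Complex.I * t * lam) * ⟪η, φ⟫_ℂ := by
  set F : ℂ → ℂ := fun z => Complex.exp (-(Complex.I * z * lam)) * ⟪η, f z⟫_ℂ with hF
  have hFd : Differentiable ℂ F := by
    have : Differentiable ℂ fun z => ⟪η, f z⟫_ℂ :=
      (innerSL ℂ η).differentiable.comp h.1
    fun_prop
  have hper : Function.Periodic F (Complex.I * b) := by
    intro z
    have := hp (z + Complex.I * b)
    rw [add_sub_cancel_right] at this
    simp only [hF]
    rw [this, ← mul_assoc, ← Complex.exp_add]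
    congr 2
    ring_nf
    simp
  obtain ⟨M, hM⟩ := (isCompact_Icc (a := -|b|) (b := |b|)).exists_bound_of_continuousOn
    (f := fun s : ℝ => f (s * Complex.I)) (by
      apply Continuous.continuousOn
      exact h.1.continuous.comp (by fun_prop))
  have hbd : ∀ z, ‖F z‖ ≤ Real.exp (|lam| * |b|) * (‖η‖ * M) := by
    intro z
    set n : ℤ := ⌊z.im / b⌋
    have e1 : F z = F (z - n • (Complex.I * b)) := (hper.sub_zsmul_eq n).symm
    rw [e1]
    set w := z - n • (Complex.I * b) with hw
    have hwi : w.im = (z.im / b - n) * b := by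
      simp [hw]; field_simp
    have hwb : |w.im| ≤ |b| := by
      rw [hwi, abs_mul]
      have h1 : |z.im / b - n| ≤ 1 := by
        rw [abs_le]
        constructor
        · linarith [Int.floor_le (z.im / b)]
        · linarith [Int.lt_floor_add_one (z.im / b)]
      nlinarith [abs_nonneg b]
    have h2 : ‖f w‖ ≤ M := by
      rw [h.norm hU]
      exact hM w.im (abs_le.1 hwb)
    simp only [hF, norm_mul]
    gcongr
    · rw [Complex.norm_exp]
      gcongr
      have : (-(Complex.I * w * lam)).re = lam * w.im := by simp; ring
      rw [this]
      calc lam * w.im ≤ |lam * w.im| := le_abs_self _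
        _ = |lam| * |w.im| := abs_mul _ _
        _ ≤ _ := by gcongr
    · calc _ ≤ ‖η‖ * ‖f w‖ := norm_inner_le_norm _ _
        _ ≤ _ := by gcongr
  have hc := hFd.apply_eq_apply_of_bounded
    (isBounded_iff_forall_norm_le.2 ⟨_, by rintro _ ⟨z, rfl⟩; exact hbd z⟩) t 0
  simp only [hF] at hc
  rw [h.2, h.at_zero hU, Complex.exp_neg] at hc
  have hne := Complex.exp_ne_zero (Complex.I * t * lam)
  field_simp at hc
  simpa using hc

end basics

/-! ### Gaussian mollification -/

theorem gauss_bound_integrable (K c : ℝ) :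
    Integrable (fun s : ℝ => Real.exp (-s ^ 2 + K * |s| + c)) := by
  have h1 : ∀ K : ℝ, Integrable (fun s : ℝ => Real.exp (-s ^ 2 + K * s + c)) := by
    intro K
    have := (integrable_cexp_quadratic (b := 1) (by simp) (K : ℂ) (c : ℂ)).norm
    refine this.congr (Eventually.of_forall fun s => ?_)
    simp only [Complex.norm_exp]
    congr 1
    rw [show (-1 * (s : ℂ) ^ 2 + K * s + c) = ((-s ^ 2 + K * s + c : ℝ) : ℂ) by push_cast; ring]
    exact Complex.ofReal_re _
  refine ((h1 K).add (h1 (-K))).mono' (by fun_prop) (Eventually.of_forall fun s => ?_)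
  rw [Real.norm_eq_abs, abs_of_pos (Real.exp_pos _)]
  rcases abs_cases s with ⟨h, _⟩ | ⟨h, _⟩
  · rw [h]; simp only [Pi.add_apply]; linarith [Real.exp_pos (-s ^ 2 + -K * s + c)]
  · rw [h, show K * -s = -K * s by ring]; simp only [Pi.add_apply]
    linarith [Real.exp_pos (-s ^ 2 + K * s + c)]

/-- Gaussian kernel. -/
def gk (z : ℂ) (s : ℝ) : ℂ := Complex.exp (-((s : ℂ) - z) ^ 2)

theorem gk_norm (z : ℂ) (s : ℝ) (R : ℝ) (hz : ‖z‖ ≤ R) :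
    ‖gk z s‖ ≤ Real.exp (-s ^ 2 + (2 * R) * |s| + R ^ 2) := by
  rw [gk, Complex.norm_exp]
  gcongr
  have h1 : (-((s : ℂ) - z) ^ 2).re = -(s - z.re) ^ 2 + z.im ^ 2 := by
    simp [pow_two]; ring
  rw [h1]
  have h2 : s * z.re ≤ |s| * R := by
    calc s * z.re ≤ |s * z.re| := le_abs_self _
      _ = |s| * |z.re| := abs_mul _ _
      _ ≤ |s| * R := by gcongr; exact (Complex.abs_re_le_norm z).trans hz
  have h3 : z.im ^ 2 ≤ R ^ 2 := by
    rw [← sq_abs]; gcongr; exact (Complex.abs_im_le_norm z).trans hz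
  nlinarith [sq_nonneg z.re]

theorem gk_diff [CompleteSpace Hs] (h : ℝ → Hs) (hc : Continuous h) (C : ℝ) (hC : ∀ s, ‖h s‖ ≤ C) :
    Differentiable ℂ (fun z : ℂ => ∫ s : ℝ, gk z s • h s) := by
  intro z₀
  have hcont : ∀ z, Continuous (fun s : ℝ => gk z s • h s) := by
    intro z; unfold gk; fun_prop
  have hC0 : 0 ≤ C := (norm_nonneg _).trans (hC 0)
  set R : ℝ := ‖z₀‖ + 1 with hR
  have hR0 : 0 ≤ R := by positivity
  have := hasDerivAt_integral_of_dominated_loc_of_deriv_le (μ := volume) (𝕜 := ℂ)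
    (F := fun z s => gk z s • h s) (x₀ := z₀) (s := Metric.ball z₀ 1)
    (F' := fun z s => (gk z s * (2 * (s - z))) • h s)
    (bound := fun s => Real.exp (-s ^ 2 + (2 * R + 1) * |s| + (R ^ 2 + R)) * (2 * C))
    (Metric.ball_mem_nhds z₀ one_pos)
    (Eventually.of_forall fun z => (hcont z).aestronglyMeasurable) ?_ ?_ ?_ ?_ ?_
  · exact this.2.differentiableAt
  · refine ((gauss_bound_integrable (2 * R) (R ^ 2)).mul_const C).mono'
      (hcont _).aestronglyMeasurable (Eventually.of_forall fun s => ?_)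
    rw [norm_smul]
    gcongr
    · exact gk_norm _ _ _ (by linarith)
    · exact hC s
  · apply Continuous.aestronglyMeasurable
    unfold gk; fun_prop
  · refine Eventually.of_forall fun s z hz => ?_
    have hz' : ‖z‖ ≤ R := by
      have : ‖z - z₀‖ < 1 := by simpa [dist_eq_norm] using hz
      calc ‖z‖ = ‖z₀ + (z - z₀)‖ := by congr 1; ring
        _ ≤ ‖z₀‖ + ‖z - z₀‖ := norm_add_le _ _
        _ ≤ R := by linarith
    rw [norm_smul, norm_mul]
    have e1 : ‖(2 * ((s : ℂ) - z))‖ ≤ 2 * Real.exp (|s| + R) := by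
      rw [norm_mul]
      have : ‖(s : ℂ) - z‖ ≤ |s| + R := by
        calc _ ≤ ‖(s : ℂ)‖ + ‖z‖ := norm_sub_le _ _
          _ ≤ _ := by simp [hz']
      have h2 := Real.add_one_le_exp (|s| + R)
      simp; linarith
    calc _ ≤ (Real.exp (-s ^ 2 + (2 * R) * |s| + R ^ 2) * (2 * Real.exp (|s| + R))) * C := by
          gcongr
          · exact gk_norm _ _ _ hz'
          · exact hC s
      _ = _ := by
          rw [show -s ^ 2 + (2 * R + 1) * |s| + (R ^ 2 + R)
            = (-s ^ 2 + (2 * R) * |s| + R ^ 2) + (|s| + R) by ring,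
            Real.exp_add (-s ^ 2 + (2 * R) * |s| + R ^ 2) (|s| + R)]
          ring
  · exact (gauss_bound_integrable _ _).mul_const _
  · refine Eventually.of_forall fun s z _ => ?_
    apply HasDerivAt.smul_const
    unfold gk
    have h1 : HasDerivAt (fun z : ℂ => -((s : ℂ) - z) ^ 2) (2 * (s - z)) z := by
      have := (((hasDerivAt_id z).const_sub (s : ℂ)).pow 2).neg
      convert! this using 1
      simp
    exact h1.cexp

theorem gk_int [CompleteSpace Hs] (z : ℂ) (h : ℝ → Hs) (hc : Continuous h) (C : ℝ)
    (hC : ∀ s, ‖h s‖ ≤ C) : Integrable (fun s : ℝ => gk z s • h s) := by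
  refine ((gauss_bound_integrable (2 * ‖z‖) (‖z‖ ^ 2)).mul_const C).mono'
    (by apply Continuous.aestronglyMeasurable; unfold gk; fun_prop) (Eventually.of_forall fun s => ?_)
  rw [norm_smul]
  gcongr
  · exact gk_norm _ _ _ le_rfl
  · exact hC s

theorem ev_mollify [CompleteSpace Hs] {U : ℝ → Hs ≃ₗᵢ[ℂ] Hs} (hU : UGroup U) (φ : Hs) (n : ℝ)
    (hn : 0 < n) : EV U (∫ s : ℝ, gk 0 s • U (s / n) φ)
      (fun z => ∫ s : ℝ, gk (n * z) s • U (s / n) φ) := by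
  have hcont : Continuous fun s : ℝ => U (s / n) φ :=
    (hU.cont φ).comp (by fun_prop)
  have hb : ∀ s : ℝ, ‖U (s / n) φ‖ ≤ ‖φ‖ := fun s => by rw [LinearIsometryEquiv.norm_map]
  refine ⟨(gk_diff _ hcont _ hb).comp (differentiable_id.const_mul (n : ℂ)), fun t => ?_⟩
  have h1 := (U t).toContinuousLinearEquiv.toContinuousLinearMap.integral_comp_comm
    (gk_int 0 _ hcont _ hb)
  have h2 : ((U t).toContinuousLinearEquiv.toContinuousLinearMap) (∫ s : ℝ, gk 0 s • U (s / n) φ)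
    = U t (∫ s : ℝ, gk 0 s • U (s / n) φ) := rfl
  rw [← h2, ← h1]
  rw [← integral_sub_right_eq_self _ (n * t)]
  refine integral_congr_ae (Eventually.of_forall fun s => ?_)
  show gk (n * (t:ℂ)) s • U (s / n) φ = U t (gk 0 (s - n * t) • U ((s - n * t) / n) φ)
  rw [map_smul, ← hU.add, show t + (s - n * t) / n = s / n by field_simp; ring,
    show gk (n * (t:ℂ)) s = gk 0 (s - n * t) by unfold gk; push_cast; ring_nf]

theorem ev_dense [CompleteSpace Hs] {U : ℝ → Hs ≃ₗᵢ[ℂ] Hs} (hU : UGroup U) (φ : Hs) :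
    φ ∈ closure {ψ | ∃ f, EV U ψ f} := by
  set κ : ℂ := ∫ s : ℝ, gk 0 s with hκ
  have hκ0 : κ ≠ 0 := by
    have : κ = ((∫ s : ℝ, Real.exp (-1 * s ^ 2) : ℝ) : ℂ) := by
      rw [hκ, ← integral_complex_ofReal]
      congr 1; funext s; unfold gk; push_cast; congr 1; ring
    rw [this, integral_gaussian]
    exact_mod_cast (by positivity)
  have hlim : Tendsto (fun n : ℕ => ∫ s : ℝ, gk 0 s • U (s / ((n : ℝ) + 1)) φ) atTop
      (𝓝 (∫ s : ℝ, gk 0 s • φ)) := by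
    refine tendsto_integral_of_dominated_convergence
      (fun s => Real.exp (-s ^ 2 + (2 * 0) * |s| + 0 ^ 2) * ‖φ‖) ?_ ?_ ?_ ?_
    · intro n
      apply Continuous.aestronglyMeasurable
      have : Continuous fun s : ℝ => U (s / ((n : ℝ) + 1)) φ :=
        (hU.cont φ).comp (by fun_prop)
      exact Continuous.smul (by unfold gk; fun_prop) this
    · exact (gauss_bound_integrable _ _).mul_const _
    · intro n
      refine Eventually.of_forall fun s => ?_
      rw [norm_smul, LinearIsometryEquiv.norm_map]
      gcongr
      exact gk_norm _ _ _ (by simp)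
    · refine Eventually.of_forall fun s => ?_
      apply Tendsto.const_smul
      have h1 : Tendsto (fun n : ℕ => s / ((n : ℝ) + 1)) atTop (𝓝 0) := by
        have := (tendsto_one_div_add_atTop_nhds_zero_nat (𝕜 := ℝ)).const_mul s
        simpa [div_eq_mul_inv] using this
      have := ((hU.cont φ).tendsto 0).comp h1
      simpa [Function.comp_def, hU.zero] using this
  rw [integral_smul_const] at hlim
  have h2 := hlim.const_smul κ⁻¹
  rw [smul_smul, ← hκ, inv_mul_cancel₀ hκ0, one_smul] at h2
  refine mem_closure_of_tendsto h2 (Eventually.of_forall fun n => ?_)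
  exact ⟨_, (ev_mollify hU φ ((n : ℝ) + 1) (by positivity)).smul κ⁻¹⟩

theorem ev_ortho [CompleteSpace Hs] {U : ℝ → Hs ≃ₗᵢ[ℂ] Hs} (hU : UGroup U) (w : Hs)
    (h : ∀ ψ f, EV U ψ f → ⟪w, ψ⟫_ℂ = 0) : w = 0 := by
  have hcl : IsClosed {x | ⟪w, x⟫_ℂ = 0} := isClosed_eq (by fun_prop) continuous_const
  have := closure_minimal (s := {ψ | ∃ f, EV U ψ f}) (fun ψ ⟨f, hf⟩ => h ψ f hf) hcl
    (ev_dense hU w)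
  exact inner_self_eq_zero.1 this

/-- Density of the range of `1 + G e^{βH₀}` on entire vectors. -/
theorem range_dense [CompleteSpace Hs] {U : ℝ → Hs ≃ₗᵢ[ℂ] Hs} (hU : UGroup U)
    (hker : ∀ φ : Hs, (∀ t : ℝ, U t φ = φ) → φ = 0)
    (G : Hs →L[ℂ] Hs) (hG2 : ∀ φ, G (G φ) = φ) (hUG : ∀ (t : ℝ) (ξ), U t (G ξ) = G (U t ξ))
    (β : ℝ) (hβ : β ≠ 0) (φ : Hs) :
    φ ∈ closure {x | ∃ ψ f, EV U ψ f ∧ x = ψ + G (f (-(Complex.I) * β))} := by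
  set R : Submodule ℂ Hs :=
    { carrier := {x | ∃ ψ f, EV U ψ f ∧ x = ψ + G (f (-(Complex.I) * β))}
      add_mem' := by
        rintro _ _ ⟨ψ, f, h, rfl⟩ ⟨ψ', f', h', rfl⟩
        exact ⟨_, _, h.add h', by simp; abel⟩
      zero_mem' := ⟨_, _, EV.zero, by simp⟩
      smul_mem' := by
        rintro c _ ⟨ψ, f, h, rfl⟩
        exact ⟨_, _, h.smul c, by simp⟩ } with hR
  suffices hd : R.topologicalClosure = ⊤ by
    have : φ ∈ R.topologicalClosure := by rw [hd]; trivial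
    exact this
  rw [Submodule.topologicalClosure_eq_top_iff, Submodule.eq_bot_iff]
  intro η hη
  have hη' : ∀ ψ f, EV U ψ f → ⟪η, ψ⟫_ℂ = -⟪η, G (f (-(Complex.I) * β))⟫_ℂ := by
    intro ψ f hf
    have := (Submodule.mem_orthogonal' R η).1 hη _ ⟨ψ, f, hf, rfl⟩
    rw [inner_add_right] at this
    exact eq_neg_of_add_eq_zero_left this
  apply hker
  intro t
  have hinv : ∀ ψ f, EV U ψ f → ⟪η, U (-t) ψ⟫_ℂ = ⟪η, ψ⟫_ℂ := by
    intro ψ f hf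
    have := liouville hU hf η 0 (2 * β) (by simpa using hβ) (fun z => ?_) (-t)
    · simpa using this
    · have h1 := hη' _ _ (hf.shift hU z)
      have h2 := hη' _ _ ((hf.shift hU (-Complex.I * β + z)).map G hUG)
      simp only [hG2] at h1 h2
      rw [h1, h2]
      simp only [Complex.ofReal_zero, zero_mul, Complex.exp_zero, one_mul, neg_neg]
      congr 2
      push_cast; ring
  rw [← sub_eq_zero]
  apply ev_ortho hU
  intro ψ f hf
  rw [inner_sub_left, sub_eq_zero, ← hinv ψ f hf]
  have : ψ = U t (U (-t) ψ) := by rw [← hU.add]; simp [hU.zero]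
  conv_lhs => rw [this]
  rw [LinearIsometryEquiv.inner_map_map]

end TK

namespace TK

open Filter Topology

variable {Hs : Type*} [NormedAddCommGroup Hs] [InnerProductSpace ℂ Hs]

/-! ### Analytic elements -/

/-- The data of the graded CAR system. -/
structure TSys (r : CARrep Hs A) (U : ℝ → Hs ≃ₗᵢ[ℂ] Hs) (d : Dynamics A) (G : Hs →L[ℂ] Hs)
    (γ : A ≃⋆ₐ[ℂ] A) : Prop where
  u : UGroup U
  sa : ∀ x y, ⟪G x, y⟫_ℂ = ⟪x, G y⟫_ℂ
  sq : ∀ x, G (G x) = x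
  comm : ∀ (t : ℝ) (ξ), U t (G ξ) = G (U t ξ)
  ker : ∀ φ : Hs, (∀ t : ℝ, U t φ = φ) → φ = 0
  dyn : ∀ (t : ℝ) (φ), d.α t (r.c φ) = r.c (U t φ)
  grad : ∀ φ, γ (r.c φ) = r.c (G φ)

theorem TSys.trivial {r : CARrep Hs A} {U : ℝ → Hs ≃ₗᵢ[ℂ] Hs} {d : Dynamics A} {G : Hs →L[ℂ] Hs}
    {γ : A ≃⋆ₐ[ℂ] A} (h : TSys r U d G γ) :
    TSys r U d (ContinuousLinearMap.id ℂ Hs) (StarAlgEquiv.refl ℂ A) where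
  u := h.u
  sa := fun _ _ => rfl
  sq := fun _ => rfl
  comm := fun _ _ => rfl
  ker := h.ker
  dyn := h.dyn
  grad := fun _ => rfl

section
variable {r : CARrep Hs A} {U : ℝ → Hs ≃ₗᵢ[ℂ] Hs} {d : Dynamics A} {G : Hs →L[ℂ] Hs}
    {γ : A ≃⋆ₐ[ℂ] A}

theorem an_cs (h : TSys r U d G γ) {ψ : Hs} {f : ℂ → Hs} (hf : EV U ψ f) :
    d.IsAnalyticExt (star (r.c ψ)) (fun z => star (r.c (f z))) := by
  refine ⟨(cs r).differentiable.comp hf.1, fun t => ?_⟩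
  simp only [hf.2, map_star, h.dyn]

theorem an_c (h : TSys r U d G γ) {ψ : Hs} {f : ℂ → Hs} (hf : EV U ψ f) :
    d.IsAnalyticExt (r.c ψ) (fun z => r.c (f (starRingEnd ℂ z))) := by
  refine ⟨?_, fun t => ?_⟩
  · intro z
    have h1 := ((an_cs h hf).1 (starRingEnd ℂ z)).star_conj
    simpa [Function.comp_def] using h1
  · simp only [Complex.conj_ofReal, hf.2, h.dyn]

theorem an_add {a b : A} {f g : ℂ → A} (hf : d.IsAnalyticExt a f) (hg : d.IsAnalyticExt b g) :
    d.IsAnalyticExt (a + b) (fun z => f z + g z) :=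
  ⟨hf.1.add hg.1, fun t => by simp [hf.2, hg.2]⟩

theorem an_mul {a b : A} {f g : ℂ → A} (hf : d.IsAnalyticExt a f) (hg : d.IsAnalyticExt b g) :
    d.IsAnalyticExt (a * b) (fun z => f z * g z) :=
  ⟨hf.1.mul hg.1, fun t => by simp [hf.2, hg.2]⟩

theorem an_const {a : A} (ha : ∀ t, d.α t a = a) : d.IsAnalyticExt a (fun _ => a) :=
  ⟨differentiable_const _, fun t => by simp [ha]⟩

theorem al_algebraMap (t : ℝ) (z : ℂ) : d.α t (algebraMap ℂ A z) = algebraMap ℂ A z := by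
  rw [Algebra.algebraMap_eq_smul_one, map_smul, map_one]

/-- Analytic elements are dense. -/
theorem an_dense [CompleteSpace Hs] (h : TSys r U d G γ) (a : A) :
    a ∈ closure {b | ∃ f, d.IsAnalyticExt b f} := by
  refine dense_induction r (P := fun a => a ∈ closure {b | ∃ f, d.IsAnalyticExt b f})
    isClosed_closure ?_ ?_ ?_ ?_ ?_ a
  · intro φ
    exact map_mem_closure (c_cont r) (ev_dense h.u φ) fun ψ ⟨f, hf⟩ => ⟨_, an_c h hf⟩
  · intro φ
    exact map_mem_closure (f := fun φ => star (r.c φ)) (c_cont r).star (ev_dense h.u φ) fun ψ ⟨f, hf⟩ => ⟨_, an_cs h hf⟩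
  · intro z
    exact subset_closure ⟨_, an_const fun t => al_algebraMap t z⟩
  · intro a b ha hb
    exact map_mem_closure₂ continuous_add ha hb
      fun x ⟨f, hf⟩ y ⟨g, hg⟩ => ⟨_, an_add hf hg⟩
  · intro a b ha hb
    exact map_mem_closure₂ continuous_mul ha hb
      fun x ⟨f, hf⟩ y ⟨g, hg⟩ => ⟨_, an_mul hf hg⟩

theorem gamma_cont (γ : A ≃⋆ₐ[ℂ] A) : Continuous γ :=
  (AddMonoidHomClass.isometry_of_norm γ (fun a => NonUnitalStarAlgHom.norm_map γ γ.injective a)).continuous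

theorem gamma_sq (h : TSys r U d G γ) (a : A) : γ (γ a) = a := by
  refine dense_induction r (P := fun a => γ (γ a) = a)
    (isClosed_eq ((gamma_cont γ).comp (gamma_cont γ)) continuous_id) ?_ ?_ ?_ ?_ ?_ a
  · intro φ; simp [h.grad, h.sq]
  · intro φ; simp [map_star, h.grad, h.sq]
  · intro z; simp [Algebra.algebraMap_eq_smul_one]
  · intro a b ha hb; simp [ha, hb]
  · intro a b ha hb; simp [ha, hb]

/-- `ρ` is a bounded hermitian twisted KMS functional. -/
structure BKMS (d : Dynamics A) (γ : A ≃⋆ₐ[ℂ] A) (β : ℝ) (ρ : A → ℂ) : Prop where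
  kms : d.IsTwistedKMS γ β ρ
  herm : IsHermitian ρ
  bd : ∀ a, ‖ρ a‖ ≤ ‖a‖

variable {β : ℝ} {ρ : A → ℂ}

theorem BKMS.lin (hρ : BKMS d γ β ρ) : IsLinearMap ℂ ρ := hρ.kms.1

theorem BKMS.cont (hρ : BKMS d γ β ρ) : Continuous ρ := lin_continuous hρ.lin hρ.bd

theorem BKMS.of_dom {ω : A → ℂ} (hω : IsState ω) (hρ : TwistedKMSDom d γ β ω ρ) :
    BKMS d γ β ρ :=
  ⟨hρ.1, hρ.2.1, dom_norm_le hω hρ.2.2⟩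

theorem BKMS.of_kms {ω : A → ℂ} (hω : d.IsKMS β ω) : BKMS d (StarAlgEquiv.refl ℂ A) β ω :=
  ⟨⟨hω.1.1, hω.2⟩, state_star hω.1, state_norm_le hω.1⟩

theorem BKMS.rel [CompleteSpace Hs] (h : TSys r U d G γ) (hρ : BKMS d γ β ρ) {b : A} {f : ℂ → A}
    (hb : d.IsAnalyticExt b f) (a : A) : ρ (a * f (Complex.I * β)) = ρ (b * γ a) := by
  have hcl : IsClosed {a | ρ (a * f (Complex.I * β)) = ρ (b * γ a)} :=
    isClosed_eq (hρ.cont.comp (continuous_mul_const _))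
      (hρ.cont.comp ((continuous_const_mul b).comp (gamma_cont γ)))
  exact closure_minimal (s := {b | ∃ f, d.IsAnalyticExt b f})
    (fun x ⟨g, hg⟩ => hρ.kms.2 _ _ _ _ hg hb) hcl (an_dense h a)

theorem BKMS.inv [CompleteSpace Hs] (h : TSys r U d G γ) (hρ : BKMS d γ β ρ) (a : A) :
    ρ (γ a) = ρ a := by
  have := hρ.rel h (an_const (d := d) (a := 1) (fun t => map_one _)) a
  simpa using this.symm

/-- Cyclicity for annihilators. -/
theorem BKMS.rel_c [CompleteSpace Hs] (h : TSys r U d G γ) (hρ : BKMS d γ β ρ) {ψ : Hs}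
    {f : ℂ → Hs} (hf : EV U ψ f) (X : A) :
    ρ (X * r.c (G (f (-(Complex.I) * β)))) = ρ (r.c ψ * X) := by
  have h1 := hρ.rel h (an_c h hf) (γ X)
  rw [gamma_sq h] at h1
  have e : starRingEnd ℂ (Complex.I * β) = -(Complex.I) * β := by simp
  simp only [e] at h1
  rw [← h1, ← hρ.inv h, map_mul, h.grad, h.sq]

theorem BKMS.rel_cs [CompleteSpace Hs] (h : TSys r U d G γ) (hρ : BKMS d γ β ρ) {ψ : Hs}
    {f : ℂ → Hs} (hf : EV U ψ f) (X : A) :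
    ρ (X * star (r.c ψ)) = ρ (star (r.c (G (f (-(Complex.I) * β)))) * X) := by
  have h1 := hρ.rel h (an_cs h ((hf.shift h.u (-(Complex.I) * β)).map G h.comm)) (γ X)
  rw [gamma_sq h] at h1
  have e : Complex.I * β + -(Complex.I) * β = 0 := by ring
  simp only [e, hf.at_zero h.u] at h1
  rw [← h1, ← hρ.inv h, map_mul, map_star, h.grad]

end

end TK

namespace TK

open Filter Topology

variable {Hs : Type*} [NormedAddCommGroup Hs] [InnerProductSpace ℂ Hs] [CompleteSpace Hs]

/-! ### Wick recursion -/

section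
variable {r : CARrep Hs A} {U : ℝ → Hs ≃ₗᵢ[ℂ] Hs} {d : Dynamics A} {G : Hs →L[ℂ] Hs}
    {γ : A ≃⋆ₐ[ℂ] A} {β : ℝ} {ρ : A → ℂ}

theorem wick_c (h : TSys r U d G γ) (hρ : BKMS d γ β ρ) {ψ : Hs}
    {f : ℂ → Hs} (hf : EV U ψ f) (L : List Hs) :
    ρ (r.c (G (f (-(Complex.I) * β))) * r.fieldProd L) =
      ∑ j ∈ Finset.range L.length, ((-1 : ℂ) ^ j * ⟪G (f (-(Complex.I) * β)), L.getD j 0⟫_ℂ) *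
        ρ (r.fieldProd (L.eraseIdx j)) + (-1 : ℂ) ^ L.length * ρ (r.c ψ * r.fieldProd L) := by
  rw [move_through r _ (fun x => ⟪G (f (-(Complex.I) * β)), x⟫_ℂ) (fun x => c_anti r _ x) L,
    hρ.lin.map_add, lin_sum hρ.lin, hρ.lin.map_smul, hρ.rel_c h hf]
  simp only [hρ.lin.map_smul, smul_eq_mul]

theorem wick_cs (h : TSys r U d G γ) (hρ : BKMS d γ β ρ) {ψ : Hs}
    {f : ℂ → Hs} (hf : EV U ψ f) (L : List Hs) :
    ρ (star (r.c ψ) * r.fieldProd L) =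
      ∑ j ∈ Finset.range L.length, ((-1 : ℂ) ^ j * ⟪L.getD j 0, ψ⟫_ℂ) *
        ρ (r.fieldProd (L.eraseIdx j)) +
        (-1 : ℂ) ^ L.length * ρ (star (r.c (G (f (-(Complex.I) * β)))) * r.fieldProd L) := by
  rw [move_through r _ (fun x => ⟪x, ψ⟫_ℂ) (fun x => cs_anti r _ x) L,
    hρ.lin.map_add, lin_sum hρ.lin, hρ.lin.map_smul, hρ.rel_cs h hf]
  simp only [hρ.lin.map_smul, smul_eq_mul]

theorem wick_odd (h : TSys r U d G γ) (hρ : BKMS d γ β ρ) {ψ : Hs}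
    {f : ℂ → Hs} (hf : EV U ψ f) (L : List Hs) (hL : Odd L.length) :
    ρ (r.fieldProd ((ψ + G (f (-(Complex.I) * β))) :: L)) =
      ∑ j ∈ Finset.range L.length, ((-1 : ℂ) ^ j *
        (⟪L.getD j 0, ψ⟫_ℂ + ⟪G (f (-(Complex.I) * β)), L.getD j 0⟫_ℂ)) *
        ρ (r.fieldProd (L.eraseIdx j)) := by
  have h1 := wick_c h hρ hf L
  have h2 := wick_cs h hρ hf L
  rw [hL.neg_one_pow] at h1 h2
  simp only [mul_add, add_mul, Finset.sum_add_distrib]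
  rw [fieldProd_cons, Φ_add, CARrep.Φ, CARrep.Φ, add_mul, add_mul, add_mul]
  simp only [hρ.lin.map_add]
  rw [h1, h2]
  ring

theorem wick_even (h : TSys r U d G γ) (hρ : BKMS d γ β ρ) {ψ : Hs}
    {f : ℂ → Hs} (hf : EV U ψ f) (L : List Hs) (hL : Even L.length) :
    ρ (r.fieldProd ((ψ - G (f (-(Complex.I) * β))) :: L)) = Complex.I *
      ∑ j ∈ Finset.range L.length, ((-1 : ℂ) ^ j *
        (⟪L.getD j 0, -Complex.I • ψ⟫_ℂ + ⟪-Complex.I • G (f (-(Complex.I) * β)), L.getD j 0⟫_ℂ)) *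
        ρ (r.fieldProd (L.eraseIdx j)) := by
  have hf' := hf.smul (-Complex.I)
  have h1 := wick_c h hρ hf' L
  have h2 := wick_cs h hρ hf' L
  rw [hL.neg_one_pow, one_mul, map_smul] at h1 h2
  have h1' := sub_eq_of_eq_add h1
  have h2' := sub_eq_of_eq_add h2
  simp only [mul_add, add_mul, Finset.sum_add_distrib]
  rw [← mul_add, ← h1', ← h2', sub_eq_add_neg, fieldProd_cons, Φ_add, CARrep.Φ, CARrep.Φ,
    add_mul, add_mul, add_mul]
  simp only [hρ.lin.map_add, r.c_smul, star_smul, c_neg, star_neg, smul_mul_assoc,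
    hρ.lin.map_smul, neg_mul, hρ.lin.map_neg]
  simp
  ring_nf
  simp
  ring

theorem fieldProd_cont_head (L : List Hs) : Continuous fun ξ => r.fieldProd (ξ :: L) := by
  simp only [fieldProd_cons]
  exact (Φ_cont r).mul continuous_const

theorem length_erase {L : List Hs} {j : ℕ} (hj : j ∈ Finset.range L.length) :
    (L.eraseIdx j).length + 1 = L.length := by
  rw [Finset.mem_range] at hj
  rw [List.length_eraseIdx_of_lt hj]; omega

theorem odd_vanish (h : TSys r U d G γ) (hβ : β ≠ 0) (hρ : BKMS d γ β ρ) :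
    ∀ (n : ℕ) (L : List Hs), L.length = n → Odd L.length → ρ (r.fieldProd L) = 0 := by
  intro n
  induction n using Nat.strong_induction_on with
  | _ n ih =>
    intro L hn hodd
    match L with
    | [] => simp at hodd
    | ξ :: L =>
      have hL : Even L.length := by
        rw [List.length_cons] at hodd
        simpa [Nat.odd_add_one] using hodd
      have hcl : IsClosed {ξ | ρ (r.fieldProd (ξ :: L)) = 0} :=
        isClosed_eq (hρ.cont.comp (fieldProd_cont_head L)) continuous_const
      refine closure_minimal ?_ hcl (range_dense h.u h.ker (-G) (by simp [h.sq])
        (by simp [h.comm]) β hβ ξ)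
      rintro _ ⟨ψ, f, hf, rfl⟩
      have := wick_even h hρ hf L hL
      simp only [Set.mem_setOf_eq, ContinuousLinearMap.neg_apply, ← sub_eq_add_neg]
      rw [this, Finset.sum_eq_zero, mul_zero]
      intro j hj
      have hl := length_erase hj
      rw [ih _ (by rw [← hn, List.length_cons]; omega) _ rfl, mul_zero]
      rcases hL with ⟨k, hk⟩
      exact ⟨k - 1, by omega⟩

theorem zero_of_one (h : TSys r U d G γ) (hβ : β ≠ 0) (hρ : BKMS d γ β ρ) (h0 : ρ 1 = 0) :
    ρ = 0 := by
  have key : ∀ (n : ℕ) (L : List Hs), L.length = n → ρ (r.fieldProd L) = 0 := by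
    intro n
    induction n using Nat.strong_induction_on with
    | _ n ih =>
      intro L hn
      match L with
      | [] => rw [fieldProd_nil, h0]
      | ξ :: L =>
        rcases Nat.even_or_odd L.length with hL | hL
        · exact odd_vanish h hβ hρ _ _ rfl (by simpa using hL.add_one)
        have hcl : IsClosed {ξ | ρ (r.fieldProd (ξ :: L)) = 0} :=
          isClosed_eq (hρ.cont.comp (fieldProd_cont_head L)) continuous_const
        refine closure_minimal ?_ hcl (range_dense h.u h.ker G h.sq h.comm β hβ ξ)
        rintro _ ⟨ψ, f, hf, rfl⟩
        have := wick_odd h hρ hf L hL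
        simp only [Set.mem_setOf_eq]
        rw [this, Finset.sum_eq_zero]
        intro j hj
        have hl := length_erase hj
        rw [ih _ (by rw [← hn, List.length_cons]; omega) _ rfl, mul_zero]
  exact ext_fields r hρ.lin ⟨by simp, by simp⟩ hρ.cont continuous_const (fun L => key _ L rfl)

/-- `T` is the covariance operator `i(1 - G e^{βH₀})(1 + G e^{βH₀})⁻¹`. -/
structure TRel (U : ℝ → Hs ≃ₗᵢ[ℂ] Hs) (G : Hs →L[ℂ] Hs) (β : ℝ) (T : Hs →L[ℂ] Hs) : Prop where
  anti : ∀ x y, ⟪T x, y⟫_ℂ = -⟪x, T y⟫_ℂ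
  rel : ∀ (φ : Hs) (f : ℂ → Hs), EV U φ f →
    T (φ + G (f (-(Complex.I) * β))) = Complex.I • (φ - G (f (-(Complex.I) * β)))

theorem twoPt_rel {T : Hs →L[ℂ] Hs} (hT : TRel U G β T) {ψ : Hs} {f : ℂ → Hs} (hf : EV U ψ f)
    (η : Hs) : twoPt T (ψ + G (f (-(Complex.I) * β))) η =
      ⟪η, ψ⟫_ℂ + ⟪G (f (-(Complex.I) * β)), η⟫_ℂ := by
  have h1 := hT.anti (ψ + G (f (-(Complex.I) * β))) η
  rw [hT.rel _ _ hf] at h1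
  rw [twoPt, ← neg_neg (⟪_, T η⟫_ℂ), ← h1, ← inner_conj_symm η ψ]
  simp only [inner_add_left, inner_smul_left, inner_sub_left]
  have h2 : (⟪ψ, η⟫_ℂ).im = -(⟪η, ψ⟫_ℂ).im := by rw [← inner_conj_symm ψ η, Complex.conj_im]
  apply Complex.ext
  · have h3 : (⟪ψ, η⟫_ℂ).re = (⟪η, ψ⟫_ℂ).re := by rw [← inner_conj_symm ψ η, Complex.conj_re]
    simp [h3]
  · simp [h2]; ring

theorem twoPt_cont (T : Hs →L[ℂ] Hs) (η : Hs) : Continuous fun ξ => twoPt T ξ η := by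
  unfold twoPt
  fun_prop

theorem qfVal_nil (T : Hs →L[ℂ] Hs) : qfVal T [] = 1 := by rw [qfVal]

theorem qfVal_cons (T : Hs →L[ℂ] Hs) (ξ : Hs) (L : List Hs) :
    qfVal T (ξ :: L) = ∑ j ∈ Finset.range L.length,
      (-1 : ℂ) ^ j * twoPt T ξ (L.getD j 0) * qfVal T (L.eraseIdx j) := by rw [qfVal]

theorem qfVal_odd (T : Hs →L[ℂ] Hs) :
    ∀ (n : ℕ) (L : List Hs), L.length = n → Odd L.length → qfVal T L = 0 := by
  intro n
  induction n using Nat.strong_induction_on with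
  | _ n ih =>
    intro L hn hodd
    match L with
    | [] => simp at hodd
    | ξ :: L =>
      rw [qfVal_cons, Finset.sum_eq_zero]
      intro j hj
      have hl := length_erase hj
      rw [ih _ (by rw [← hn, List.length_cons]; omega) _ rfl, mul_zero]
      rw [List.length_cons] at hodd
      rcases hodd with ⟨k, hk⟩
      exact ⟨k - 1, by omega⟩

theorem rho_qf (h : TSys r U d G γ) (hβ : β ≠ 0) (hρ : BKMS d γ β ρ) {T : Hs →L[ℂ] Hs}
    (hT : TRel U G β T) (L : List Hs) : ρ (r.fieldProd L) = ρ 1 * qfVal T L := by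
  have key : ∀ (n : ℕ) (L : List Hs), L.length = n → ρ (r.fieldProd L) = ρ 1 * qfVal T L := by
    intro n
    induction n using Nat.strong_induction_on with
    | _ n ih =>
      intro L hn
      match L with
      | [] => rw [fieldProd_nil, qfVal_nil, mul_one]
      | ξ :: L =>
        rcases Nat.even_or_odd L.length with hL | hL
        · rw [odd_vanish h hβ hρ _ _ rfl (by simpa using hL.add_one),
            qfVal_odd T _ _ rfl (by simpa using hL.add_one), mul_zero]
        have hcl : IsClosed {ξ | ρ (r.fieldProd (ξ :: L)) = ρ 1 * qfVal T (ξ :: L)} := by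
          refine isClosed_eq (hρ.cont.comp (fieldProd_cont_head L)) ?_
          simp only [qfVal_cons]
          have := twoPt_cont T
          fun_prop
        refine closure_minimal ?_ hcl (range_dense h.u h.ker G h.sq h.comm β hβ ξ)
        rintro _ ⟨ψ, f, hf, rfl⟩
        have := wick_odd h hρ hf L hL
        simp only [Set.mem_setOf_eq]
        rw [this, qfVal_cons, Finset.mul_sum]
        refine Finset.sum_congr rfl fun j hj => ?_
        have hl := length_erase hj
        rw [ih _ (by rw [← hn, List.length_cons]; omega) _ rfl, twoPt_rel hT hf]
        ring
  exact key _ L rfl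

/-! ### Existence of `T` -/

theorem exists_T (h : TSys r U d G γ) (hβ : β ≠ 0) (hρ : BKMS d γ β ρ) (h1 : ρ 1 ≠ 0) :
    ∃ T : Hs →L[ℂ] Hs, TRel U G β T := by
  have hre : starRingEnd ℂ (ρ 1) = ρ 1 := by rw [← hρ.herm, star_one]
  -- `⟪φ, S ψ⟫ = ρ (a*(ψ) a(φ)) / ρ 1`
  set B : Hs →L⋆[ℂ] Hs →L[ℂ] ℂ := LinearMap.mkContinuous₂
    (LinearMap.mk₂'ₛₗ (starRingEnd ℂ) (RingHom.id ℂ)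
      (fun φ ψ => (ρ 1)⁻¹ * ρ (star (r.c ψ) * r.c φ))
      (fun x y z => by simp only [r.c_add, mul_add, hρ.lin.map_add])
      (fun c x y => by simp only [r.c_smul, mul_smul_comm, hρ.lin.map_smul, smul_eq_mul]; ring)
      (fun x y z => by simp only [r.c_add, star_add, add_mul, hρ.lin.map_add, mul_add])
      (fun c x y => by
        simp only [r.c_smul, star_smul, smul_mul_assoc, hρ.lin.map_smul, smul_eq_mul,
          RingHom.id_apply]
        simp; ring)) ‖(ρ 1)⁻¹‖ (fun x y => by
        simp only [LinearMap.mk₂'ₛₗ_apply, norm_mul]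
        have := hρ.bd (star (r.c y) * r.c x)
        have h2 := norm_mul_le (star (r.c y)) (r.c x)
        rw [norm_star] at h2
        have h3 : ‖r.c y‖ * ‖r.c x‖ ≤ ‖y‖ * ‖x‖ := by
          gcongr <;> exact norm_c_le r _
        rw [mul_assoc]
        gcongr
        linarith) with hB
  have hBa : ∀ φ ψ, B φ ψ = (ρ 1)⁻¹ * ρ (star (r.c ψ) * r.c φ) := fun φ ψ => rfl
  set S := InnerProductSpace.continuousLinearMapOfBilin B with hS
  have hSa : ∀ φ ψ, ⟪S φ, ψ⟫_ℂ = (ρ 1)⁻¹ * ρ (star (r.c ψ) * r.c φ) := by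
    intro φ ψ
    rw [hS, InnerProductSpace.continuousLinearMapOfBilin_apply, hBa]
  have hSs : ∀ φ ψ, ⟪S φ, ψ⟫_ℂ = ⟪φ, S ψ⟫_ℂ := by
    intro φ ψ
    rw [← inner_conj_symm φ, hSa, hSa, map_mul, map_inv₀, hre, ← hρ.herm, star_mul, star_star]
  have hSr : ∀ ψ f, EV U ψ f → S (ψ + G (f (-(Complex.I) * β))) = ψ := by
    intro ψ f hf
    refine ext_inner_left ℂ fun x => ?_
    rw [← hSs, hSa, r.c_add, star_add, add_mul, hρ.lin.map_add]
    have e1 := hρ.rel_cs h hf (r.c x)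
    rw [← e1, ← hρ.lin.map_add, r.car₁, hρ.lin.map_smul, smul_eq_mul]
    field_simp
  refine ⟨-Complex.I • (ContinuousLinearMap.id ℂ Hs - (2 : ℂ) • S), ⟨fun x y => ?_, fun ψ f hf => ?_⟩⟩
  · simp [inner_smul_left, inner_smul_right, inner_sub_left, inner_sub_right, hSs, Complex.conj_ofNat]
  · have := hSr ψ f hf
    show (-Complex.I) • ((ψ + G (f (-(Complex.I) * β))) - (2 : ℂ) • S (ψ + G (f (-(Complex.I) * β))))
      = _
    rw [this, neg_smul, ← smul_neg]
    congr 1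
    rw [two_smul]; abel

theorem T_unique (h : TSys r U d G γ) (hβ : β ≠ 0) {S : Hs →L[ℂ] Hs} {T : Hs →L[ℂ] Hs}
    (hS : ∀ ψ f, EV U ψ f → S (ψ + G (f (-(Complex.I) * β))) =
      T (ψ + G (f (-(Complex.I) * β)))) (x : Hs) : S x = T x := by
  have hcl : IsClosed {x | S x = T x} := isClosed_eq S.continuous T.continuous
  refine closure_minimal ?_ hcl (range_dense h.u h.ker G h.sq h.comm β hβ x)
  rintro _ ⟨ψ, f, hf, rfl⟩
  exact hS ψ f hf

theorem T_comm (h : TSys r U d G γ) (hβ : β ≠ 0) {T : Hs →L[ℂ] Hs} (hT : TRel U G β T)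
    (B : Hs →L[ℂ] Hs) (hB : ∀ t ξ, U t (B ξ) = B (U t ξ)) (hBG : ∀ x, B (G x) = G (B x)) (x : Hs) :
    T (B x) = B (T x) := by
  refine T_unique h hβ (S := T.comp B) (T := B.comp T) (fun ψ f hf => ?_) x
  have h1 := hT.rel _ _ (hf.map B hB)
  rw [ContinuousLinearMap.comp_apply, ContinuousLinearMap.comp_apply, hT.rel _ _ hf, map_add,
    map_smul, map_sub, hBG, h1]

end

end TK

namespace TK

open Filter Topology

variable {Hs : Type*} [NormedAddCommGroup Hs] [InnerProductSpace ℂ Hs] [CompleteSpace Hs]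

/-! ### The reflections `gam ξ = 1 - 2 a*(ξ) a(ξ)` -/

def gam (r : CARrep Hs A) (ξ : Hs) : A := 1 - (2 : ℂ) • (star (r.c ξ) * r.c ξ)

theorem gam_star (r : CARrep Hs A) (ξ : Hs) : star (gam r ξ) = gam r ξ := by
  simp [gam, star_smul, Complex.conj_ofNat]

theorem car_unit (r : CARrep Hs A) {ξ : Hs} (hξ : ‖ξ‖ = 1) :
    star (r.c ξ) * r.c ξ + r.c ξ * star (r.c ξ) = 1 := by
  rw [r.car₁, inner_self_eq_norm_sq_to_K, hξ]; simp

theorem gam_word (r : CARrep Hs A) {ξ : Hs} (hξ : ‖ξ‖ = 1) :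
    gam r ξ = -Complex.I • r.fieldProd [ξ, Complex.I • ξ] := by
  rw [fieldProd_cons, fieldProd_cons, fieldProd_nil, mul_one, CARrep.Φ, CARrep.Φ, r.c_smul,
    star_smul, gam, ← car_unit r hξ]
  have h1 := c_sq r ξ
  have h2 : star (r.c ξ) * star (r.c ξ) = 0 := by rw [← star_mul, h1, star_zero]
  simp only [add_mul, mul_add, mul_smul_comm, h1, h2, smul_add, smul_smul, smul_zero]
  simp [two_smul]
  abel

theorem ccc (r : CARrep Hs A) {ξ : Hs} (hξ : ‖ξ‖ = 1) :
    r.c ξ * (star (r.c ξ) * r.c ξ) = r.c ξ := by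
  have h1 := c_sq r ξ
  have e : r.c ξ * star (r.c ξ) = 1 - star (r.c ξ) * r.c ξ := by rw [← car_unit r hξ]; abel
  rw [← mul_assoc, e, sub_mul, mul_assoc, h1]; simp

theorem gam_sq (r : CARrep Hs A) {ξ : Hs} (hξ : ‖ξ‖ = 1) : gam r ξ * gam r ξ = 1 := by
  have h : (star (r.c ξ) * r.c ξ) * (star (r.c ξ) * r.c ξ) = star (r.c ξ) * r.c ξ := by
    rw [mul_assoc, ccc r hξ]
  rw [gam, sub_mul, mul_sub, mul_sub, smul_mul_smul_comm, h]
  rw [one_mul, one_mul, mul_one]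
  module

theorem norm_le_one_of_unitary {u : A} (h : star u * u = 1) : ‖u‖ ≤ 1 := by
  have h1 : ‖(1 : A)‖ * ‖(1 : A)‖ = ‖(1 : A)‖ := by
    rw [← CStarRing.norm_star_mul_self]; simp
  have h2 := CStarRing.norm_star_mul_self (x := u)
  rw [h] at h2
  have h3 : ‖(1 : A)‖ ≤ 1 := by
    by_contra hc
    push Not at hc
    nlinarith
  nlinarith [norm_nonneg u]

theorem gam_norm (r : CARrep Hs A) {ξ : Hs} (hξ : ‖ξ‖ = 1) : ‖gam r ξ‖ ≤ 1 :=
  norm_le_one_of_unitary (by rw [gam_star, gam_sq r hξ])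

theorem gam_c (r : CARrep Hs A) {ξ : Hs} (hξ : ‖ξ‖ = 1) (x : Hs) :
    gam r ξ * r.c x = r.c (x - (2 * ⟪ξ, x⟫_ℂ) • ξ) * gam r ξ := by
  have h1 : r.c ξ * r.c x = - (r.c x * r.c ξ) := eq_neg_of_add_eq_zero_left (r.car₂ ξ x)
  have h2 : star (r.c ξ) * r.c x = ⟪x, ξ⟫_ℂ • (1 : A) - r.c x * star (r.c ξ) :=
    eq_sub_of_add_eq (r.car₁ ξ x)
  have h3 : r.c ξ * gam r ξ = - r.c ξ := by
    rw [gam, mul_sub, mul_smul_comm, ccc r hξ, mul_one, two_smul]; abel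
  rw [c_sub, sub_mul, r.c_smul, smul_mul_assoc, h3, gam, sub_mul, mul_sub, smul_mul_assoc,
    mul_assoc, h1, mul_neg, ← mul_assoc, h2, sub_mul, map_mul, inner_conj_symm, Complex.conj_ofNat]
  simp only [smul_mul_assoc, one_mul, mul_one, mul_smul_comm, smul_neg, smul_sub, smul_smul,
    mul_assoc, sub_neg_eq_add]
  abel

theorem gam_cs (r : CARrep Hs A) {ξ : Hs} (hξ : ‖ξ‖ = 1) (x : Hs) :
    gam r ξ * star (r.c x) = star (r.c (x - (2 * ⟪ξ, x⟫_ℂ) • ξ)) * gam r ξ := by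
  have h := congrArg (fun a => gam r ξ * star a * gam r ξ) (gam_c r hξ x)
  simp only [star_mul, gam_star] at h
  have hs := gam_sq r hξ
  have e1 : gam r ξ * (star (r.c x) * gam r ξ) * gam r ξ = gam r ξ * star (r.c x) := by
    rw [mul_assoc, mul_assoc, hs, mul_one]
  rw [e1, ← mul_assoc, hs, one_mul] at h
  exact h

theorem gam_phase (r : CARrep Hs A) (ξ : Hs) (z : ℂ) (hz : ‖z‖ = 1) : gam r (z • ξ) = gam r ξ := by
  rw [gam, gam, r.c_smul, star_smul, smul_mul_smul_comm]
  have : star (starRingEnd ℂ z) * (starRingEnd ℂ) z = 1 := by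
    have h2 : (starRingEnd ℂ) z * z = 1 := by
      rw [← Complex.normSq_eq_conj_mul_self, Complex.normSq_eq_norm_sq, hz]; simp
    rw [← h2]; simp [mul_comm]
  rw [this, one_smul]

theorem gam_comm (r : CARrep Hs A) {ξ η : Hs} (hξ : ‖ξ‖ = 1) (h : ⟪ξ, η⟫_ℂ = 0) :
    gam r ξ * gam r η = gam r η * gam r ξ := by
  have h1 := gam_c r hξ η
  have h2 := gam_cs r hξ η
  simp only [h, mul_zero, zero_smul, sub_zero] at h1 h2
  have : gam r ξ * (star (r.c η) * r.c η) = (star (r.c η) * r.c η) * gam r ξ := by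
    rw [← mul_assoc, h2, mul_assoc, h1, mul_assoc]
  conv_lhs => rw [gam.eq_def r η]
  conv_rhs => rw [gam.eq_def r η]
  rw [mul_sub, sub_mul, mul_smul_comm, smul_mul_assoc, this, mul_one, one_mul]

/-! ### Expectation values -/

theorem twoPt_I (T : Hs →L[ℂ] Hs) (ξ η : Hs) :
    twoPt T ξ (Complex.I • η) = -((⟪ξ, η⟫_ℂ).im : ℂ) - Complex.I * ((⟪ξ, T η⟫_ℂ).im : ℂ) := by
  rw [twoPt, map_smul, inner_smul_right, inner_smul_right]
  simp
  ring

theorem twoPt_I' (T : Hs →L[ℂ] Hs) (ξ η : Hs) :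
    twoPt T (Complex.I • ξ) η = ((⟪ξ, η⟫_ℂ).im : ℂ) + Complex.I * ((⟪ξ, T η⟫_ℂ).im : ℂ) := by
  rw [twoPt, inner_smul_left, inner_smul_left]
  simp

theorem twoPt_II (T : Hs →L[ℂ] Hs) (ξ η : Hs) :
    twoPt T (Complex.I • ξ) (Complex.I • η) = twoPt T ξ η := by
  rw [twoPt_I', map_smul, inner_smul_right, inner_smul_right, twoPt]
  simp

theorem qf_pair (T : Hs →L[ℂ] Hs) (ξ η : Hs) (L : List Hs) (h : ∀ x ∈ L, twoPt T ξ x = 0) :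
    qfVal T (ξ :: η :: L) = twoPt T ξ η * qfVal T L := by
  rw [qfVal_cons, List.length_cons, Finset.sum_range_succ', Finset.sum_eq_zero]
  · simp
  · intro j hj
    rw [Finset.mem_range] at hj
    have : twoPt T ξ ((η :: L).getD (j + 1) 0) = 0 := by
      rw [List.getD_cons_succ, List.getD_eq_getElem _ _ hj]
      exact h _ (List.getElem_mem hj)
    rw [this]; ring

theorem qf2 (T : Hs →L[ℂ] Hs) (ξ η : Hs) : qfVal T [ξ, η] = twoPt T ξ η := by
  rw [qf_pair T ξ η [] (by simp), qfVal_nil, mul_one]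

theorem qf4 (T : Hs →L[ℂ] Hs) (a b c d : Hs) : qfVal T [a, b, c, d] =
    twoPt T a b * twoPt T c d - twoPt T a c * twoPt T b d + twoPt T a d * twoPt T b c := by
  rw [qfVal_cons]
  simp [Finset.sum_range_succ, qf2]
  ring

/-- The word `ξ₁, iξ₁, ξ₂, iξ₂, …`. -/
def dbl : List Hs → List Hs
  | [] => []
  | x :: l => x :: (Complex.I • x) :: dbl l

theorem mem_dbl {l : List Hs} {y : Hs} (h : y ∈ dbl l) : ∃ x ∈ l, y = x ∨ y = Complex.I • x := by
  induction l with
  | nil => simp [dbl] at h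
  | cons x l ih =>
    simp only [dbl, List.mem_cons] at h
    rcases h with h | h | h
    · exact ⟨x, by simp, Or.inl h⟩
    · exact ⟨x, by simp, Or.inr h⟩
    · obtain ⟨z, hz, h⟩ := ih h
      exact ⟨z, by simp [hz], h⟩

theorem gamProd_word (r : CARrep Hs A) (l : List Hs) (hl : ∀ x ∈ l, ‖x‖ = 1) :
    (l.map (gam r)).prod = (-Complex.I) ^ l.length • r.fieldProd (dbl l) := by
  induction l with
  | nil => simp [dbl, fieldProd_nil]
  | cons x l ih =>
    rw [List.map_cons, List.prod_cons, ih (fun y hy => hl y (by simp [hy])),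
      gam_word r (hl x (by simp)), smul_mul_smul_comm, List.length_cons, pow_succ', dbl,
      show x :: (Complex.I • x) :: dbl l = [x, Complex.I • x] ++ dbl l from rfl, fieldProd_append]

/-- Values on products of reflections along eigenvectors of `T`. -/
theorem qf_dbl (T : Hs →L[ℂ] Hs) {e : ℕ → Hs} (he : Orthonormal ℂ e) {t : ℕ → ℝ}
    (hT : ∀ k, T (e k) = -(Complex.I * t k) • e k) (l : List ℕ) (hl : l.Nodup) :
    (-Complex.I) ^ l.length * qfVal T (dbl (l.map e)) = ((l.map t).prod : ℝ) := by
  induction l with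
  | nil => simp [dbl, qfVal_nil]
  | cons k l ih =>
    rw [List.nodup_cons] at hl
    have h0 : ∀ j, j ≠ k → ⟪e k, e j⟫_ℂ = 0 := fun j hj => he.2 hj.symm
    have h1 : ⟪e k, e k⟫_ℂ = 1 := by
      rw [inner_self_eq_norm_sq_to_K, he.1]; simp
    rw [List.map_cons, dbl, qf_pair, twoPt_I, hT, inner_smul_right, h1, List.length_cons, pow_succ',
      List.map_cons, List.prod_cons, Complex.ofReal_mul, ← ih hl.2]
    · simp
      ring_nf
      simp
    · intro y hy
      obtain ⟨x, hx, h⟩ := mem_dbl hy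
      obtain ⟨j, hj, rfl⟩ := List.mem_map.1 hx
      have hjk : j ≠ k := fun h => hl.1 (h ▸ hj)
      rcases h with rfl | rfl
      · rw [twoPt, hT, inner_smul_right, h0 j hjk]; simp
      · rw [twoPt_I, hT, inner_smul_right, h0 j hjk]; simp

end TK

namespace TK

open Filter Topology

variable {Hs : Type*} [NormedAddCommGroup Hs] [InnerProductSpace ℂ Hs] [CompleteSpace Hs]

section
variable {r : CARrep Hs A} {U : ℝ → Hs ≃ₗᵢ[ℂ] Hs} {d : Dynamics A} {G : Hs →L[ℂ] Hs}
    {γ : A ≃⋆ₐ[ℂ] A} {β : ℝ} {ρ ω : A → ℂ}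

theorem rho_gam (h : TSys r U d G γ) (hβ : β ≠ 0) (hρ : BKMS d γ β ρ) {T : Hs →L[ℂ] Hs}
    (hT : TRel U G β T) {ξ : Hs} (hξ : ‖ξ‖ = 1) :
    ρ (gam r ξ) = ρ 1 * (-(⟪ξ, T ξ⟫_ℂ).im : ℝ) := by
  have h1 : (⟪ξ, ξ⟫_ℂ).im = 0 := by rw [inner_self_eq_norm_sq_to_K, hξ]; simp
  rw [gam_word r hξ, hρ.lin.map_smul, rho_qf h hβ hρ hT, qf2, twoPt_I, h1, smul_eq_mul]
  simp
  ring_nf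
  simp

theorem rho_gam2 (h : TSys r U d G γ) (hβ : β ≠ 0) (hρ : BKMS d γ β ρ) {T : Hs →L[ℂ] Hs}
    (hT : TRel U G β T) {ξ η : Hs} (hξ : ‖ξ‖ = 1) (hη : ‖η‖ = 1) :
    ρ (gam r ξ * gam r η) = ρ 1 * ((-(⟪ξ, T ξ⟫_ℂ).im : ℝ) * (-(⟪η, T η⟫_ℂ).im : ℝ) +
      (twoPt T ξ η) ^ 2 + (twoPt T ξ (Complex.I • η)) ^ 2) := by
  have h1 : (⟪ξ, ξ⟫_ℂ).im = 0 := by rw [inner_self_eq_norm_sq_to_K, hξ]; simp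
  have h2 : (⟪η, η⟫_ℂ).im = 0 := by rw [inner_self_eq_norm_sq_to_K, hη]; simp
  rw [gam_word r hξ, gam_word r hη, smul_mul_smul_comm, ← fieldProd_append, hρ.lin.map_smul,
    rho_qf h hβ hρ hT, List.cons_append, List.cons_append, List.nil_append, qf4, twoPt_II,
    twoPt_I T ξ ξ, twoPt_I T η η, twoPt_I', twoPt_I, h1, h2, smul_eq_mul]
  simp
  ring_nf
  simp
  ring

theorem T_eig {T : Hs →L[ℂ] Hs} (hT : TRel U G β T) {e : Hs} {lam : ℝ} {g t : ℝ}
    (he : ∀ t : ℝ, U t e = Complex.exp (Complex.I * t * lam) • e) (hg : G e = (g : ℂ) • e)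
    (ht : t * (1 + g * Real.exp (β * lam)) = g * Real.exp (β * lam) - 1)
    (hne : 1 + g * Real.exp (β * lam) ≠ 0) :
    T e = -(Complex.I * t) • e := by
  have h1 := hT.rel _ _ (EV.eig he)
  have e1 : Complex.exp (Complex.I * (-Complex.I * β) * lam) = (Real.exp (β * lam) : ℂ) := by
    push_cast
    congr 1
    ring_nf
    simp
  simp only [e1] at h1
  rw [map_smul, hg, smul_smul] at h1
  have h2 : e + ((Real.exp (β * lam) : ℂ) * g) • e = ((1 + g * Real.exp (β * lam) : ℝ) : ℂ) • e := by
    push_cast; module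
  have h3 : e - ((Real.exp (β * lam) : ℂ) * g) • e =
      (-(t * (1 + g * Real.exp (β * lam)) : ℝ) : ℂ) • e := by
    rw [ht]; push_cast; module
  rw [h2, h3, map_smul, smul_smul] at h1
  have hne' : ((1 + g * Real.exp (β * lam) : ℝ) : ℂ) ≠ 0 := by exact_mod_cast hne
  have h4 := congrArg (fun x => ((1 + g * Real.exp (β * lam) : ℝ) : ℂ)⁻¹ • x) h1
  simp only [smul_smul, inv_mul_cancel₀ hne', one_smul] at h4
  rw [h4]
  congr 1
  rw [Complex.ofReal_mul]
  field_simp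

/-- Products of reflections. -/
def V (r : CARrep Hs A) (e : ℕ → Hs) : ℕ → A
  | 0 => 1
  | n + 1 => V r e n * gam r (e n)

theorem V_eq (e : ℕ → Hs) (n : ℕ) :
    V r e n = (((List.range n).map e).map (gam r)).prod := by
  induction n with
  | zero => simp [V]
  | succ n ih => simp [V, ih, List.range_succ]

theorem rho_V (h : TSys r U d G γ) (hβ : β ≠ 0) (hρ : BKMS d γ β ρ) {T : Hs →L[ℂ] Hs}
    (hT : TRel U G β T) {e : ℕ → Hs} (he : Orthonormal ℂ e) {t : ℕ → ℝ}
    (hTe : ∀ k, T (e k) = -(Complex.I * t k) • e k) (n : ℕ) :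
    ρ (V r e n) = ρ 1 * ((∏ k ∈ Finset.range n, t k : ℝ) : ℂ) := by
  rw [V_eq, gamProd_word r _ (by simp [he.1]), hρ.lin.map_smul, rho_qf h hβ hρ hT, smul_eq_mul]
  have := qf_dbl T he hTe (List.range n) List.nodup_range
  rw [List.length_map]
  have h2 : ∀ m, ((List.range m).map t).prod = ∏ k ∈ Finset.range m, t k := by
    intro m
    induction m with
    | zero => simp
    | succ m ih => simp [List.range_succ, Finset.prod_range_succ, ih]
  rw [← h2, ← this]
  ring

variable {e : ℕ → Hs}

theorem gam_gam_e (he : Orthonormal ℂ e) (j k : ℕ) :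
    gam r (e j) * gam r (e k) = gam r (e k) * gam r (e j) := by
  by_cases hjk : j = k
  · rw [hjk]
  · exact gam_comm r (he.1 j) (he.2 hjk)

theorem gam_V (he : Orthonormal ℂ e) (k n : ℕ) :
    gam r (e k) * V r e n = V r e n * gam r (e k) := by
  induction n with
  | zero => simp [V]
  | succ n ih => rw [V, ← mul_assoc, ih, mul_assoc, gam_gam_e he, mul_assoc]

theorem V_star (he : Orthonormal ℂ e) (n : ℕ) : star (V r e n) = V r e n := by
  induction n with
  | zero => simp [V]
  | succ n ih => rw [V, star_mul, ih, gam_star, gam_V he]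

theorem V_sq (he : Orthonormal ℂ e) (n : ℕ) : V r e n * V r e n = 1 := by
  induction n with
  | zero => simp [V]
  | succ n ih =>
    rw [V, mul_assoc, ← mul_assoc (gam r (e n)), gam_V he, mul_assoc, gam_sq r (he.1 n), mul_one, ih]

theorem V_norm (he : Orthonormal ℂ e) (n : ℕ) : ‖V r e n‖ ≤ 1 :=
  norm_le_one_of_unitary (by rw [V_star he, V_sq he])

theorem V_inv (h : TSys r U d G γ) {lam : ℕ → ℝ}
    (hU : ∀ (t : ℝ) (k), U t (e k) = Complex.exp (Complex.I * t * lam k) • e k) (t : ℝ) (n : ℕ) :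
    d.α t (V r e n) = V r e n := by
  induction n with
  | zero => simp [V]
  | succ n ih =>
    have : d.α t (gam r (e n)) = gam r (e n) := by
      have h1 : d.α t (gam r (e n)) = gam r (U t (e n)) := by
        simp only [gam, map_sub, map_one, map_smul, map_mul, map_star, h.dyn]
      rw [h1, hU, gam_phase]
      rw [mul_assoc, mul_comm, ← Complex.ofReal_mul]
      exact Complex.norm_exp_ofReal_mul_I _
    rw [V, map_mul, ih, this]

theorem V_c_even (he : Orthonormal ℂ e) {x : Hs} (hx : ∀ k, ⟪e k, x⟫_ℂ = 0) (n : ℕ) :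
    V r e n * r.c x = r.c x * V r e n := by
  induction n with
  | zero => simp [V]
  | succ n ih =>
    have := gam_c r (he.1 n) x
    rw [hx n] at this
    simp only [mul_zero, zero_smul, sub_zero] at this
    rw [V, mul_assoc, this, ← mul_assoc, ih, mul_assoc]

theorem gam_c_e (he : Orthonormal ℂ e) (k n : ℕ) :
    gam r (e n) * r.c (e k) = (if k = n then (-1 : ℂ) else 1) • (r.c (e k) * gam r (e n)) := by
  rw [gam_c r (he.1 n)]
  by_cases hk : k = n
  · subst hk
    have h1 : ⟪e k, e k⟫_ℂ = 1 := by rw [inner_self_eq_norm_sq_to_K, he.1]; simp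
    rw [h1, show e k - (2 * 1 : ℂ) • e k = - e k by module, c_neg]; simp
  · rw [he.2 (Ne.symm hk)]; simp [hk]

theorem V_c_e (he : Orthonormal ℂ e) (k n : ℕ) :
    V r e n * r.c (e k) = (if k < n then (-1 : ℂ) else 1) • (r.c (e k) * V r e n) := by
  induction n with
  | zero => simp [V]
  | succ n ih =>
    rw [V, mul_assoc, gam_c_e he, mul_smul_comm, ← mul_assoc, ih, smul_mul_assoc, smul_smul,
      mul_assoc]
    congr 1
    split_ifs <;> first | omega | simp

/-- Conjugation by `V n` converges to the grading. -/
theorem V_conv (h : TSys r U d G γ) (he : Orthonormal ℂ e) (heo : ∀ k, G (e k) = -e k)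
    (hsp : ∀ φ : Hs, G φ = -φ →
      φ ∈ closure ((Submodule.span ℂ (Set.range e) : Submodule ℂ Hs) : Set Hs)) (a : A) :
    Tendsto (fun n => V r e n * a * V r e n) atTop (𝓝 (γ a)) := by
  set P : A → Prop := fun a => Tendsto (fun n => V r e n * a * V r e n) atTop (𝓝 (γ a)) with hP
  have hcl : IsClosed {a | P a} := by
    apply isClosed_of_closure_subset
    intro a ha
    rw [Metric.mem_closure_iff] at ha
    show Tendsto _ _ _
    rw [Metric.tendsto_atTop]
    intro ε hε
    obtain ⟨x, hx, hax⟩ := ha (ε / 4) (by positivity)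
    have hx' : Tendsto (fun n => V r e n * x * V r e n) atTop (𝓝 (γ x)) := hx
    rw [Metric.tendsto_atTop] at hx'
    obtain ⟨N, hN⟩ := hx' (ε / 4) (by positivity)
    refine ⟨N, fun n hn => ?_⟩
    have h1 := hN n hn
    rw [dist_eq_norm] at h1 hax ⊢
    have h2 : ‖V r e n * (a - x) * V r e n‖ ≤ ‖a - x‖ := by
      have hv := V_norm (r := r) he n
      calc _ ≤ ‖V r e n‖ * ‖a - x‖ * ‖V r e n‖ := by
            refine (norm_mul_le _ _).trans ?_
            gcongr
            exact norm_mul_le _ _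
        _ ≤ 1 * ‖a - x‖ * 1 := by gcongr
        _ = _ := by ring
    have h3 : ‖γ (x - a)‖ = ‖a - x‖ := by
      rw [norm_sub_rev a x]
      exact NonUnitalStarAlgHom.norm_map γ γ.injective _
    have h4 : V r e n * a * V r e n - γ a =
        V r e n * (a - x) * V r e n + (V r e n * x * V r e n - γ x) + γ (x - a) := by
      rw [map_sub]; noncomm_ring
    rw [h4]
    calc _ ≤ ‖V r e n * (a - x) * V r e n‖ + ‖V r e n * x * V r e n - γ x‖ + ‖γ (x - a)‖ :=
          norm_add₃_le
      _ < ε := by rw [h3]; linarith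
  have hadd : ∀ a b, P a → P b → P (a + b) := by
    intro a b ha hb
    have := Tendsto.add ha hb
    simpa only [hP, mul_add, add_mul, map_add] using this
  have hsm : ∀ (z : ℂ) a, P a → P (z • a) := by
    intro z a ha
    have := Tendsto.const_smul ha z
    simpa only [hP, mul_smul_comm, smul_mul_assoc, map_smul] using this
  have hstar : ∀ a, P a → P (star a) := by
    intro a ha
    have := Tendsto.star ha
    simpa only [hP, star_mul, V_star he, map_star, mul_assoc] using this
  have hev : ∀ x, G x = x → P (r.c x) := by
    intro x hx
    have h0 : ∀ k, ⟪e k, x⟫_ℂ = 0 := by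
      intro k
      have := h.sa (e k) x
      rw [hx, heo, inner_neg_left] at this
      have h2 : (2 : ℂ) * ⟪e k, x⟫_ℂ = 0 := by linear_combination -this
      simpa using h2
    show Tendsto (fun n => V r e n * r.c x * V r e n) atTop (𝓝 (γ (r.c x)))
    rw [h.grad, hx]
    refine tendsto_const_nhds.congr fun n => ?_
    rw [V_c_even he h0, mul_assoc, V_sq he, mul_one]
  have hbas : ∀ k, P (r.c (e k)) := by
    intro k
    show Tendsto (fun n => V r e n * r.c (e k) * V r e n) atTop (𝓝 (γ (r.c (e k))))
    rw [h.grad, heo, c_neg]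
    refine tendsto_const_nhds.congr' ?_
    filter_upwards [eventually_gt_atTop k] with n hn
    rw [V_c_e he, smul_mul_assoc, mul_assoc, V_sq he, mul_one]
    simp [hn]
  have hodd : ∀ x, G x = -x → P (r.c x) := by
    intro x hx
    refine closure_minimal (t := {x | P (r.c x)}) ?_ (hcl.preimage (c_cont r)) (hsp x hx)
    intro y hy
    induction hy using Submodule.span_induction with
    | mem y hy => obtain ⟨k, rfl⟩ := hy; exact hbas k
    | zero => 
      have := hsm 0 _ (hbas 0)
      show P (r.c 0)
      rw [c_zero]; simpa using this
    | add x y _ _ hx hy =>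
      show P (r.c (x + y))
      rw [r.c_add]; exact hadd _ _ hx hy
    | smul z x _ hx =>
      show P (r.c (z • x))
      rw [r.c_smul]; exact hsm _ _ hx
  have hc : ∀ x, P (r.c x) := by
    intro x
    have e1 : x = (1 / 2 : ℂ) • (x + G x) + (1 / 2 : ℂ) • (x - G x) := by module
    rw [e1, r.c_add, r.c_smul, r.c_smul]
    refine hadd _ _ (hsm _ _ (hev _ ?_)) (hsm _ _ (hodd _ ?_))
    · rw [map_add, h.sq]; abel
    · rw [map_sub, h.sq]; abel
  refine dense_induction r (P := P) hcl hc (fun φ => hstar _ (hc φ)) ?_ hadd ?_ a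
  · intro z
    rw [Algebra.algebraMap_eq_smul_one]
    apply hsm
    show Tendsto (fun n => V r e n * 1 * V r e n) atTop (𝓝 (γ 1))
    rw [map_one]
    refine tendsto_const_nhds.congr fun n => ?_
    rw [mul_one, V_sq he]
  · intro a b ha hb
    have := Tendsto.mul ha hb
    simp only [hP]
    rw [map_mul]
    refine this.congr fun n => ?_
    have := V_sq (r := r) he n
    calc V r e n * a * V r e n * (V r e n * b * V r e n) =
        V r e n * a * (V r e n * V r e n) * b * V r e n := by noncomm_ring
      _ = _ := by rw [this, mul_one]; noncomm_ring

theorem exists_rho (h : TSys r U d G γ) (hω : d.IsKMS β ω) {lam : ℕ → ℝ}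
    (hE : EigenBasisOdd G U e lam) {p : ℕ → ℝ} (hp0 : ∀ n, p n ≠ 0)
    (hp : ∀ n, ω (V r e n) = p n) {c : ℝ} (hc : Tendsto (fun n => |p n|) atTop (𝓝 c)) :
    ∃ ρ, TwistedKMSDom d γ β ω ρ ∧ ρ 1 = c := by
  obtain ⟨he, heo, hsp, hU⟩ := hE
  have hS := hω.1
  have hB := BKMS.of_kms hω
  set σ : ℕ → ℂ := fun n => ((|p n| / p n : ℝ) : ℂ) with hσ
  have hσ1 : ∀ n, ‖σ n‖ = 1 := by
    intro n
    simp only [hσ, Complex.norm_real, norm_div, Real.norm_eq_abs, abs_abs]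
    exact div_self (abs_ne_zero.2 (hp0 n))
  have hσc : ∀ n, starRingEnd ℂ (σ n) = σ n := fun n => Complex.conj_ofReal _
  set F : ℕ → A → ℂ := fun n a => σ n * ω (a * V r e n) with hF
  have hcyc : ∀ n a, ω (a * V r e n) = ω (V r e n * a) := by
    intro n a
    have := hB.rel h.trivial (an_const (fun t => V_inv h hU t n)) a
    simpa using this
  have hbd : ∀ n a, ‖F n a‖ ≤ ‖a‖ := by
    intro n a
    simp only [hF, norm_mul, hσ1, one_mul]
    calc _ ≤ ‖a * V r e n‖ := state_norm_le hS _
      _ ≤ ‖a‖ * ‖V r e n‖ := norm_mul_le _ _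
      _ ≤ ‖a‖ * 1 := by gcongr; exact V_norm he n
      _ = _ := mul_one _
  set 𝓕 : Ultrafilter ℕ := hyperfilter ℕ with h𝓕
  have hle : (𝓕 : Filter ℕ) ≤ atTop := by
    rw [← Nat.cofinite_eq_atTop]; exact hyperfilter_le_cofinite
  have hex : ∀ a, ∃ z, Tendsto (fun n => F n a) 𝓕 (𝓝 z) := by
    intro a
    have hK : IsCompact (Metric.closedBall (0 : ℂ) ‖a‖) := isCompact_closedBall _ _
    obtain ⟨z, _, hz⟩ := hK.ultrafilter_le_nhds (𝓕.map (fun n => F n a)) (by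
      rw [le_principal_iff]
      exact Filter.mem_map.2 (Filter.univ_mem' fun n => by simpa using hbd n a))
    exact ⟨z, hz⟩
  choose ρ hρ using hex
  refine ⟨ρ, ⟨⟨⟨fun a b => ?_, fun z a => ?_⟩, fun a b fa fb ha hb => ?_⟩, fun a => ?_, ?_⟩, ?_⟩
  · refine tendsto_nhds_unique (hρ (a + b)) (((hρ a).add (hρ b)).congr fun n => ?_)
    simp only [hF, add_mul, hS.1.map_add]; ring
  · refine tendsto_nhds_unique (hρ (z • a)) (((hρ a).const_smul z).congr fun n => ?_)
    simp only [hF, smul_mul_assoc, hS.1.map_smul, smul_eq_mul]; ring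
  · refine tendsto_nhds_unique (hρ _) ?_
    have h1 : ∀ n, F n (a * fb (Complex.I * β)) = F n (b * γ a) +
        σ n * ω (b * (V r e n * a * V r e n - γ a) * V r e n) := by
      intro n
      have := hω.2 a (b * V r e n) fa _ ha (an_mul hb (an_const (fun t => V_inv h hU t n)))
      simp only [hF]
      rw [mul_assoc, this, ← mul_add, ← hS.1.map_add, ← add_mul, ← mul_add, add_sub_cancel]
      congr 2
      rw [mul_assoc, mul_assoc, mul_assoc, mul_assoc, V_sq he, mul_one]
    have h2 : Tendsto (fun n => σ n * ω (b * (V r e n * a * V r e n - γ a) * V r e n)) atTop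
        (𝓝 0) := by
      have h3 := ((V_conv h he heo hsp a).sub_const (γ a)).norm.const_mul ‖b‖
      rw [sub_self, norm_zero, mul_zero] at h3
      refine squeeze_zero_norm (fun n => ?_) h3
      exact (hbd n (b * (V r e n * a * V r e n - γ a))).trans (norm_mul_le _ _)
    have h4 := (hρ (b * γ a)).add (h2.mono_left hle)
    rw [add_zero] at h4
    exact h4.congr fun n => (h1 n).symm
  · refine tendsto_nhds_unique (hρ _) (((Complex.continuous_conj.tendsto _).comp (hρ a)).congr
      fun n => ?_)
    simp only [hF, Function.comp_apply, map_mul, hσc]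
    rw [← state_star hS, star_mul, V_star he, hcyc]
  · rw [dominated_iff hS]
    intro a b
    refine le_of_tendsto ((hρ (star a * b)).norm.pow 2) (Eventually.of_forall fun n => ?_)
    simp only [hF, norm_mul, hσ1, one_mul]
    rw [mul_assoc]
    refine (state_cs hS _ _).trans ?_
    rw [star_mul, V_star he, mul_assoc, ← hcyc, mul_assoc, mul_assoc, V_sq he, mul_one]
  · refine tendsto_nhds_unique (hρ 1) ?_
    have h1 : Tendsto (fun n => ((|p n| : ℝ) : ℂ)) atTop (𝓝 (c : ℂ)) :=
      (Complex.continuous_ofReal.tendsto c).comp hc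
    refine (h1.mono_left hle).congr fun n => ?_
    simp only [hF, one_mul, hp, hσ, ← Complex.ofReal_mul]
    rw [div_mul_cancel₀ _ (hp0 n)]

end

end TK

namespace TK

open Filter Topology

/-- The factor `(1 - e^{-|βλ|})/(1 + e^{-|βλ|})`. -/
def qq (β lam : ℝ) : ℝ := (1 - Real.exp (-|β * lam|)) / (1 + Real.exp (-|β * lam|))

/-- `tanh (βλ/2)`. -/
def tt (β lam : ℝ) : ℝ := (Real.exp (β * lam) - 1) / (Real.exp (β * lam) + 1)

theorem abs_tt (β lam : ℝ) : |tt β lam| = qq β lam := by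
  unfold tt qq
  have hE := Real.exp_pos (β * lam)
  rw [abs_div, abs_of_pos (by linarith : 0 < Real.exp (β * lam) + 1)]
  rcases le_total 0 (β * lam) with hs | hs
  · have h1 : 1 ≤ Real.exp (β * lam) := Real.one_le_exp hs
    rw [abs_of_nonneg hs, abs_of_nonneg (by linarith), Real.exp_neg]
    field_simp
  · have h1 : Real.exp (β * lam) ≤ 1 := Real.exp_le_one_iff.2 hs
    rw [abs_of_nonpos hs, abs_of_nonpos (by linarith), neg_neg]
    congr 1 <;> ring

theorem xx_lt {β lam : ℝ} (h : β * lam ≠ 0) : Real.exp (-|β * lam|) < 1 := by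
  rw [Real.exp_lt_one_iff]
  exact neg_neg_of_pos (abs_pos.2 h)

theorem qq_pos {β lam : ℝ} (h : β * lam ≠ 0) : 0 < qq β lam := by
  have := xx_lt h
  have := Real.exp_pos (-|β * lam|)
  unfold qq
  apply div_pos <;> linarith

theorem qq_nonneg (β lam : ℝ) : 0 ≤ qq β lam := by rw [← abs_tt]; exact abs_nonneg _

theorem qq_le (β lam : ℝ) : qq β lam ≤ 1 := by
  have := Real.exp_pos (-|β * lam|)
  unfold qq
  rw [div_le_one (by linarith)]
  linarith

theorem tt_ne {β lam : ℝ} (h : β * lam ≠ 0) : tt β lam ≠ 0 := by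
  rw [← abs_pos, abs_tt]; exact qq_pos h

theorem one_sub_qq_le (β lam : ℝ) : |qq β lam - 1| ≤ 2 * Real.exp (-|β * lam|) := by
  have := Real.exp_pos (-|β * lam|)
  rw [abs_of_nonpos (by linarith [qq_le β lam])]
  unfold qq
  rw [neg_sub, sub_le_iff_le_add, ← sub_le_iff_le_add', le_div_iff₀ (by linarith)]
  nlinarith

theorem qq_le_exp (β lam : ℝ) : qq β lam ≤ Real.exp (-Real.exp (-|β * lam|)) := by
  have h0 := Real.exp_pos (-|β * lam|)
  have h1 : Real.exp (-|β * lam|) ≤ 1 := by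
    rw [Real.exp_le_one_iff]; exact neg_nonpos.2 (abs_nonneg _)
  have h2 := Real.add_one_le_exp (-Real.exp (-|β * lam|))
  refine le_trans ?_ h2
  unfold qq
  rw [div_le_iff₀ (by linarith)]
  nlinarith

theorem prod_anti {f : ℕ → ℝ} {s t : Finset ℕ} (hst : s ⊆ t) (h0 : ∀ i ∈ t, 0 ≤ f i)
    (h1 : ∀ i ∈ t, i ∉ s → f i ≤ 1) : ∏ i ∈ t, f i ≤ ∏ i ∈ s, f i := by
  rw [← Finset.prod_sdiff hst]
  refine mul_le_of_le_one_left (Finset.prod_nonneg fun i hi => h0 i (hst hi)) ?_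
  refine Finset.prod_le_one (fun i hi => h0 i (Finset.mem_sdiff.1 hi).1)
    (fun i hi => h1 i (Finset.mem_sdiff.1 hi).1 (Finset.mem_sdiff.1 hi).2)

theorem qq_hasProd (β : ℝ) (lam : ℕ → ℝ) : Multipliable (fun k => qq β (lam k)) := by
  have hanti : Antitone (fun s : Finset ℕ => ∏ k ∈ s, qq β (lam k)) := by
    intro s t hst
    exact prod_anti hst (fun i _ => qq_nonneg _ _)
      (fun i _ _ => qq_le _ _)
  have hb : BddBelow (Set.range (fun s : Finset ℕ => ∏ k ∈ s, qq β (lam k))) :=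
    ⟨0, by rintro _ ⟨s, rfl⟩; exact Finset.prod_nonneg fun i _ => qq_nonneg _ _⟩
  refine ⟨⨅ s : Finset ℕ, ∏ k ∈ s, qq β (lam k), ?_⟩
  rw [HasProd, SummationFilter.unconditional_filter]
  exact tendsto_atTop_ciInf hanti hb

theorem qq_tendsto (β : ℝ) (lam : ℕ → ℝ) :
    Tendsto (fun n => ∏ k ∈ Finset.range n, qq β (lam k)) atTop (𝓝 (∏' k, qq β (lam k))) :=
  (qq_hasProd β lam).hasProd.tendsto_prod_nat

theorem qq_pos_of_summable {β : ℝ} {lam : ℕ → ℝ} (h0 : ∀ k, β * lam k ≠ 0)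
    (hs : Summable fun k => Real.exp (-|β * lam k|)) : 0 < ∏' k, qq β (lam k) := by
  have h1 : ∏' k, (1 + (qq β (lam k) - 1)) ≠ 0 := by
    refine tprod_one_add_ne_zero_of_summable (fun k => ?_) ?_
    · have := qq_pos (h0 k)
      intro h; linarith
    · refine Summable.of_nonneg_of_le (fun k => norm_nonneg _) (fun k => ?_) (hs.mul_left 2)
      exact one_sub_qq_le β (lam k)
  simp only [add_sub_cancel] at h1
  exact lt_of_le_of_ne (ge_of_tendsto' (qq_tendsto β lam)
    (fun n => Finset.prod_nonneg fun i _ => qq_nonneg _ _)) h1.symm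

theorem summable_of_qq_pos {β : ℝ} {lam : ℕ → ℝ} (hp : 0 < ∏' k, qq β (lam k)) :
    Summable fun k => Real.exp (-|β * lam k|) := by
  have hanti : Antitone (fun n => ∏ k ∈ Finset.range n, qq β (lam k)) := by
    intro s t hst
    exact prod_anti (Finset.range_mono hst)
      (fun i _ => qq_nonneg _ _) (fun i _ _ => qq_le _ _)
  refine summable_of_sum_range_le (c := -Real.log (∏' k, qq β (lam k)))
    (fun k => (Real.exp_pos _).le) (fun n => ?_)
  have h1 : ∏' k, qq β (lam k) ≤ Real.exp (∑ k ∈ Finset.range n, -Real.exp (-|β * lam k|)) := by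
    refine (hanti.le_of_tendsto (qq_tendsto β lam) n).trans ?_
    rw [Real.exp_sum]
    exact Finset.prod_le_prod (fun i _ => qq_nonneg _ _) (fun i _ => qq_le_exp _ _)
  have h2 := Real.log_le_log hp h1
  rw [Real.log_exp, Finset.sum_neg_distrib] at h2
  linarith

variable {Hs : Type*} [NormedAddCommGroup Hs] [InnerProductSpace ℂ Hs] [CompleteSpace Hs]

section
variable {r : CARrep Hs A} {U : ℝ → Hs ≃ₗᵢ[ℂ] Hs} {d : Dynamics A} {G : Hs →L[ℂ] Hs}
    {γ : A ≃⋆ₐ[ℂ] A} {β : ℝ} {ρ ω : A → ℂ} {e : ℕ → Hs} {lam : ℕ → ℝ}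

theorem bl_ne (h : TSys r U d G γ) (hβ : β ≠ 0) (hE : EigenBasisOdd G U e lam) (k : ℕ) :
    β * lam k ≠ 0 := by
  refine mul_ne_zero hβ fun h0 => ?_
  have := h.ker (e k) (fun t => by rw [hE.2.2.2 t k, h0]; simp)
  have h2 := hE.1.1 k
  rw [this] at h2
  simp at h2

theorem omega_V (h : TSys r U d G γ) (hβ : β ≠ 0) (hE : EigenBasisOdd G U e lam)
    (hω : d.IsKMS β ω) (n : ℕ) :
    ω (V r e n) = ((∏ k ∈ Finset.range n, tt β (lam k) : ℝ) : ℂ) := by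
  have hB := BKMS.of_kms hω
  obtain ⟨T, hT⟩ := exists_T h.trivial hβ hB (by rw [hω.1.2.2]; exact one_ne_zero)
  rw [rho_V h.trivial hβ hB hT hE.1 (t := fun k => tt β (lam k)) ?_ n, hω.1.2.2, one_mul]
  intro k
  have hp := Real.exp_pos (β * lam k)
  refine T_eig hT (g := 1) (fun t => hE.2.2.2 t k) (by simp) ?_ (by linarith)
  unfold tt
  field_simp
  ring

theorem twisted_V (h : TSys r U d G γ) (hβ : β ≠ 0) (hE : EigenBasisOdd G U e lam)
    (hρ : BKMS d γ β ρ) {T : Hs →L[ℂ] Hs} (hT : TRel U G β T) (n : ℕ) :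
    ρ (V r e n) = ρ 1 * ((∏ k ∈ Finset.range n, (tt β (lam k))⁻¹ : ℝ) : ℂ) := by
  refine rho_V h hβ hρ hT hE.1 (t := fun k => (tt β (lam k))⁻¹) (fun k => ?_) n
  have hp := Real.exp_pos (β * lam k)
  have h1 : Real.exp (β * lam k) ≠ 1 := by
    rw [Ne, Real.exp_eq_one_iff]; exact bl_ne h hβ hE k
  have h2 : Real.exp (β * lam k) - 1 ≠ 0 := sub_ne_zero.2 h1
  refine T_eig hT (g := -1) (fun t => hE.2.2.2 t k) (by simp [hE.2.1 k]) ?_ ?_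
  · unfold tt
    rw [inv_div, div_mul_eq_mul_div, div_eq_iff h2]
    ring
  · intro h3
    apply h2
    linarith

theorem twisted_one_le (h : TSys r U d G γ) (hβ : β ≠ 0) (hE : EigenBasisOdd G U e lam)
    (hρ : BKMS d γ β ρ) {T : Hs →L[ℂ] Hs} (hT : TRel U G β T) :
    ‖ρ 1‖ ≤ ∏' k, qq β (lam k) := by
  refine ge_of_tendsto' (qq_tendsto β lam) (fun n => ?_)
  have h1 := twisted_V h hβ hE hρ hT n
  have h2 := (hρ.bd (V r e n)).trans (V_norm hE.1 n)
  rw [h1, norm_mul, Complex.norm_real, Finset.prod_inv_distrib, norm_inv, Real.norm_eq_abs,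
    Finset.abs_prod] at h2
  simp only [abs_tt] at h2
  rwa [← div_eq_mul_inv, div_le_one] at h2
  exact Finset.prod_pos fun k _ => qq_pos (bl_ne h hβ hE k)

theorem exists_twisted (h : TSys r U d G γ) (hβ : β ≠ 0) (hE : EigenBasisOdd G U e lam)
    (hω : d.IsKMS β ω) :
    ∃ ρ, TwistedKMSDom d γ β ω ρ ∧ ρ 1 = ((∏' k, qq β (lam k) : ℝ) : ℂ) := by
  refine exists_rho h hω hE (p := fun n => ∏ k ∈ Finset.range n, tt β (lam k))
    (fun n => Finset.prod_ne_zero_iff.2 fun k _ => tt_ne (bl_ne h hβ hE k))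
    (fun n => omega_V h hβ hE hω n) ?_
  refine (qq_tendsto β lam).congr fun n => ?_
  rw [Finset.abs_prod]
  simp only [abs_tt]

theorem third_part (h : TSys r U d G γ) (hβ : β ≠ 0) (hE : EigenBasisOdd G U e lam)
    (hω : d.IsKMS β ω) (hs : Summable fun k => Real.exp (-|β * lam k|)) :
    ∃ T : Hs →L[ℂ] Hs,
        (∀ (φ : Hs) (f : ℂ → Hs), Differentiable ℂ f → (∀ t : ℝ, f (t : ℂ) = U t φ) →
          T (φ + G (f (-(Complex.I) * β))) =
            Complex.I • (φ - G (f (-(Complex.I) * β)))) ∧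
        {ρ : A → ℂ | TwistedKMSDom d γ β ω ρ} =
          {ρ : A → ℂ | IsLinearMap ℂ ρ ∧ Continuous ρ ∧
            ∃ c : ℝ,
              |c| ≤ ∏' k, qq β (lam k) ∧
              ∀ L : List Hs, ρ (r.fieldProd L) = c * qfVal T L} := by
  have hc := qq_pos_of_summable (fun k => bl_ne h hβ hE k) hs
  obtain ⟨ρ₀, hρ₀, h1⟩ := exists_twisted h hβ hE hω
  set C := ∏' k, qq β (lam k) with hC
  have hC0 : (C : ℂ) ≠ 0 := by exact_mod_cast hc.ne'
  have hB₀ := BKMS.of_dom hω.1 hρ₀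
  obtain ⟨T, hT⟩ := exists_T h hβ hB₀ (by rw [h1]; exact hC0)
  refine ⟨T, fun φ f hf hf' => hT.rel φ f ⟨hf, hf'⟩, ?_⟩
  ext ρ
  constructor
  · intro hρ
    have hB := BKMS.of_dom hω.1 hρ
    have hre : ((ρ 1).re : ℂ) = ρ 1 := by
      have := hB.herm 1
      rw [star_one] at this
      exact Complex.conj_eq_iff_re.1 this.symm
    refine ⟨hB.lin, hB.cont, (ρ 1).re, ?_, fun L => ?_⟩
    · exact (Complex.abs_re_le_norm _).trans (twisted_one_le h hβ hE hB hT)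
    · rw [hre]; exact rho_qf h hβ hB hT L
  · rintro ⟨hl, hcont, κ, hκ, hL⟩
    have heq : ρ = fun a => ((κ / C : ℝ) : ℂ) * ρ₀ a := by
      refine ext_fields r hl ⟨fun a b => ?_, fun z a => ?_⟩ hcont
        (continuous_const.mul hB₀.cont) (fun L => ?_)
      · rw [hB₀.lin.map_add]; ring
      · rw [hB₀.lin.map_smul, smul_eq_mul, smul_eq_mul]; ring
      · rw [hL, rho_qf h hβ hB₀ hT, h1]
        push_cast
        field_simp
    have hk1 : |κ / C| ≤ 1 := by
      rw [abs_div, abs_of_pos hc, div_le_one hc]; exact hκ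
    refine ⟨⟨hl, fun a b fa fb ha hb => ?_⟩, fun a => ?_, ?_⟩
    · rw [heq]
      simp only []
      rw [hρ₀.1.2 a b fa fb ha hb]
    · rw [heq]
      simp only [map_mul, Complex.conj_ofReal]
      rw [hρ₀.2.1 a]
    · have h3 := (dominated_iff hω.1).1 hρ₀.2.2
      rw [dominated_iff hω.1]
      intro a b
      rw [heq]
      simp only [norm_mul, Complex.norm_real, Real.norm_eq_abs]
      refine le_trans ?_ (h3 a b)
      gcongr
      exact mul_le_of_le_one_left (norm_nonneg _) hk1

end

end TK

namespace TK

open Filter Topology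

variable {Hs : Type*} [NormedAddCommGroup Hs] [InnerProductSpace ℂ Hs] [CompleteSpace Hs]

theorem num_radius (Y : Hs →L[ℂ] Hs) (ε : ℝ) (hε : 0 ≤ ε)
    (h : ∀ x, ‖⟪Y x, x⟫_ℂ‖ ≤ ε * ‖x‖ ^ 2) : ‖Y‖ ≤ 2 * ε := by
  have key : ∀ x y : Hs, ‖x‖ = 1 → ‖y‖ = 1 → ‖⟪Y y, x⟫_ℂ‖ ≤ 2 * ε := by
    intro x y hx hy
    have h0 := inner_map_polarization (Y : Hs →ₗ[ℂ] Hs) x y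
    simp only [ContinuousLinearMap.coe_coe] at h0
    rw [h0, norm_div]
    have e1 := h (x + y)
    have e2 := h (x - y)
    have e3 := h (x + Complex.I • y)
    have e4 := h (x - Complex.I • y)
    have p1 := parallelogram_law_with_norm ℂ x y
    have p2 := parallelogram_law_with_norm ℂ x (Complex.I • y)
    have hn : ‖Complex.I • y‖ = 1 := by rw [norm_smul, Complex.norm_I, hy, one_mul]
    rw [hx, hy] at p1
    rw [hx, hn] at p2
    have t : ∀ a b c d : ℂ, ‖a - b + Complex.I * c - Complex.I * d‖ ≤ ‖a‖ + ‖b‖ + ‖c‖ + ‖d‖ := by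
      intro a b c d
      have := norm_sub_le (a - b + Complex.I * c) (Complex.I * d)
      have := norm_add_le (a - b) (Complex.I * c)
      have := norm_sub_le a b
      simp only [norm_mul, Complex.norm_I, one_mul] at *
      linarith
    have h4 : ‖(4 : ℂ)‖ = 4 := by norm_num
    rw [h4, div_le_iff₀ (by norm_num)]
    refine (t _ _ _ _).trans ?_
    nlinarith
  refine ContinuousLinearMap.opNorm_le_of_unit_norm (by linarith) (fun y hy => ?_)
  by_cases h0 : Y y = 0
  · rw [h0, norm_zero]; linarith
  have hp : 0 < ‖Y y‖ := norm_pos_iff.2 h0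
  have := key ((‖Y y‖⁻¹ : ℂ) • Y y) y (by
    rw [norm_smul, norm_inv, Complex.norm_real, norm_norm, inv_mul_cancel₀ hp.ne']) hy
  rw [inner_smul_right, norm_mul, norm_inv, Complex.norm_real, norm_norm,
    inner_self_eq_norm_sq_to_K] at this
  simp only [Complex.coe_algebraMap, norm_pow, Complex.norm_real, norm_norm] at this
  have e : ‖Y y‖⁻¹ * ‖Y y‖ ^ 2 = ‖Y y‖ := by field_simp
  rwa [e] at this

theorem proj_compact (W : Submodule ℂ Hs) [FiniteDimensional ℂ W] :
    IsCompactOperator (W.starProjection : Hs →L[ℂ] Hs) := by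
  haveI : ProperSpace W := FiniteDimensional.proper ℂ W
  have h1 : IsCompactOperator (W.orthogonalProjectionOnto : Hs →L[ℂ] W) :=
    isCompactOperator_of_locallyCompactSpace_dom _
  exact h1.clm_comp W.subtypeL

theorem hs_compact (X : Hs →L[ℂ] Hs) (hX : ∀ x y, ⟪X x, y⟫_ℂ = ⟪x, X y⟫_ℂ) (B : ℝ)
    (hB : ∀ (n : ℕ) (f : Fin n → Hs), Orthonormal ℂ f →
      ∑ k, (⟪f k, X (f k)⟫_ℂ).re ^ 2 ≤ B) : IsCompactOperator X := by
  have hcl := isClosed_setOfPred_isCompactOperator (σ₁₂ := RingHom.id ℂ) (M₁ := Hs) (M₂ := Hs)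
  refine hcl.closure_subset (Metric.mem_closure_iff.2 fun ε hε => ?_)
  set δ := ε / 3 with hδ
  have hδ0 : 0 < δ := by positivity
  set S : Set ℝ := {s | ∃ (n : ℕ) (f : Fin n → Hs), Orthonormal ℂ f ∧
    s = ∑ k, (⟪f k, X (f k)⟫_ℂ).re ^ 2} with hS
  have hSne : S.Nonempty := ⟨_, 0, Fin.elim0, ⟨fun i => i.elim0, fun i => i.elim0⟩, rfl⟩
  have hSb : BddAbove S := ⟨B, by rintro _ ⟨n, f, hf, rfl⟩; exact hB n f hf⟩
  obtain ⟨_, ⟨n, f, hf, rfl⟩, hlt⟩ := exists_lt_of_lt_csSup hSne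
    (show sSup S - δ ^ 2 < sSup S by linarith [pow_pos hδ0 2])
  set W := Submodule.span ℂ (Set.range f) with hW
  haveI : FiniteDimensional ℂ W := FiniteDimensional.span_of_finite ℂ (Set.finite_range f)
  set P := W.starProjection with hP
  have hw1 : ∀ w ∈ Wᗮ, ‖w‖ = 1 → |(⟪w, X w⟫_ℂ).re| ≤ δ := by
    intro w hw hw1
    have hor : ∀ k, ⟪f k, w⟫_ℂ = 0 := fun k =>
      (Submodule.mem_orthogonal _ _).1 hw _ (Submodule.subset_span ⟨k, rfl⟩)
    have hon : Orthonormal ℂ (Fin.cons w f : Fin (n + 1) → Hs) := by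
      constructor
      · intro i
        refine Fin.cases ?_ (fun i => ?_) i
        · simpa using hw1
        · simpa using hf.1 i
      · intro i j
        refine Fin.cases ?_ (fun i => ?_) i <;> refine Fin.cases ?_ (fun j => ?_) j
        · intro h; exact absurd rfl h
        · intro _
          simp only [Fin.cons_zero, Fin.cons_succ]
          rw [← inner_conj_symm, hor, map_zero]
        · intro _
          simp only [Fin.cons_zero, Fin.cons_succ]
          exact hor i
        · intro h
          simp only [Fin.cons_succ]
          exact hf.2 (fun h' => h (by rw [h']))
    have h2 := le_csSup hSb ⟨n + 1, _, hon, rfl⟩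
    rw [Fin.sum_univ_succ] at h2
    simp only [Fin.cons_zero, Fin.cons_succ] at h2
    refine abs_le_of_sq_le_sq (by linarith) hδ0.le
  have hw2 : ∀ w ∈ Wᗮ, ‖⟪X w, w⟫_ℂ‖ ≤ δ * ‖w‖ ^ 2 := by
    intro w hw
    by_cases h0 : w = 0
    · simp [h0]
    have hp : 0 < ‖w‖ := norm_pos_iff.2 h0
    have him : (⟪w, X w⟫_ℂ).im = 0 := by
      exact Complex.conj_eq_iff_im.1 (by rw [inner_conj_symm, hX])
    have h3 := hw1 ((‖w‖⁻¹ : ℂ) • w) (Submodule.smul_mem _ _ hw) (by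
      rw [norm_smul, norm_inv, Complex.norm_real, norm_norm, inv_mul_cancel₀ hp.ne'])
    rw [map_smul, inner_smul_left, inner_smul_right, ← mul_assoc, map_inv₀, Complex.conj_ofReal,
      ← Complex.ofReal_inv, ← Complex.ofReal_mul, Complex.re_ofReal_mul, abs_mul,
      abs_of_pos (by positivity)] at h3
    rw [hX, ← Complex.re_add_im ⟪w, X w⟫_ℂ, him]
    simp only [Complex.ofReal_zero, zero_mul, add_zero, Complex.norm_real, Real.norm_eq_abs]
    have e : ‖w‖⁻¹ * ‖w‖⁻¹ * |(⟪w, X w⟫_ℂ).re| = |(⟪w, X w⟫_ℂ).re| / ‖w‖ ^ 2 := by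
      field_simp
    rwa [e, div_le_iff₀ (by positivity)] at h3
  set Y : Hs →L[ℂ] Hs := (1 - P) * X * (1 - P) with hY
  have hYn : ‖Y‖ ≤ 2 * δ := by
    refine num_radius Y δ hδ0.le fun x => ?_
    have hm : x - P x ∈ Wᗮ := W.sub_starProjection_mem_orthogonal x
    have e1 : ⟪Y x, x⟫_ℂ = ⟪X (x - P x), x - P x⟫_ℂ := by
      have : Y x = X (x - P x) - P (X (x - P x)) := rfl
      rw [this, inner_sub_left, inner_sub_right, W.inner_starProjection_left_eq_right]
    rw [e1]
    refine (hw2 _ hm).trans ?_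
    gcongr
    have e2 : x - P x = Wᗮ.starProjection x := by
      rw [Submodule.starProjection_orthogonal_val]
    rw [e2]
    exact Submodule.norm_starProjection_apply_le _ x
  have hPc : IsCompactOperator P := proj_compact W
  refine ⟨X - Y, ?_, ?_⟩
  · have e : X - Y = P * X + (X * P - P * X * P) := by
      rw [hY]; noncomm_ring
    show IsCompactOperator (X - Y)
    rw [e]
    exact (hPc.comp_clm X).add ((hPc.clm_comp X).sub (hPc.clm_comp (P * X)))
  · rw [dist_eq_norm, sub_sub_cancel]
    linarith

theorem eig_family (X : Hs →L[ℂ] Hs) (hX : ∀ x y, ⟪X x, y⟫_ℂ = ⟪x, X y⟫_ℂ) (B : ℝ)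
    (hB : ∀ (n : ℕ) (f : Fin n → Hs), Orthonormal ℂ f →
      ∑ k, (⟪f k, X (f k)⟫_ℂ).re ^ 2 ≤ B) :
    ∃ (ι : Type) (_ : Countable ι) (v : ι → Hs) (μ : ι → ℝ), Orthonormal ℂ v ∧
      (∀ i, μ i ≠ 0 ∧ X (v i) = (μ i : ℂ) • v i) ∧
      ∀ φ, (∀ i, ⟪v i, φ⟫_ℂ = 0) → (∀ y, X y = 0 → ⟪y, φ⟫_ℂ = 0) → φ = 0 := by
  have hc := hs_compact X hX B hB
  have hsym : (X : Hs →ₗ[ℂ] Hs).IsSymmetric := hX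
  haveI : ∀ μ : {μ : ℂ // μ ≠ 0},
      FiniteDimensional ℂ (Module.End.eigenspace (X : Hs →ₗ[ℂ] Hs) μ.1) := fun μ =>
    ContinuousLinearMap.finite_dimensional_eigenspace hc μ.1 μ.2
  let b : ∀ μ : {μ : ℂ // μ ≠ 0}, OrthonormalBasis _ ℂ
      (Module.End.eigenspace (X : Hs →ₗ[ℂ] Hs) μ.1) := fun μ => stdOrthonormalBasis ℂ _
  let ι : Type := Σ μ : {μ : ℂ // μ ≠ 0},
    Fin (Module.finrank ℂ (Module.End.eigenspace (X : Hs →ₗ[ℂ] Hs) μ.1))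
  let v : ι → Hs := fun a => (b a.1 a.2 : Hs)
  have hv : Orthonormal ℂ v := by
    have h1 := hsym.orthogonalFamily_eigenspaces
    have h2 := h1.comp (Subtype.val_injective : Function.Injective
      (Subtype.val : {μ : ℂ // μ ≠ 0} → ℂ))
    exact h2.orthonormal_sigma_orthonormal (v_family := fun μ i => b μ i)
      (fun μ => (b μ).orthonormal)
  have heig : ∀ i : ι, X (v i) = (i.1.1 : ℂ) • v i := fun i =>
    Module.End.mem_eigenspace_iff.1 (b i.1 i.2).2
  have hin : ∀ i : ι, ⟪v i, X (v i)⟫_ℂ = i.1.1 := by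
    intro i
    rw [heig, inner_smul_right, inner_self_eq_norm_sq_to_K, hv.1]
    simp
  have hre : ∀ i : ι, ((i.1.1.re : ℝ) : ℂ) = i.1.1 := by
    intro i
    rw [← Complex.conj_eq_iff_re]
    conv_lhs => rw [← hin i, inner_conj_symm, hX, hin i]
  have hne : ∀ i : ι, i.1.1.re ≠ 0 := by
    intro i h0
    apply i.1.2
    rw [← hre i, h0, Complex.ofReal_zero]
  have hcount : Countable ι := by
    have hs : Summable (fun i : ι => i.1.1.re ^ 2) := by
      refine summable_of_sum_le (c := B) (fun i => sq_nonneg _) (fun s => ?_)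
      have h3 := hB s.card (fun k => v (s.equivFin.symm k))
        (hv.comp _ (Subtype.val_injective.comp s.equivFin.symm.injective))
      simp only [hin] at h3
      rw [← Finset.sum_coe_sort, ← Equiv.sum_comp s.equivFin.symm]
      exact h3
    have h4 := hs.countable_support
    have h5 : Function.support (fun i : ι => i.1.1.re ^ 2) = Set.univ := by
      ext i; simp [hne i]
    rw [h5] at h4
    exact Set.countable_univ_iff.1 h4
  refine ⟨ι, hcount, v, fun i => i.1.1.re, hv, fun i => ⟨hne i, by rw [hre]; exact heig i⟩,
    fun φ h1 h2 => ?_⟩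
  have hbot := ContinuousLinearMap.orthogonalComplement_iSup_eigenspaces_eq_bot hc hsym
  rw [← Submodule.mem_bot ℂ, ← hbot, ← Submodule.iInf_orthogonal, Submodule.mem_iInf]
  intro μ
  rw [Submodule.mem_orthogonal]
  intro y hy
  by_cases hμ : μ = 0
  · apply h2
    rw [hμ] at hy
    simpa using Module.End.mem_eigenspace_iff.1 hy
  · have h3 := (b ⟨μ, hμ⟩).sum_repr ⟨y, hy⟩
    have h4 := congrArg Subtype.val h3
    simp only at h4
    rw [← h4, Submodule.coe_sum, sum_inner]
    refine Finset.sum_eq_zero fun k _ => ?_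
    rw [Submodule.coe_smul, inner_smul_left]
    rw [h1 ⟨⟨μ, hμ⟩, k⟩, mul_zero]

end TK

namespace TK

open Filter Topology

variable {Hs : Type*} [NormedAddCommGroup Hs] [InnerProductSpace ℂ Hs] [CompleteSpace Hs]

section
variable {r : CARrep Hs A} {U : ℝ → Hs ≃ₗᵢ[ℂ] Hs} {d : Dynamics A} {G : Hs →L[ℂ] Hs}
    {γ : A ≃⋆ₐ[ℂ] A} {β : ℝ} {ρ ω : A → ℂ} {S T : Hs →L[ℂ] Hs}

theorem twoPt_norm (T : Hs →L[ℂ] Hs) (ξ η : Hs) :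
    ‖(twoPt T ξ η) ^ 2 + (twoPt T ξ (Complex.I • η)) ^ 2‖ ≤
      ‖⟪ξ, η⟫_ℂ‖ ^ 2 + ‖⟪ξ, T η⟫_ℂ‖ ^ 2 := by
  refine (norm_add_le _ _).trans ?_
  have h : ∀ a b : ℝ, ‖(a : ℂ) + Complex.I * b‖ ^ 2 = a ^ 2 + b ^ 2 := by
    intro a b
    rw [mul_comm, Complex.sq_norm, Complex.normSq_add_mul_I]
  rw [norm_pow, norm_pow, twoPt, twoPt, h, h, map_smul, inner_smul_right, inner_smul_right,
    Complex.sq_norm, Complex.sq_norm, Complex.normSq_apply, Complex.normSq_apply]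
  simp only [Complex.I_mul_re]
  nlinarith

theorem im_inner (hT : TRel U G β T) (S' : Hs →L[ℂ] Hs)
    (hS : ∀ x y, ⟪S' x, y⟫_ℂ = -⟪x, S' y⟫_ℂ) (ξ : Hs) :
    (⟪ξ, (Complex.I • (T - S')) ξ⟫_ℂ).re = -(⟪ξ, T ξ⟫_ℂ).im - -(⟪ξ, S' ξ⟫_ℂ).im := by
  simp only [ContinuousLinearMap.smul_apply, ContinuousLinearMap.sub_apply, inner_smul_right,
    inner_sub_right, Complex.I_mul_re, Complex.sub_im]
  ring

theorem hs_bound (h : TSys r U d G γ) (hβ : β ≠ 0) (hω : d.IsKMS β ω)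
    (hρ : TwistedKMSDom d γ β ω ρ) (h1 : ρ 1 ≠ 0) (hT : TRel U G β T)
    (hS : TRel U (ContinuousLinearMap.id ℂ Hs) β S) (n : ℕ) (f : Fin n → Hs)
    (hf : Orthonormal ℂ f) :
    ∑ k, (⟪f k, (Complex.I • (T - S)) (f k)⟫_ℂ).re ^ 2 ≤ (1 + ‖S‖ ^ 2) / ‖ρ 1‖ ^ 2 := by
  have hB := BKMS.of_kms hω
  have hBρ := BKMS.of_dom hω.1 hρ
  have hω1 : ω 1 = 1 := hω.1.2.2
  set x : Fin n → ℝ := fun k => (⟪f k, (Complex.I • (T - S)) (f k)⟫_ℂ).re with hx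
  set dd : Fin n → ℝ := fun k => -(⟪f k, S (f k)⟫_ℂ).im with hdd
  set cc : Fin n → ℝ := fun k => -(⟪f k, T (f k)⟫_ℂ).im with hcc
  have hxcd : ∀ k, x k = cc k - dd k := fun k => im_inner hT S hS.anti (f k)
  have hωg : ∀ k, ω (gam r (f k)) = dd k := fun k => by
    rw [rho_gam h.trivial hβ hB hS (hf.1 k), hω1, one_mul]
  have hρg : ∀ k, ρ (gam r (f k)) = ρ 1 * cc k := fun k => rho_gam h hβ hBρ hT (hf.1 k)
  set q : Fin n → A := fun k => gam r (f k) - (dd k : ℂ) • (1 : A) with hq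
  set Q : A := ∑ k, (x k : ℂ) • q k with hQ
  have hqs : ∀ k, star (q k) = q k := by
    intro k
    simp only [hq, star_sub, star_smul, star_one, gam_star, Complex.star_def, Complex.conj_ofReal]
  have hQs : star Q = Q := by
    simp only [hQ, star_sum, star_smul, hqs, Complex.star_def, Complex.conj_ofReal]
  have hsub : ∀ {σ : A → ℂ}, IsLinearMap ℂ σ → ∀ a b, σ (a - b) = σ a - σ b :=
    fun hσ a b => hσ.map_sub a b
  have hρQ : ρ Q = ρ 1 * ((∑ k, x k ^ 2 : ℝ) : ℂ) := by
    rw [hQ, lin_sum hBρ.lin, Complex.ofReal_sum, Finset.mul_sum]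
    refine Finset.sum_congr rfl fun k _ => ?_
    rw [hBρ.lin.map_smul, hq, hsub hBρ.lin, hBρ.lin.map_smul, hρg, smul_eq_mul, smul_eq_mul]
    rw [hxcd k]
    push_cast
    ring
  have hcov : ∀ j k, ω (q j * q k) = (twoPt S (f j) (f k)) ^ 2 +
      (twoPt S (f j) (Complex.I • f k)) ^ 2 := by
    intro j k
    have e : q j * q k = gam r (f j) * gam r (f k) - (dd j : ℂ) • gam r (f k)
        - (dd k : ℂ) • gam r (f j) + ((dd j : ℂ) * dd k) • (1 : A) := by
      simp only [hq, sub_mul, mul_sub, smul_mul_assoc, one_mul, mul_smul_comm, mul_one, smul_sub,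
        smul_smul]
      rw [mul_comm (dd k : ℂ)]
      abel
    rw [e, hB.lin.map_add, hsub hB.lin, hsub hB.lin, hB.lin.map_smul, hB.lin.map_smul,
      hB.lin.map_smul, rho_gam2 h.trivial hβ hB hS (hf.1 j) (hf.1 k), hωg, hωg, hω1]
    simp only [smul_eq_mul, hdd]
    push_cast
    ring
  have hωQ : ω (star Q * Q) = ∑ j, ∑ k, ((x j : ℂ) * x k) * ω (q j * q k) := by
    rw [hQs, hQ, Finset.sum_mul_sum, lin_sum hB.lin]
    refine Finset.sum_congr rfl fun j _ => ?_
    rw [lin_sum hB.lin]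
    refine Finset.sum_congr rfl fun k _ => ?_
    rw [smul_mul_smul_comm, hB.lin.map_smul, smul_eq_mul]
  have hbes : ∀ j, ∑ k, ‖⟪f j, S (f k)⟫_ℂ‖ ^ 2 ≤ ‖S‖ ^ 2 := by
    intro j
    have e : ∀ k, ‖⟪f j, S (f k)⟫_ℂ‖ = ‖⟪f k, S (f j)⟫_ℂ‖ := by
      intro k
      rw [← norm_neg, ← hS.anti, norm_inner_symm]
    simp only [e]
    refine (hf.sum_inner_products_le (s := Finset.univ) (S (f j))).trans ?_
    have := S.le_opNorm (f j)
    rw [hf.1 j, mul_one] at this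
    gcongr
  have hbes' : ∀ k, ∑ j, ‖⟪f j, S (f k)⟫_ℂ‖ ^ 2 ≤ ‖S‖ ^ 2 := by
    intro k
    refine (hf.sum_inner_products_le (s := Finset.univ) (S (f k))).trans ?_
    have := S.le_opNorm (f k)
    rw [hf.1 k, mul_one] at this
    gcongr
  have hdel : ∀ j, ∑ k, x j * x k * ‖⟪f j, f k⟫_ℂ‖ ^ 2 = x j ^ 2 := by
    intro j
    rw [Finset.sum_eq_single j]
    · rw [inner_self_eq_norm_sq_to_K, hf.1 j]; simp; ring
    · intro k _ hk
      rw [hf.2 (Ne.symm hk)]; simp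
    · simp
  have hdel' : ∀ j, ∑ k, |x j| * |x k| * ‖⟪f j, f k⟫_ℂ‖ ^ 2 = x j ^ 2 := by
    intro j
    rw [Finset.sum_eq_single j]
    · rw [inner_self_eq_norm_sq_to_K, hf.1 j]; simp [← sq]
    · intro k _ hk
      rw [hf.2 (Ne.symm hk)]; simp
    · simp
  have hmain : ‖ω (star Q * Q)‖ ≤ (1 + ‖S‖ ^ 2) * ∑ k, x k ^ 2 := by
    rw [hωQ]
    calc _ ≤ ∑ j, ∑ k, |x j| * |x k| * (‖⟪f j, f k⟫_ℂ‖ ^ 2 + ‖⟪f j, S (f k)⟫_ℂ‖ ^ 2) := by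
          refine (norm_sum_le _ _).trans (Finset.sum_le_sum fun j _ => ?_)
          refine (norm_sum_le _ _).trans (Finset.sum_le_sum fun k _ => ?_)
          rw [norm_mul, norm_mul, Complex.norm_real, Complex.norm_real, hcov]
          simp only [Real.norm_eq_abs]
          gcongr
          exact twoPt_norm S _ _
      _ ≤ ∑ j, ∑ k, (|x j| * |x k| * ‖⟪f j, f k⟫_ℂ‖ ^ 2 +
            (x j ^ 2 / 2 * ‖⟪f j, S (f k)⟫_ℂ‖ ^ 2 + x k ^ 2 / 2 * ‖⟪f j, S (f k)⟫_ℂ‖ ^ 2)) := by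
          refine Finset.sum_le_sum fun j _ => Finset.sum_le_sum fun k _ => ?_
          have h3 : |x j| * |x k| ≤ x j ^ 2 / 2 + x k ^ 2 / 2 := by
            nlinarith [sq_nonneg (|x j| - |x k|), sq_abs (x j), sq_abs (x k)]
          nlinarith [sq_nonneg ‖⟪f j, S (f k)⟫_ℂ‖]
      _ = ∑ j, x j ^ 2 + (∑ j, x j ^ 2 / 2 * ∑ k, ‖⟪f j, S (f k)⟫_ℂ‖ ^ 2 +
            ∑ k, x k ^ 2 / 2 * ∑ j, ‖⟪f j, S (f k)⟫_ℂ‖ ^ 2) := by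
          simp only [Finset.sum_add_distrib, hdel', Finset.mul_sum]
          congr 2
          exact Finset.sum_comm
      _ ≤ ∑ j, x j ^ 2 + (∑ j, x j ^ 2 / 2 * ‖S‖ ^ 2 + ∑ k, x k ^ 2 / 2 * ‖S‖ ^ 2) := by
          gcongr with j _ k _
          · exact hbes j
          · exact hbes' k
      _ = _ := by
          rw [← Finset.sum_mul, ← Finset.sum_div]
          ring
  have hdom := dom_norm_sq hω.1 hρ.2.2 Q
  have hle : (ω (star Q * Q)).re ≤ (1 + ‖S‖ ^ 2) * ∑ k, x k ^ 2 :=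
    (Complex.re_le_norm _).trans hmain
  rw [hρQ, norm_mul, Complex.norm_real, Real.norm_eq_abs, mul_pow, sq_abs] at hdom
  have hp : 0 < ‖ρ 1‖ ^ 2 := by positivity
  have hs0 : 0 ≤ ∑ k, x k ^ 2 := Finset.sum_nonneg fun k _ => sq_nonneg _
  change ∑ k, x k ^ 2 ≤ _
  rw [le_div_iff₀ hp]
  rcases hs0.eq_or_lt with h0 | h0
  · rw [← h0, zero_mul]; positivity
  · have h5 := hdom.trans hle
    by_contra hcon
    push Not at hcon
    nlinarith [mul_lt_mul_of_pos_right hcon h0]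

/-- `S T = -1` on odd vectors. -/
theorem ST_odd (h : TSys r U d G γ) (hβ : β ≠ 0) (hT : TRel U G β T)
    (hS : TRel U (ContinuousLinearMap.id ℂ Hs) β S) {v : Hs} (hv : G v = -v) :
    S (T v) = -v := by
  set M : Hs →L[ℂ] Hs := ContinuousLinearMap.id ℂ Hs - G with hM
  have hMa : ∀ x, M x = x - G x := fun x => rfl
  have hGM : ∀ x, G (M x) = -M x := by
    intro x; rw [hMa, map_sub, h.sq]; abel
  have hMG : ∀ x, M (G x) = -M x := by
    intro x; rw [hMa, hMa, h.sq]; abel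
  have hUM : ∀ t ξ, U t (M ξ) = M (U t ξ) := by
    intro t ξ; rw [hMa, hMa, map_sub, h.comm]
  have key : ∀ x, (S.comp (T.comp M)) x = (-M) x := by
    refine T_unique h hβ (fun ψ f hf => ?_)
    have hf' := hf.map M hUM
    have e1 := hT.rel _ _ hf'
    have e2 := hS.rel _ _ hf'
    simp only [ContinuousLinearMap.id_apply] at e2
    rw [hGM, ← sub_eq_add_neg, sub_neg_eq_add] at e1
    simp only [ContinuousLinearMap.comp_apply, ContinuousLinearMap.neg_apply, map_add M, hMG]
    rw [← sub_eq_add_neg, e1, map_smul, e2, smul_smul, Complex.I_mul_I, neg_one_smul]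
  have h2 := key v
  simp only [ContinuousLinearMap.comp_apply, ContinuousLinearMap.neg_apply, hMa, hv] at h2
  rw [sub_neg_eq_add, ← two_smul ℂ v, map_smul, map_smul, ← smul_neg] at h2
  exact smul_right_injective Hs (two_ne_zero (α := ℂ)) h2

/-- `S = T` on even vectors. -/
theorem ST_even (h : TSys r U d G γ) (hβ : β ≠ 0) (hT : TRel U G β T)
    (hS : TRel U (ContinuousLinearMap.id ℂ Hs) β S) (x : Hs) :
    T (x + G x) = S (x + G x) := by
  set M : Hs →L[ℂ] Hs := ContinuousLinearMap.id ℂ Hs + G with hM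
  have hMa : ∀ x, M x = x + G x := fun x => rfl
  have hGM : ∀ x, G (M x) = M x := by
    intro x; rw [hMa, map_add, h.sq]; abel
  have hMG : ∀ x, M (G x) = M x := by
    intro x; rw [hMa, hMa, h.sq]; abel
  have hUM : ∀ t ξ, U t (M ξ) = M (U t ξ) := by
    intro t ξ; rw [hMa, hMa, map_add, h.comm]
  have key : ∀ x, (T.comp M) x = (S.comp M) x := by
    refine T_unique h hβ (fun ψ f hf => ?_)
    have hf' := hf.map M hUM
    have e1 := hT.rel _ _ hf'
    have e2 := hS.rel _ _ hf'
    simp only [ContinuousLinearMap.id_apply] at e2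
    rw [hGM] at e1
    simp only [ContinuousLinearMap.comp_apply, map_add M, hMG]
    rw [e1, e2]
  exact key x

theorem S_eig_rel (hS : TRel U (ContinuousLinearMap.id ℂ Hs) β S) {w : Hs} {δ : ℝ}
    (hw : S w = -(Complex.I * δ) • w) {ψ : Hs} {f : ℂ → Hs} (hf : EV U ψ f) :
    (1 + δ : ℂ) * ⟪w, ψ⟫_ℂ = (1 - δ : ℂ) * ⟪w, f (-Complex.I * β)⟫_ℂ := by
  have e := hS.rel _ _ hf
  simp only [ContinuousLinearMap.id_apply] at e
  have e1 : ⟪w, S (ψ + f (-Complex.I * β))⟫_ℂ =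
      ⟪w, Complex.I • (ψ - f (-Complex.I * β))⟫_ℂ := by rw [e]
  have e2 := hS.anti w (ψ + f (-Complex.I * β))
  rw [hw, inner_smul_left, e1, inner_smul_right, inner_sub_right, inner_add_right] at e2
  simp only [map_neg, map_mul, Complex.conj_I, Complex.conj_ofReal] at e2
  have h2 : Complex.I * ((1 + δ : ℂ) * ⟪w, ψ⟫_ℂ) =
      Complex.I * ((1 - δ : ℂ) * ⟪w, f (-Complex.I * β)⟫_ℂ) := by
    linear_combination e2
  exact mul_left_cancel₀ Complex.I_ne_zero h2

theorem S_one (h : TSys r U d G γ) (hS : TRel U (ContinuousLinearMap.id ℂ Hs) β S) {w : Hs}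
    (hw : S w = -Complex.I • w) : w = 0 := by
  refine ev_ortho h.u w fun ψ f hf => ?_
  have := S_eig_rel hS (δ := 1) (by simpa using hw) hf
  simp at this
  norm_num at this
  exact this

theorem S_neg_one (h : TSys r U d G γ) (hS : TRel U (ContinuousLinearMap.id ℂ Hs) β S) {w : Hs}
    (hw : S w = Complex.I • w) : w = 0 := by
  refine ev_ortho h.u w fun ψ f hf => ?_
  have := S_eig_rel hS (δ := -1) (by simpa using hw) (hf.shift h.u (Complex.I * β))
  simp at this
  norm_num at this
  rwa [hf.at_zero h.u] at this

theorem S_eig (h : TSys r U d G γ) (hβ : β ≠ 0)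
    (hS : TRel U (ContinuousLinearMap.id ℂ Hs) β S) {w : Hs} {δ : ℝ} (hδ : |δ| < 1)
    (hw : S w = -(Complex.I * δ) • w) :
    ∃ lam : ℝ, ∀ t : ℝ, U t w = Complex.exp (Complex.I * t * lam) • w := by
  obtain ⟨hl, hr⟩ := abs_lt.1 hδ
  have hpos : 0 < (1 + δ) / (1 - δ) := div_pos (by linarith) (by linarith)
  refine ⟨Real.log ((1 + δ) / (1 - δ)) / β, ?_⟩
  set lam := Real.log ((1 + δ) / (1 - δ)) / β with hlam
  have hexp : Complex.exp (lam * β) = ((1 + δ) / (1 - δ) : ℂ) := by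
    rw [← Complex.ofReal_mul, hlam, div_mul_cancel₀ _ hβ, ← Complex.ofReal_exp, Real.exp_log hpos]
    push_cast
    rfl
  have hne : (1 - δ : ℂ) ≠ 0 := by
    have : (1 - δ : ℝ) ≠ 0 := by linarith
    exact_mod_cast this
  have key : ∀ ψ f, EV U ψ f → ∀ t : ℝ,
      ⟪w, U t ψ⟫_ℂ = Complex.exp (Complex.I * t * lam) * ⟪w, ψ⟫_ℂ := by
    intro ψ f hf t
    refine liouville h.u hf w lam β hβ (fun z => ?_) t
    have := S_eig_rel hS hw (hf.shift h.u z)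
    rw [hexp, div_mul_eq_mul_div, eq_div_iff hne, this, mul_comm]
    congr 3
    ring
  have key2 : ∀ t : ℝ, U (-t) w = Complex.exp (-(Complex.I * t * lam)) • w := by
    intro t
    rw [← sub_eq_zero]
    refine ev_ortho h.u _ fun ψ f hf => ?_
    have e1 : ⟪U (-t) w, ψ⟫_ℂ = ⟪w, U t ψ⟫_ℂ := by
      have := (U t).inner_map_map (U (-t) w) ψ
      rw [← this, ← h.u.add, add_neg_cancel, h.u.zero]
    rw [inner_sub_left, e1, key ψ f hf, inner_smul_left, ← Complex.exp_conj]
    simp only [map_neg, map_mul, Complex.conj_I, Complex.conj_ofReal]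
    ring_nf
  intro t
  have := key2 (-t)
  rw [neg_neg] at this
  rw [this]
  congr 2
  push_cast
  ring

theorem roots (μ : ℝ) (hμ : μ ≠ 0) :
    ∃ a b : ℝ, a + b = -μ ∧ a * b = -1 ∧ |a| < 1 ∧ 1 < |b| := by
  set s := Real.sqrt (μ ^ 2 + 4) with hs
  have hs2 : s ^ 2 = μ ^ 2 + 4 := Real.sq_sqrt (by positivity)
  have hs0 : 0 ≤ s := Real.sqrt_nonneg _
  have hs3 : 2 ≤ s := by nlinarith
  rcases lt_or_gt_of_ne hμ with h | h
  · refine ⟨(-μ - s) / 2, (-μ + s) / 2, by ring, by nlinarith, abs_lt.2 ⟨?_, ?_⟩, ?_⟩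
    · nlinarith
    · nlinarith
    · rw [abs_of_pos] <;> nlinarith
  · refine ⟨(-μ + s) / 2, (-μ - s) / 2, by ring, by nlinarith, abs_lt.2 ⟨?_, ?_⟩, ?_⟩
    · nlinarith
    · nlinarith
    · rw [abs_of_neg] <;> nlinarith

theorem S_big (h : TSys r U d G γ) (hβ : β ≠ 0) (hω : d.IsKMS β ω)
    (hS : TRel U (ContinuousLinearMap.id ℂ Hs) β S) {w : Hs} {δ : ℝ} (hδ : 1 < |δ|)
    (hw : S w = -(Complex.I * δ) • w) : w = 0 := by
  by_contra h0
  have hp : 0 < ‖w‖ := norm_pos_iff.2 h0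
  have hn : ‖(‖w‖⁻¹ : ℂ) • w‖ = 1 := by
    rw [norm_smul, norm_inv, Complex.norm_real, norm_norm, inv_mul_cancel₀ hp.ne']
  have h1 := rho_gam h.trivial hβ (BKMS.of_kms hω) hS hn
  have h2 := (state_norm_le hω.1 (gam r ((‖w‖⁻¹ : ℂ) • w))).trans (gam_norm r hn)
  rw [h1, hω.1.2.2, one_mul, Complex.norm_real, Real.norm_eq_abs, map_smul, hw, smul_comm,
    inner_smul_right, inner_self_eq_norm_sq_to_K, hn] at h2
  simp at h2
  linarith

theorem eig_odd (h : TSys r U d G γ) (hβ : β ≠ 0) (hω : d.IsKMS β ω) (hT : TRel U G β T)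
    (hS : TRel U (ContinuousLinearMap.id ℂ Hs) β S) {v : Hs} {μ : ℝ} (hμ : μ ≠ 0)
    (hv : (Complex.I • (T - S)) v = (μ : ℂ) • v) :
    G v = -v ∧ ∃ lam : ℝ, ∀ t : ℝ, U t v = Complex.exp (Complex.I * t * lam) • v := by
  have hTS : T v = S v - (Complex.I * μ) • v := by
    have h2 := congrArg (fun y => -Complex.I • y) hv
    simp only [ContinuousLinearMap.smul_apply, ContinuousLinearMap.sub_apply, smul_smul] at h2
    rw [neg_mul, Complex.I_mul_I, neg_neg, one_smul, sub_eq_iff_eq_add] at h2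
    rw [h2]
    module
  have hodd : G v = -v := by
    have h3 := ST_even h hβ hT hS v
    have hTG : T (G v) = G (T v) := T_comm h hβ hT G h.comm (fun _ => rfl) v
    have hSG : S (G v) = G (S v) := T_comm h.trivial hβ hS G h.comm (fun _ => rfl) v
    rw [map_add, map_add, hTG, hSG, hTS, map_sub, map_smul] at h3
    have h4 : (Complex.I * μ) • (v + G v) = 0 := by
      have h5 : (Complex.I * μ) • (v + G v) = (S v + G (S v)) -
        (S v - (Complex.I * μ) • v + (G (S v) - (Complex.I * μ) • G v)) := by module
      rw [h5, h3, sub_self]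
    rcases smul_eq_zero.1 h4 with h6 | h6
    · exact absurd h6 (mul_ne_zero Complex.I_ne_zero (by exact_mod_cast hμ))
    · exact (neg_eq_of_add_eq_zero_right h6).symm
  refine ⟨hodd, ?_⟩
  obtain ⟨a, b, hab, hab1, ha, hb⟩ := roots μ hμ
  have hST := ST_odd h hβ hT hS hodd
  rw [hTS, map_sub, map_smul] at hST
  have hab' : (a : ℂ) + b = -μ := by exact_mod_cast hab
  have hab1' : (a : ℂ) * b = -1 := by exact_mod_cast hab1
  have hμ' : (μ : ℂ) = -(a + b) := by rw [hab', neg_neg]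
  have hw : S v + (Complex.I * a) • v = 0 := by
    refine S_big h hβ hω hS hb ?_
    have e : S (S v) = (Complex.I * μ) • S v - v := by
      rw [sub_eq_iff_eq_add] at hST
      rw [hST]; module
    rw [map_add, map_smul, e, hμ', smul_add, smul_smul]
    have e2 : -(Complex.I * b) * (Complex.I * a) = (-1 : ℂ) := by
      have := Complex.I_mul_I
      linear_combination (-(a : ℂ) * b) * this + hab1'
    rw [e2]
    module
  refine S_eig h hβ hS ha (w := v) ?_
  rw [eq_neg_of_add_eq_zero_left hw, neg_smul]

theorem ker_odd (h : TSys r U d G γ) (hβ : β ≠ 0) (hT : TRel U G β T)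
    (hS : TRel U (ContinuousLinearMap.id ℂ Hs) β S) {u : Hs} (hu : G u = -u)
    (hX : (Complex.I • (T - S)) u = 0) : u = 0 := by
  have hTS : T u = S u := by
    simp only [ContinuousLinearMap.smul_apply, ContinuousLinearMap.sub_apply] at hX
    exact sub_eq_zero.1 ((smul_eq_zero.1 hX).resolve_left Complex.I_ne_zero)
  have hSS := ST_odd h hβ hT hS hu
  rw [hTS] at hSS
  have h1 : S u + -Complex.I • u = 0 := by
    refine S_one h hS ?_
    rw [map_add, map_smul, hSS, smul_add, smul_smul]
    have : (-Complex.I * -Complex.I : ℂ) = -1 := by rw [neg_mul_neg, Complex.I_mul_I]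
    rw [this]
    module
  exact S_neg_one h hS (by rw [eq_neg_of_add_eq_zero_left h1, neg_smul, neg_neg])

theorem a_imp_b (h : TSys r U d G γ) (hβ : β ≠ 0) (hω : d.IsKMS β ω)
    (hodd : ¬ FiniteDimensional ℂ (LinearMap.ker ((G + 1 : Hs →L[ℂ] Hs) : Hs →ₗ[ℂ] Hs)))
    (hρ : TwistedKMSDom d γ β ω ρ) (h0 : ρ ≠ 0) :
    ∃ (e : ℕ → Hs) (lam : ℕ → ℝ), EigenBasisOdd G U e lam ∧ 0 < ∏' k, qq β (lam k) := by
  have hB := BKMS.of_dom hω.1 hρ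
  have h1 : ρ 1 ≠ 0 := fun hz => h0 (zero_of_one h hβ hB hz)
  obtain ⟨T, hT⟩ := exists_T h hβ hB h1
  obtain ⟨S, hS⟩ := exists_T h.trivial hβ (BKMS.of_kms hω) (by rw [hω.1.2.2]; exact one_ne_zero)
  have hX : ∀ x y, ⟪(Complex.I • (T - S)) x, y⟫_ℂ = ⟪x, (Complex.I • (T - S)) y⟫_ℂ := by
    intro x y
    simp only [ContinuousLinearMap.smul_apply, ContinuousLinearMap.sub_apply, inner_smul_left,
      inner_smul_right, inner_sub_left, inner_sub_right, hT.anti, hS.anti, Complex.conj_I]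
    ring
  obtain ⟨ι, hcount, v, μ, hv, heig, htot⟩ := eig_family (Complex.I • (T - S)) hX _
    (fun n f hf => hs_bound h hβ hω hρ h1 hT hS n f hf)
  have hprop := fun i => eig_odd h hβ hω hT hS (heig i).1 (heig i).2
  choose hGv lam hlam using hprop
  have hsp : ∀ φ : Hs, G φ = -φ →
      φ ∈ closure ((Submodule.span ℂ (Set.range v) : Submodule ℂ Hs) : Set Hs) := by
    intro φ hφ
    set W := (Submodule.span ℂ (Set.range v)).topologicalClosure with hW
    have hWc : IsClosed (W : Set Hs) := Submodule.isClosed_topologicalClosure _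
    haveI : CompleteSpace W := hWc.completeSpace_coe
    set q := φ - W.starProjection φ with hq
    have hqW : q ∈ Wᗮ := W.sub_starProjection_mem_orthogonal φ
    have hvq : ∀ i, ⟪v i, q⟫_ℂ = 0 := fun i =>
      (Submodule.mem_orthogonal _ _).1 hqW _
        (Submodule.le_topologicalClosure _ (Submodule.subset_span ⟨i, rfl⟩))
    have hqe : q - G q = 0 := by
      refine htot _ (fun i => ?_) (fun y hy => ?_)
      · rw [inner_sub_right, ← h.sa, hGv, inner_neg_left, hvq]; simp
      · have hy2 : y - G y = 0 := by
          refine ker_odd h hβ hT hS (by rw [map_sub, h.sq]; abel) ?_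
          have hTG : T (G y) = G (T y) := T_comm h hβ hT G h.comm (fun _ => rfl) y
          have hSG : S (G y) = G (S y) := T_comm h.trivial hβ hS G h.comm (fun _ => rfl) y
          simp only [ContinuousLinearMap.smul_apply, ContinuousLinearMap.sub_apply] at hy ⊢
          rw [map_sub, map_sub, hTG, hSG]
          have h5 : Complex.I • (T y - G (T y) - (S y - G (S y))) =
              Complex.I • (T y - S y) - G (Complex.I • (T y - S y)) := by
            rw [map_smul, map_sub]; module
          rw [h5, hy, map_zero, sub_zero]
        rw [inner_sub_right, ← h.sa, ← inner_sub_left, hy2, inner_zero_left]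
    have hqφ : ⟪q, φ⟫_ℂ = 0 := by
      have h6 : ⟪q, φ⟫_ℂ = -⟪q, φ⟫_ℂ := by
        conv_lhs => rw [sub_eq_zero.1 hqe, h.sa, hφ, inner_neg_right]
      exact self_eq_neg.1 h6
    have hqp : ⟪q, W.starProjection φ⟫_ℂ = 0 :=
      (Submodule.mem_orthogonal' _ _).1 hqW _ (W.starProjection_apply_mem φ)
    have hq0 : q = 0 := by
      rw [← inner_self_eq_zero (𝕜 := ℂ)]
      conv_lhs => rw [hq, inner_sub_right, ← hq]
      rw [hqφ, hqp, sub_zero]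
    have : φ ∈ W := by
      rw [sub_eq_zero.1 hq0]
      exact W.starProjection_apply_mem φ
    exact this
  have hinf : Infinite ι := by
    by_contra hfin
    rw [not_infinite_iff_finite] at hfin
    apply hodd
    haveI : FiniteDimensional ℂ (Submodule.span ℂ (Set.range v)) :=
      FiniteDimensional.span_of_finite ℂ (Set.finite_range v)
    refine Submodule.finiteDimensional_of_le (S₂ := Submodule.span ℂ (Set.range v)) ?_
    intro φ hφ
    have hφ' : G φ + φ = 0 := hφ
    have h7 := hsp φ (eq_neg_of_add_eq_zero_left hφ')
    rwa [(Submodule.closed_of_finiteDimensional _).closure_eq] at h7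
  obtain ⟨hden⟩ := nonempty_denumerable ι
  set E : ℕ ≃ ι := (Denumerable.eqv ι).symm with hE
  have hbasis : EigenBasisOdd G U (v ∘ E) (lam ∘ E) := by
    refine ⟨hv.comp _ E.injective, fun k => hGv _, fun φ hφ => ?_, fun t k => hlam _ t⟩
    rw [E.surjective.range_comp]
    exact hsp φ hφ
  refine ⟨_, _, hbasis, ?_⟩
  exact lt_of_lt_of_le (norm_pos_iff.2 h1) (twisted_one_le h hβ hbasis hB hT)

end

end TK

/-- For the graded CAR system `(CAR(H), α^{H₀}, γ_G)` with
`dim H_odd = ∞`, `ker H₀ = {0}` and the unique `(α^{H₀}, β)`-KMS state `ω_β` (`β ≠ 0`),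
the following are equivalent:
(a) there is a nonzero hermitian `γ_G`-twisted `(α^{H₀}, β)`-KMS functional dominated
    by `ω_β`;
(b) `H_odd` has an orthonormal eigenbasis for `H₀` with eigenvalues `lam` and
    `c_{βH₀} = ∏ₖ (1 − e^{−|β lam k|})/(1 + e^{−|β lam k|}) > 0`;
(c) `H_odd` has an orthonormal eigenbasis for `H₀` with eigenvalues `lam` and
    `Tr(e^{−|β H_odd|}) = Σₖ e^{−|β lam k|} < ∞`.
In this case `μ_{T_β^G}` is bounded — there is a bounded operator `T = T_β^G` with
`T(1 + Ge^{βH₀}) = i(1 − Ge^{βH₀})` on analytic vectors — and the set of hermitian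
`γ_G`-twisted KMS functionals dominated by `ω_β` is exactly
`{c · μ_{T_β^G} : c ∈ [−c_{βH₀}, c_{βH₀}]}`. -/
theorem car_twisted_kms_functionals_classification
    {Hs A : Type*} [NormedAddCommGroup Hs] [InnerProductSpace ℂ Hs] [CompleteSpace Hs]
    [CStarAlgebra A] (r : CARrep Hs A)
    (U : ℝ → Hs ≃ₗᵢ[ℂ] Hs)
    (hU0 : ∀ ξ, U 0 ξ = ξ) (hUadd : ∀ s t ξ, U (s + t) ξ = U s (U t ξ))
    (hUcont : ∀ ξ, Continuous fun t : ℝ => U t ξ)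
    (G : Hs →L[ℂ] Hs) (hG_sa : star G = G) (hG_un : ∀ φ, G (G φ) = φ)
    (hUG : ∀ (t : ℝ) (ξ), U t (G ξ) = G (U t ξ))
    (hodd_inf : ¬ FiniteDimensional ℂ (LinearMap.ker ((G + 1 : Hs →L[ℂ] Hs) : Hs →ₗ[ℂ] Hs)))
    (hker : ∀ φ : Hs, (∀ t : ℝ, U t φ = φ) → φ = 0)
    (d : Dynamics A) (hd : ∀ (t : ℝ) (φ), d.α t (r.c φ) = r.c (U t φ))
    (γ : A ≃⋆ₐ[ℂ] A) (hγ : ∀ φ, γ (r.c φ) = r.c (G φ))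
    (β : ℝ) (hβ : β ≠ 0)
    (ω : A → ℂ) (hω : d.IsKMS β ω) (hω_unique : ∀ ω' : A → ℂ, d.IsKMS β ω' → ω' = ω) :
    ((∃ ρ : A → ℂ, ρ ≠ 0 ∧ TwistedKMSDom d γ β ω ρ) ↔
      ∃ (e : ℕ → Hs) (lam : ℕ → ℝ), EigenBasisOdd G U e lam ∧
        0 < ∏' k, (1 - Real.exp (-|β * lam k|)) / (1 + Real.exp (-|β * lam k|))) ∧
    ((∃ (e : ℕ → Hs) (lam : ℕ → ℝ), EigenBasisOdd G U e lam ∧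
        0 < ∏' k, (1 - Real.exp (-|β * lam k|)) / (1 + Real.exp (-|β * lam k|))) ↔
      ∃ (e : ℕ → Hs) (lam : ℕ → ℝ), EigenBasisOdd G U e lam ∧
        Summable fun k => Real.exp (-|β * lam k|)) ∧
    ∀ (e : ℕ → Hs) (lam : ℕ → ℝ), EigenBasisOdd G U e lam →
      (Summable fun k => Real.exp (-|β * lam k|)) →
      ∃ T : Hs →L[ℂ] Hs,
        (∀ (φ : Hs) (f : ℂ → Hs), Differentiable ℂ f → (∀ t : ℝ, f (t : ℂ) = U t φ) →
          T (φ + G (f (-(Complex.I) * β))) =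
            Complex.I • (φ - G (f (-(Complex.I) * β)))) ∧
        {ρ : A → ℂ | TwistedKMSDom d γ β ω ρ} =
          {ρ : A → ℂ | IsLinearMap ℂ ρ ∧ Continuous ρ ∧
            ∃ c : ℝ,
              |c| ≤ ∏' k, (1 - Real.exp (-|β * lam k|)) / (1 + Real.exp (-|β * lam k|)) ∧
              ∀ L : List Hs, ρ (r.fieldProd L) = c * qfVal T L} := by
  have h : TK.TSys r U d G γ :=
    { u := ⟨hU0, hUadd, hUcont⟩
      sa := fun x y => by
        have h1 : ContinuousLinearMap.adjoint G = G := hG_sa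
        have h2 := ContinuousLinearMap.adjoint_inner_left G y x
        rwa [h1] at h2
      sq := hG_un
      comm := hUG
      ker := hker
      dyn := hd
      grad := hγ }
  refine ⟨⟨?_, ?_⟩, ⟨?_, ?_⟩, ?_⟩
  · rintro ⟨ρ, h0, hρ⟩
    exact TK.a_imp_b h hβ hω hodd_inf hρ h0
  · rintro ⟨e, lam, hE, hp⟩
    obtain ⟨ρ, hρ, h1⟩ := TK.exists_twisted h hβ hE hω
    refine ⟨ρ, fun h0 => ?_, hρ⟩
    rw [h0] at h1
    have h2 : (∏' k, TK.qq β (lam k)) = 0 := by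
      have h3 : ((∏' k, TK.qq β (lam k) : ℝ) : ℂ) = 0 := h1.symm
      exact_mod_cast h3
    exact (ne_of_gt hp) h2
  · rintro ⟨e, lam, hE, hp⟩
    exact ⟨e, lam, hE, TK.summable_of_qq_pos hp⟩
  · rintro ⟨e, lam, hE, hs⟩
    exact ⟨e, lam, hE, TK.qq_pos_of_summable (fun k => TK.bl_ne h hβ hE k) hs⟩
  · intro e lam hE hs
    exact TK.third_part h hβ hE hω hs

end
end
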